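/- arXiv:2209.08269 — 5 statements merged into one kernel-verified Lean document; each statement's English description precedes it below -/
import Mathlib

section
/- Every AT-free outerplanar graph is B₀; that is, for every finite simple graph G that is outerplanar and AT-free, there is an assignment of nonempty axis-parallel segments in ℝ² to the vertices of G such that two distinct vertices are adjacent in G if and only if their segments intersect. -/
/-!
The graph is taken apart along its inner faces, and a representation is assembled from the inside
out, with the part at which the next pieces are glued kept on the outer boundary.

A part `A` is attached to the rest of its component either at one vertex `v` or at a boundary edge
`uv`. In the first case one wants a representation in which the segment of `v` sticks out to the
left beyond all others (`SRep`); in the second one wants the common point of the segments of `u`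
and `v` to be an upper left corner of the picture (`Weak`, `Tri`, together `ERep`). All pictures are
drawn with boxes with integer corners, so that the verifications are linear arithmetic.

Asteroidal triples enter through `Good`: no two nonadjacent vertices of `A` reach the roots of `A`
off each other's closed neighbourhoods. This property passes to smaller parts with new roots
(`Good.trans`), because the old roots are reached from the new ones through the removed part. It
forces the structure at the roots to be that of a path: at a boundary edge the next inner face is a
triangle or a quadrangle, and everything else is attached at a single one of its other edges, or
there is no such face and one of `u`, `v` is pendant (`edge_step`); at a single root `v` at most two neighbours have neighbours at distance two from `v`
(`deep_three`), and if there are two of them, the inner face between them has at most five vertices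
(`root_core`). What remains at a single root is a forest of neighbours of `v`, which has room near
the free end of the segment of `v` (`SRep.add_forest`). Induction on `A` gives `claims`.

To start, one needs in each component a vertex `y` that can serve as a root, so that no two vertices
`a`, `b` reach `y` off each other. It is found by maximising `weight`, which rewards large
components of the graph without the closed neighbourhood of `y`. If `a`, `b` reach `y` off each
other, then they lie in different such components by AT-freeness, and the one of the two that lies
in the smaller component has larger weight than `y` (`weight_lt`), since for it the component
of the other one grows by `y` and no component but its own is lost.
-/

/-- A nonempty axis-parallel closed segment in `ℝ²`: the convex hull of two points
agreeing in the x-coordinate or agreeing in the y-coordinate (a point is allowed). -/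
def IsAxisParallelSegment (s : Set (ℝ × ℝ)) : Prop :=
  ∃ p q : ℝ × ℝ, (p.1 = q.1 ∨ p.2 = q.2) ∧ s = segment ℝ p q

/-- A graph is B₀ if its vertices can be assigned axis-parallel segments in the plane
such that two distinct vertices are adjacent iff their segments intersect. -/
def IsB0 {V : Type*} (G : SimpleGraph V) : Prop :=
  ∃ s : V → Set (ℝ × ℝ),
    (∀ v, IsAxisParallelSegment (s v)) ∧
    ∀ u v : V, u ≠ v → (G.Adj u v ↔ (s u ∩ s v).Nonempty)

/-- `H` is a minor of `G`: there are disjoint nonempty connected branch sets in `G`,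
one for each vertex of `H`, with an edge of `G` between the branch sets of any two
adjacent vertices of `H`. -/
def HasMinor {V W : Type*} (G : SimpleGraph V) (H : SimpleGraph W) : Prop :=
  ∃ B : W → Set V,
    (∀ w, (B w).Nonempty) ∧
    (∀ w, (G.induce (B w)).Connected) ∧
    (∀ w w', w ≠ w' → Disjoint (B w) (B w')) ∧
    (∀ w w', H.Adj w w' → ∃ x ∈ B w, ∃ y ∈ B w', G.Adj x y)

/-- A graph is outerplanar iff it has neither `K₄` nor `K_{2,3}` as a minor
(Chartrand–Harary characterization, taken as the definition). -/
def IsOuterplanar {V : Type*} (G : SimpleGraph V) : Prop :=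
  ¬ HasMinor G (⊤ : SimpleGraph (Fin 4)) ∧
  ¬ HasMinor G (completeBipartiteGraph (Fin 2) (Fin 3))

/-- `{a, b, c}` is an asteroidal triple of `G`: three pairwise nonadjacent vertices such
that every two of them are joined by a path avoiding the closed neighborhood of the third. -/
def IsAsteroidalTriple {V : Type*} (G : SimpleGraph V) (a b c : V) : Prop :=
  a ≠ b ∧ b ≠ c ∧ a ≠ c ∧ ¬ G.Adj a b ∧ ¬ G.Adj b c ∧ ¬ G.Adj a c ∧
  (∃ p : G.Walk a b, ∀ x ∈ p.support, x ∉ insert c (G.neighborSet c)) ∧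
  (∃ p : G.Walk b c, ∀ x ∈ p.support, x ∉ insert a (G.neighborSet a)) ∧
  (∃ p : G.Walk a c, ∀ x ∈ p.support, x ∉ insert b (G.neighborSet b))

/-- A graph is AT-free if it contains no asteroidal triple. -/
def ATFree {V : Type*} (G : SimpleGraph V) : Prop :=
  ∀ a b c : V, ¬ IsAsteroidalTriple G a b c

namespace OuterB0

/-! ### Integer boxes and extendable representations -/

/-- Integer coordinates `[x1, x2] × [y1, y2]` of an axis-parallel box. -/
@[ext] structure Box where
  x1 : ℤ
  x2 : ℤ
  y1 : ℤ
  y2 : ℤ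

/-- The box is nonempty and degenerate in at least one direction, i.e. it is a segment. -/
def Box.Valid (b : Box) : Prop := b.x1 ≤ b.x2 ∧ b.y1 ≤ b.y2 ∧ (b.x1 = b.x2 ∨ b.y1 = b.y2)

/-- Two boxes have a common point. -/
def Box.Meets (b c : Box) : Prop := b.x1 ≤ c.x2 ∧ c.x1 ≤ b.x2 ∧ b.y1 ≤ c.y2 ∧ c.y1 ≤ b.y2

variable {V : Type*} {G : SimpleGraph V} {A : Finset V} {u v w x y a b q : V}

/-- `f` represents the subgraph of `G` induced by `A`. -/
def Rep (G : SimpleGraph V) (A : Finset V) (f : V → Box) : Prop :=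
  (∀ a ∈ A, (f a).Valid) ∧ ∀ a ∈ A, ∀ b ∈ A, a ≠ b → (G.Adj a b ↔ (f a).Meets (f b))

theorem Box.Meets.comm {b c : Box} : b.Meets c ↔ c.Meets b := by
  unfold Box.Meets; omega

theorem Rep.add [DecidableEq V] {f : V → Box} (h : Rep G A f) {z : V} (hz : z ∉ A) (β : Box)
    (hβ : β.Valid) (hm : ∀ a ∈ A, G.Adj z a ↔ β.Meets (f a)) :
    ∃ f', Rep G (insert z A) f' ∧ f' z = β ∧ ∀ a ∈ A, f' a = f a := by
  have hne : ∀ a ∈ A, a ≠ z := fun a ha h => hz (h ▸ ha)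
  refine ⟨Function.update f z β, ⟨?_, ?_⟩, by simp, fun a ha => by simp [hne a ha]⟩
  · intro a ha
    rcases Finset.mem_insert.1 ha with rfl | ha
    · simpa using hβ
    · simpa [hne a ha] using h.1 a ha
  · intro a ha b hb hab
    rcases Finset.mem_insert.1 ha with rfl | ha' <;> rcases Finset.mem_insert.1 hb with rfl | hb'
    · exact absurd rfl hab
    · simpa [hne b hb'] using hm b hb'
    · simpa [hne a ha', G.adj_comm a, Box.Meets.comm (b := f a)] using hm a ha'
    · simpa [hne a ha', hne b hb'] using h.2 a ha' b hb' hab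

theorem Rep.modify [DecidableEq V] {f : V → Box} (h : Rep G A f) {z : V} (β : Box)
    (hβ : β.Valid) (hm : ∀ a ∈ A, a ≠ z → (β.Meets (f a) ↔ (f z).Meets (f a))) :
    ∃ f', Rep G A f' ∧ f' z = β ∧ ∀ a, a ≠ z → f' a = f a := by
  refine ⟨Function.update f z β, ⟨?_, ?_⟩, by simp, fun a ha => by simp [ha]⟩
  · intro a ha
    by_cases haz : a = z
    · subst haz; simpa using hβ
    · simpa [haz] using h.1 a ha
  · intro a ha b hb hab
    have h2 := h.2 a ha b hb hab
    by_cases haz : a = z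
    · subst haz
      simpa [hab.symm, hm b hb hab.symm] using h2
    · by_cases hbz : b = z
      · subst hbz
        simpa [haz, Box.Meets.comm, hm a ha haz] using h2
      · simpa [haz, hbz] using h2

/-- The segment of `v` is horizontal, and its left end lies strictly to the left of all other
segments and not below any of them. -/
def SRep (G : SimpleGraph V) (A : Finset V) (v : V) : Prop :=
  ∃ f, Rep G A f ∧ (f v).y1 = (f v).y2 ∧
    ∀ a ∈ A, a ≠ v → (f v).x1 < (f a).x1 ∧ (f a).y2 ≤ (f v).y2

/-- The segment of `u` is horizontal, that of `v` is vertical, the left end of the former is the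
upper end of the latter, and everything lies weakly to the right of and below this point. -/
def Weak (G : SimpleGraph V) (A : Finset V) (u v : V) : Prop :=
  ∃ f, Rep G A f ∧ (f u).y1 = (f u).y2 ∧ (f v).x1 = (f v).x2 ∧ (f v).x1 = (f u).x1 ∧
    (f v).y2 = (f u).y2 ∧ ∀ a ∈ A, (f u).x1 ≤ (f a).x1 ∧ (f a).y2 ≤ (f u).y2

/-- The segment of `u` is horizontal, everything lies weakly to the right of and below its left
end, and this point belongs to `u` and `w` only. -/
def Tri (G : SimpleGraph V) (A : Finset V) (u w : V) : Prop :=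
  ∃ f, Rep G A f ∧ (f u).y1 = (f u).y2 ∧
    ∀ a ∈ A, (f u).x1 ≤ (f a).x1 ∧ (f a).y2 ≤ (f u).y2 ∧
      (a ≠ u → (((f a).x1 = (f u).x1 ∧ (f a).y2 = (f u).y2) ↔ a = w))

/-- What is kept for a boundary edge `uv`: one representation that can be continued by a quadrangle
on `uv`, and, for each of its two vertices, one that can be continued by a triangle on `uv`
followed by further faces at that vertex. -/
def ERep (G : SimpleGraph V) (A : Finset V) (u v : V) : Prop :=
  Weak G A u v ∧ Tri G A u v ∧ Tri G A v u

/-- Reflection in the antidiagonal. -/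
def Box.flip (b : Box) : Box := ⟨-b.y2, -b.y1, -b.x2, -b.x1⟩

theorem Rep.flip {f : V → Box} (h : Rep G A f) : Rep G A (fun a => (f a).flip) := by
  refine ⟨fun a ha => ?_, fun a ha b hb hab => (h.2 a ha b hb hab).trans ?_⟩
  · have := h.1 a ha
    simp only [Box.Valid, Box.flip] at *; omega
  · simp only [Box.Meets, Box.flip]; omega

theorem Weak.swap (h : Weak G A u v) : Weak G A v u := by
  obtain ⟨f, hf, h1, h2, h3, h4, h5⟩ := h
  refine ⟨_, hf.flip, ?_, ?_, ?_, ?_, fun a ha => ?_⟩ <;> simp only [Box.flip] <;>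
    try have := h5 a ha
  all_goals omega

theorem ERep.swap (h : ERep G A u v) : ERep G A v u := ⟨h.1.swap, h.2.2, h.2.1⟩

/-- `Tri` from a representation in which the distinguished segment is vertical. -/
theorem tri_of_vertical {f : V → Box} (hf : Rep G A f) (h1 : (f u).x1 = (f u).x2)
    (h2 : ∀ a ∈ A, (f u).x1 ≤ (f a).x1 ∧ (f a).y2 ≤ (f u).y2 ∧
      (a ≠ u → (((f a).x1 = (f u).x1 ∧ (f a).y2 = (f u).y2) ↔ a = w))) : Tri G A u w := by
  refine ⟨_, hf.flip, ?_, fun a ha => ?_⟩ <;> simp only [Box.flip]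
  · omega
  · have h3 := h2 a ha
    refine ⟨by omega, by omega, fun hne => ?_⟩
    rw [← h3.2.2 hne]; omega

variable [DecidableEq V]

/-- Moves the left end of a horizontal segment `u` to `c`, if nothing else is in the way. -/
theorem Rep.extendLeft {f : V → Box} (hf : Rep G A f) (hu : u ∈ A) (h1 : (f u).y1 = (f u).y2)
    (h2 : ∀ a ∈ A, (f u).x1 ≤ (f a).x1) (c : ℤ) (hc : c ≤ (f u).x1) :
    ∃ f', Rep G A f' ∧ f' u = ⟨c, (f u).x2, (f u).y1, (f u).y2⟩ ∧ ∀ a, a ≠ u → f' a = f a := by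
  have hv := hf.1 u hu
  refine hf.modify _ ?_ fun a ha hne => ?_
  · simp only [Box.Valid] at *; omega
  · have hva := hf.1 a ha
    have := h2 a ha
    simp only [Box.Valid, Box.Meets] at *; omega

theorem SRep.of_weak (h : Weak G A u v) (hu : u ∈ A) : SRep G A u := by
  obtain ⟨f, hf, h1, h2, h3, h4, h5⟩ := h
  obtain ⟨f', hf', e1, e2⟩ := hf.extendLeft hu h1 (fun a ha => (h5 a ha).1) ((f u).x1 - 1) (by omega)
  refine ⟨f', hf', by simp [e1, h1], fun a ha hne => ?_⟩
  have := h5 a ha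
  rw [e2 a hne, e1]; constructor <;> simp only <;> omega

theorem ERep.single (h : ERep G A u v) (hu : u ∈ A) : SRep G A u := .of_weak h.1 hu

/-- A pendant vertex `v` at the root `u`. -/
theorem SRep.pendant (h : SRep G A u) (hu : u ∈ A) (hv : v ∉ A)
    (hN : ∀ a ∈ A, G.Adj v a ↔ a = u) : ERep G (insert v A) u v := by
  obtain ⟨f, hf, h1, h2⟩ := h
  obtain ⟨f', hf', e1, e2⟩ := hf.extendLeft hu h1
    (fun a ha => by by_cases h : a = u; exacts [by rw [h], (h2 a ha h).1.le]) ((f u).x1 - 1) (by omega)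
  have hvu := hf'.1 u hu
  obtain ⟨g, hg, e3, e4⟩ := hf'.add hv ⟨(f u).x1 - 1, (f u).x1 - 1, (f u).y1, (f u).y1⟩
    (by simp [Box.Valid]) (fun a ha => by
      rw [hN a ha]
      by_cases hau : a = u
      · subst hau
        simp only [e1, Box.Valid, Box.Meets, true_iff] at *; omega
      · have := h2 a ha hau
        rw [e2 a hau]; simp only [hau, Box.Meets, false_iff]; omega)
  have e5 := e4 u hu
  have hne : v ≠ u := fun h => hv (h ▸ hu)
  have key : ∀ a ∈ insert v A, (f u).x1 - 1 ≤ (g a).x1 ∧ (g a).y2 ≤ (f u).y2 ∧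
      (((g a).x1 = (f u).x1 - 1 ∧ (g a).y2 = (f u).y2) ↔ a = u ∨ a = v) := by
    intro a ha
    rcases Finset.mem_insert.1 ha with rfl | ha
    · rw [e3]; simp [h1]
    · have hav : a ≠ v := fun h => hv (h ▸ ha)
      by_cases hau : a = u
      · subst hau; rw [e5, e1]; simp
      · have := h2 a ha hau
        rw [e4 a ha, e2 a hau]; simp only [hau, hav, or_self, iff_false]; omega
  refine ⟨⟨g, hg, ?_, ?_, ?_, ?_, fun a ha => ?_⟩, ⟨g, hg, ?_, fun a ha => ?_⟩,
    ⟨g, hg, ?_, fun a ha => ?_⟩⟩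
  all_goals try have := key a ha
  all_goals simp only [e3, e5, e1]
  all_goals try omega
  · exact ⟨this.1, this.2.1, fun h => by rw [this.2.2]; tauto⟩
  · refine ⟨this.1, by omega, fun h => by rw [h1, this.2.2]; tauto⟩

/-- A triangle `u w v` on the boundary edge `uw`. -/
theorem Tri.triangle (h : Tri G A u w) (hu : u ∈ A) (huw : u ≠ w) (hv : v ∉ A)
    (hN : ∀ a ∈ A, G.Adj v a ↔ a = u ∨ a = w) : ERep G (insert v A) u v := by
  obtain ⟨f, hf, h1, h2⟩ := h
  have hvu := hf.1 u hu
  have hNf : ∀ a ∈ A, G.Adj v a ↔ ((f a).x1 = (f u).x1 ∧ (f a).y2 = (f u).y2) := by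
    intro a ha
    rw [hN a ha]
    by_cases hau : a = u
    · subst hau; simp
    · rw [(h2 a ha).2.2 hau]; simp [hau]
  have hne : ∀ a ∈ A, a ≠ v := fun a ha h => hv (h ▸ ha)
  constructor
  · obtain ⟨g, hg, e3, e4⟩ := hf.add hv ⟨(f u).x1, (f u).x1, (f u).y2, (f u).y2⟩
      (by simp [Box.Valid]) (fun a ha => by
        have := h2 a ha
        have hva := hf.1 a ha
        rw [hNf a ha]; simp only [Box.Valid, Box.Meets] at *; omega)
    refine ⟨g, hg, ?_, ?_, ?_, ?_, fun a ha => ?_⟩ <;> simp only [e3, e4 u hu]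
    · exact h1
    · rcases Finset.mem_insert.1 ha with rfl | ha
      · simp [e3]
      · rw [e4 a ha]; exact ⟨(h2 a ha).1, (h2 a ha).2.1⟩
  · obtain ⟨f', hf', e1, e2⟩ := hf.extendLeft hu h1 (fun a ha => (h2 a ha).1)
      ((f u).x1 - 1) (by omega)
    obtain ⟨g, hg, e3, e4⟩ := hf'.add hv ⟨(f u).x1 - 1, (f u).x1, (f u).y2, (f u).y2⟩
      (by simp [Box.Valid]) (fun a ha => by
        have := h2 a ha
        have hva := hf.1 a ha
        rw [hNf a ha]
        by_cases hau : a = u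
        · subst hau; rw [e1]; simp only [Box.Valid, Box.Meets, and_self, true_iff] at hvu ⊢; omega
        · rw [e2 a hau]; simp only [Box.Valid, Box.Meets] at *; omega)
    have e5 := e4 u hu
    have key : ∀ a ∈ insert v A, (f u).x1 - 1 ≤ (g a).x1 ∧ (g a).y2 ≤ (f u).y2 ∧
        (((g a).x1 = (f u).x1 - 1 ∧ (g a).y2 = (f u).y2) ↔ a = u ∨ a = v) := by
      intro a ha
      rcases Finset.mem_insert.1 ha with rfl | ha
      · rw [e3]; simp
      · by_cases hau : a = u
        · subst hau; rw [e5, e1]; simp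
        · have := h2 a ha
          rw [e4 a ha, e2 a hau]; simp only [hau, hne a ha, or_self, iff_false]; omega
    have huv := hne u hu
    refine ⟨⟨g, hg, ?_, fun a ha => ?_⟩, ⟨g, hg, ?_, fun a ha => ?_⟩⟩
    all_goals try have := key a ha
    all_goals simp only [e3, e5, e1]
    all_goals try omega
    · exact ⟨this.1, this.2.1, fun h => by rw [this.2.2]; tauto⟩
    · exact ⟨this.1, this.2.1, fun h => by rw [this.2.2]; tauto⟩

/-! ### Faces inserted into a representation -/

theorem Rep.extendUp {f : V → Box} (hf : Rep G A f) (hu : u ∈ A) (h1 : (f u).x1 = (f u).x2)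
    (h2 : ∀ a ∈ A, (f a).y2 ≤ (f u).y2) (c : ℤ) (hc : (f u).y2 ≤ c) :
    ∃ f', Rep G A f' ∧ f' u = ⟨(f u).x1, (f u).x2, (f u).y1, c⟩ ∧ ∀ a, a ≠ u → f' a = f a := by
  have hv := hf.1 u hu
  refine hf.modify _ ?_ fun a ha hne => ?_
  · simp only [Box.Valid] at *; omega
  · have hva := hf.1 a ha
    have := h2 a ha
    simp only [Box.Valid, Box.Meets] at *; omega

/-- A quadrangle `u v y x` on the boundary edge `uv`; one half of the conclusion. -/
theorem Weak.square_aux (h : Weak G A u v) (hu : u ∈ A) (hv : v ∈ A) (huv : u ≠ v) (hx : x ∉ A)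
    (hy : y ∉ A) (hxy : G.Adj x y) (hNx : ∀ a ∈ A, G.Adj x a ↔ a = u)
    (hNy : ∀ a ∈ A, G.Adj y a ↔ a = v) :
    Weak G (insert y (insert x A)) y x ∧ Tri G (insert y (insert x A)) y x := by
  obtain ⟨f, hf, h1, h2, h3, h4, h5⟩ := h
  have hvu := hf.1 u hu
  have hvv := hf.1 v hv
  obtain ⟨f₁, hf₁, d1, d2⟩ := hf.extendLeft hu h1 (fun a ha => (h5 a ha).1)
    ((f u).x1 - 1) (by omega)
  have d1v := d2 v huv.symm
  obtain ⟨f₂, hf₂, e1, e2⟩ := hf₁.extendUp hv (by rw [d1v]; exact h2) (fun a ha => by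
    by_cases hau : a = u
    · rw [d1v, hau, d1, h4]
    · rw [d1v, d2 a hau, h4]; exact (h5 a ha).2) ((f u).y2 + 1) (by rw [d1v]; omega)
  rw [d1v] at e1
  have e1u : f₂ u = _ := (e2 u huv).trans d1
  have e2' : ∀ a, a ≠ u → a ≠ v → f₂ a = f a := fun a h h' => (e2 a h').trans (d2 a h)
  obtain ⟨g, hg, i1, i2⟩ := hf₂.add hx ⟨(f u).x1 - 1, (f u).x1 - 1, (f u).y2, (f u).y2 + 1⟩
    (by simp [Box.Valid]) (fun a ha => by
      rw [hNx a ha]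
      have := h5 a ha
      have := hf.1 a ha
      by_cases hau : a = u
      · subst hau; rw [e1u]; simp only [Box.Valid, Box.Meets, true_iff] at *; omega
      · by_cases hav : a = v
        · subst hav; rw [e1]; simp only [hau, Box.Valid, Box.Meets, false_iff] at *; omega
        · rw [e2' a hau hav]; simp only [hau, Box.Valid, Box.Meets, false_iff] at *; omega)
  have hy' : y ∉ insert x A := by simp [hxy.ne', hy]
  obtain ⟨k, hk, j1, j2⟩ := hg.add hy' ⟨(f u).x1 - 1, (f u).x1, (f u).y2 + 1, (f u).y2 + 1⟩
    (by simp [Box.Valid]) (fun a ha => by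
      rcases Finset.mem_insert.1 ha with rfl | ha
      · rw [i1]; simp [hxy.symm, Box.Meets]
      rw [hNy a ha, i2 a ha]
      have := h5 a ha
      have := hf.1 a ha
      by_cases hau : a = u
      · subst hau; rw [e1u]; simp only [huv, Box.Valid, Box.Meets, false_iff] at *; omega
      · by_cases hav : a = v
        · subst hav; rw [e1]; simp only [Box.Valid, Box.Meets, true_iff] at *; omega
        · rw [e2' a hau hav]; simp only [hav, Box.Valid, Box.Meets, false_iff] at *; omega)
  have kx : k x = _ := (j2 x (by simp)).trans i1
  have key : ∀ a ∈ insert y (insert x A), (f u).x1 - 1 ≤ (k a).x1 ∧ (k a).y2 ≤ (f u).y2 + 1 ∧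
      (((k a).x1 = (f u).x1 - 1 ∧ (k a).y2 = (f u).y2 + 1) ↔ a = x ∨ a = y) := by
    intro a ha
    rcases Finset.mem_insert.1 ha with rfl | ha
    · rw [j1]; simp
    rcases Finset.mem_insert.1 ha with rfl | ha
    · rw [kx]; simp
    have hax : a ≠ x := fun h => hx (h ▸ ha)
    have hay : a ≠ y := fun h => hy (h ▸ ha)
    rw [j2 a (by simp [ha]), i2 a ha]
    simp only [hax, hay, or_self, iff_false]
    have := h5 a ha
    by_cases hau : a = u
    · subst hau; rw [e1u]; simp only; omega
    · by_cases hav : a = v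
      · subst hav; rw [e1]; simp only; omega
      · rw [e2' a hau hav]; omega
  refine ⟨⟨k, hk, ?_, ?_, ?_, ?_, fun a ha => ?_⟩, ⟨k, hk, ?_, fun a ha => ?_⟩⟩
  all_goals try have := key a ha
  all_goals simp only [j1, kx]
  · exact ⟨this.1, this.2.1⟩
  · exact ⟨this.1, this.2.1, fun h => by rw [this.2.2]; tauto⟩

theorem Weak.square (h : Weak G A u v) (hu : u ∈ A) (hv : v ∈ A) (huv : u ≠ v) (hx : x ∉ A)
    (hy : y ∉ A) (hxy : G.Adj x y) (hNx : ∀ a ∈ A, G.Adj x a ↔ a = u)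
    (hNy : ∀ a ∈ A, G.Adj y a ↔ a = v) : ERep G (insert y (insert x A)) x y := by
  have h1 := h.square_aux hu hv huv hx hy hxy hNx hNy
  have h2 := h.swap.square_aux hv hu huv.symm hy hx hxy.symm hNy hNx
  rw [Finset.insert_comm] at h2
  exact ⟨h2.1, h2.2, h1.2⟩

/-- Two collinear overlapping segments `v`, `w`, and a point `q` inside their overlap: the vertex
`q` has no further neighbours, so the edge `vw` stays on the boundary. -/
theorem SRep.overlap (h : SRep G A w) (hw : w ∈ A) (hv : v ∉ A) (hq : q ∉ A) (hqv : G.Adj q v)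
    (hNv : ∀ a ∈ A, G.Adj v a ↔ a = w) (hNq : ∀ a ∈ A, G.Adj q a ↔ a = w) :
    Tri G (insert q (insert v A)) v w := by
  obtain ⟨f, hf, h1, h2⟩ := h
  have hvw := hf.1 w hw
  obtain ⟨f', hf', e1, e2⟩ := hf.extendLeft hw h1
    (fun a ha => by by_cases h : a = w; exacts [by rw [h], (h2 a ha h).1.le]) ((f w).x1 - 2) (by omega)
  obtain ⟨g, hg, i1, i2⟩ := hf'.add hv ⟨(f w).x1 - 2, (f w).x1 - 1, (f w).y2, (f w).y2⟩
    (by simp [Box.Valid]) (fun a ha => by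
      rw [hNv a ha]
      by_cases haw : a = w
      · subst haw; rw [e1]; simp only [Box.Valid, Box.Meets, true_iff] at *; omega
      · have := h2 a ha haw
        rw [e2 a haw]; simp only [haw, Box.Meets, false_iff]; omega)
  obtain ⟨k, hk, j1, j2⟩ := hg.add (z := q) (by simp [hqv.ne, hq])
    ⟨(f w).x1 - 1, (f w).x1 - 1, (f w).y2, (f w).y2⟩ (by simp [Box.Valid]) (fun a ha => by
      rcases Finset.mem_insert.1 ha with rfl | ha
      · rw [i1]; simp [hqv, Box.Meets]
      rw [hNq a ha, i2 a ha]
      by_cases haw : a = w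
      · subst haw; rw [e1]; simp only [Box.Valid, Box.Meets, true_iff] at *; omega
      · have := h2 a ha haw
        rw [e2 a haw]; simp only [haw, Box.Meets, false_iff]; omega)
  have kv : k v = _ := (j2 v (by simp)).trans i1
  refine ⟨k, hk, by simp [kv], fun a ha => ?_⟩
  rw [kv]
  rcases Finset.mem_insert.1 ha with rfl | ha
  · have : a ≠ w := fun h => hq (h ▸ hw)
    rw [j1]; simp [this]
  rcases Finset.mem_insert.1 ha with rfl | ha
  · rw [kv]; simp
  rw [j2 a (by simp [ha]), i2 a ha]
  by_cases haw : a = w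
  · subst haw; rw [e1]; simp only; simp
  · have := h2 a ha haw
    rw [e2 a haw]; simp only [haw, iff_false]; omega

/-- A quadrangle `v x a y` hanging at the root `x`, with the next root `v` beside `x`. -/
theorem SRep.quad (h : SRep G A x) (hx : x ∈ A) (ha : a ∉ A) (hy : y ∉ A) (hv : v ∉ A)
    (hay : G.Adj a y) (hyv : G.Adj y v) (hav : ¬ G.Adj a v) (hav' : a ≠ v)
    (hNa : ∀ z ∈ A, G.Adj a z ↔ z = x) (hNy : ∀ z ∈ A, ¬ G.Adj y z)
    (hNv : ∀ z ∈ A, G.Adj v z ↔ z = x) :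
    Weak G (insert v (insert y (insert a A))) x v ∧
      Tri G (insert v (insert y (insert a A))) v x := by
  obtain ⟨f, hf, h1, h2⟩ := h
  have hvx := hf.1 x hx
  obtain ⟨f', hf', e1, e2⟩ := hf.extendLeft hx h1
    (fun a ha => by by_cases h : a = x; exacts [by rw [h], (h2 a ha h).1.le]) ((f x).x1 - 2) (by omega)
  obtain ⟨g, hg, i1, i2⟩ := hf'.add ha ⟨(f x).x1 - 1, (f x).x1 - 1, (f x).y2 - 1, (f x).y2⟩
    (by simp [Box.Valid]) (fun z hz => by
      rw [hNa z hz]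
      by_cases hzx : z = x
      · subst hzx; rw [e1]; simp only [Box.Valid, Box.Meets, true_iff] at *; omega
      · have := h2 z hz hzx
        rw [e2 z hzx]; simp only [hzx, Box.Meets, false_iff]; omega)
  obtain ⟨k, hk, j1, j2⟩ := hg.add (z := y) (by simp [hay.ne', hy])
    ⟨(f x).x1 - 2, (f x).x1 - 1, (f x).y2 - 1, (f x).y2 - 1⟩ (by simp [Box.Valid]) (fun z hz => by
      rcases Finset.mem_insert.1 hz with rfl | hz
      · rw [i1]; simp [hay.symm, Box.Meets]
      simp only [hNy z hz, false_iff]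
      rw [i2 z hz]
      by_cases hzx : z = x
      · subst hzx; rw [e1]; simp only [Box.Valid, Box.Meets] at *; omega
      · have := h2 z hz hzx
        rw [e2 z hzx]; simp only [Box.Meets]; omega)
  obtain ⟨l, hl, m1, m2⟩ := hk.add (z := v) (by simp [hyv.ne', hav'.symm, hv])
    ⟨(f x).x1 - 2, (f x).x1 - 2, (f x).y2 - 1, (f x).y2⟩ (by simp [Box.Valid]) (fun z hz => by
      rcases Finset.mem_insert.1 hz with rfl | hz
      · rw [j1]; simp [hyv.symm, Box.Meets]
      rw [j2 z hz]
      rcases Finset.mem_insert.1 hz with rfl | hz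
      · rw [i1]; simp [G.adj_comm v, hav, Box.Meets]; omega
      rw [hNv z hz, i2 z hz]
      by_cases hzx : z = x
      · subst hzx; rw [e1]; simp only [Box.Valid, Box.Meets, true_iff] at *; omega
      · have := h2 z hz hzx
        rw [e2 z hzx]; simp only [hzx, Box.Meets, false_iff]; omega)
  have lx : l x = _ := (m2 x (by simp [hx])).trans ((j2 x (by simp [hx])).trans ((i2 x hx).trans e1))
  have key : ∀ z ∈ insert v (insert y (insert a A)), (f x).x1 - 2 ≤ (l z).x1 ∧
      (l z).y2 ≤ (f x).y2 ∧ (((l z).x1 = (f x).x1 - 2 ∧ (l z).y2 = (f x).y2) ↔ z = x ∨ z = v) := by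
    intro z hz
    rcases Finset.mem_insert.1 hz with rfl | hz
    · rw [m1]; simp
    rw [m2 z hz]
    rcases Finset.mem_insert.1 hz with rfl | hz
    · have : z ≠ x := fun h => hy (h ▸ hx)
      rw [j1]; simp [this, hyv.ne]
    rw [j2 z hz]
    rcases Finset.mem_insert.1 hz with rfl | hz
    · have : z ≠ x := fun h => ha (h ▸ hx)
      rw [i1]; simp [this, hav']
    rw [i2 z hz]
    by_cases hzx : z = x
    · subst hzx; rw [e1]; simp
    · have := h2 z hz hzx
      have hzv : z ≠ v := fun h => hv (h ▸ hz)
      rw [e2 z hzx]; simp only [hzx, hzv, or_self, iff_false]; omega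
  refine ⟨⟨l, hl, ?_, ?_, ?_, ?_, fun z hz => ?_⟩, tri_of_vertical hl ?_ fun z hz => ?_⟩
  all_goals try have := key z hz
  all_goals simp only [m1, lx, h1]
  · exact ⟨this.1, this.2.1⟩
  · exact ⟨this.1, this.2.1, fun h => by rw [this.2.2]; tauto⟩

/-- A pentagon `v x a b y` hanging at the root `a`, with the next root `v`. -/
theorem SRep.pentagon (h : SRep G A a) (ha : a ∈ A) (hb : b ∉ A) (hx : x ∉ A) (hy : y ∉ A)
    (hv : v ∉ A) (hbx : b ≠ x) (hby : G.Adj b y) (hvx : G.Adj v x) (hvy : G.Adj v y)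
    (hvb : v ≠ b) (hxy : x ≠ y)
    (nbx : ¬ G.Adj b x) (nxy : ¬ G.Adj x y) (nvb : ¬ G.Adj v b)
    (hNb : ∀ z ∈ A, G.Adj b z ↔ z = a) (hNx : ∀ z ∈ A, G.Adj x z ↔ z = a)
    (hNy : ∀ z ∈ A, ¬ G.Adj y z) (hNv : ∀ z ∈ A, ¬ G.Adj v z) :
    SRep G (insert v (insert y (insert x (insert b A)))) v := by
  obtain ⟨f, hf, h1, h2⟩ := h
  have hva := hf.1 a ha
  obtain ⟨f', hf', e1, e2⟩ := hf.extendLeft ha h1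
    (fun z hz => by by_cases h : z = a; exacts [by rw [h], (h2 z hz h).1.le]) ((f a).x1 - 2) (by omega)
  obtain ⟨g, hg, i1, i2⟩ := hf'.add hb ⟨(f a).x1 - 1, (f a).x1 - 1, (f a).y2, (f a).y2 + 1⟩
    (by simp [Box.Valid]) (fun z hz => by
      rw [hNb z hz]
      by_cases hza : z = a
      · subst hza; rw [e1]; simp only [Box.Valid, Box.Meets, true_iff] at *; omega
      · have := h2 z hz hza
        rw [e2 z hza]; simp only [hza, Box.Meets, false_iff]; omega)
  obtain ⟨k, hk, j1, j2⟩ := hg.add (z := x) (by simp [hbx.symm, hx])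
    ⟨(f a).x1 - 2, (f a).x1 - 2, (f a).y2, (f a).y2 + 2⟩ (by simp [Box.Valid]) (fun z hz => by
      rcases Finset.mem_insert.1 hz with rfl | hz
      · rw [i1]; simp [G.adj_comm x, nbx, Box.Meets]; omega
      rw [hNx z hz, i2 z hz]
      by_cases hza : z = a
      · subst hza; rw [e1]; simp only [Box.Valid, Box.Meets, true_iff] at *; omega
      · have := h2 z hz hza
        rw [e2 z hza]; simp only [hza, Box.Meets, false_iff]; omega)
  obtain ⟨l, hl, m1, m2⟩ := hk.add (z := y) (by simp [hxy.symm, hby.ne', hy])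
    ⟨(f a).x1 - 1, (f a).x1 - 1, (f a).y2 + 1, (f a).y2 + 2⟩ (by simp [Box.Valid]) (fun z hz => by
      rcases Finset.mem_insert.1 hz with rfl | hz
      · rw [j1]; simp [G.adj_comm y, nxy, Box.Meets]; omega
      rw [j2 z hz]
      rcases Finset.mem_insert.1 hz with rfl | hz
      · rw [i1]; simp [hby.symm, Box.Meets]
      simp only [hNy z hz, false_iff]
      rw [i2 z hz]
      by_cases hza : z = a
      · subst hza; rw [e1]; simp only [Box.Valid, Box.Meets] at *; omega
      · have := h2 z hz hza
        rw [e2 z hza]; simp only [Box.Meets]; omega)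
  obtain ⟨n, hn, o1, o2⟩ := hl.add (z := v) (by simp [hvx.ne, hvy.ne, hvb, hv])
    ⟨(f a).x1 - 3, (f a).x1 - 1, (f a).y2 + 2, (f a).y2 + 2⟩ (by simp [Box.Valid]) (fun z hz => by
      rcases Finset.mem_insert.1 hz with rfl | hz
      · rw [m1]; simp [hvy, Box.Meets]
      rw [m2 z hz]
      rcases Finset.mem_insert.1 hz with rfl | hz
      · rw [j1]; simp [hvx, Box.Meets]; omega
      rw [j2 z hz]
      rcases Finset.mem_insert.1 hz with rfl | hz
      · rw [i1]; simp [nvb, Box.Meets]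
      simp only [hNv z hz, false_iff]
      rw [i2 z hz]
      by_cases hza : z = a
      · subst hza; rw [e1]; simp only [Box.Valid, Box.Meets] at *; omega
      · have := h2 z hz hza
        rw [e2 z hza]; simp only [Box.Meets]; omega)
  refine ⟨n, hn, by simp [o1], fun z hz hzv => ?_⟩
  rw [o1]
  have hz := (Finset.mem_insert.1 hz).resolve_left hzv
  rw [o2 z hz]
  rcases Finset.mem_insert.1 hz with rfl | hz
  · rw [m1]; simp
  rw [m2 z hz]
  rcases Finset.mem_insert.1 hz with rfl | hz
  · rw [j1]; simp only; omega
  rw [j2 z hz]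
  rcases Finset.mem_insert.1 hz with rfl | hz
  · rw [i1]; simp
  rw [i2 z hz]
  by_cases hza : z = a
  · subst hza; rw [e1]; simp
  · have := h2 z hz hza
    rw [e2 z hza]; simp only; omega

/-- A single vertex. -/
theorem SRep.singleton (v : V) : SRep G {v} v := by
  refine ⟨fun _ => ⟨0, 0, 0, 0⟩, ⟨by simp [Box.Valid], ?_⟩, rfl, by simp⟩
  simp only [Finset.mem_singleton]
  rintro a rfl b rfl h
  exact absurd rfl h

/-- Representations of two parts without edges between them can be put side by side. -/
theorem Rep.union {B : Finset V} {f g : V → Box} (hf : Rep G A f) (hg : Rep G B g)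
    (hAB : Disjoint A B) (h : ∀ a ∈ A, ∀ b ∈ B, ¬ G.Adj a b) : ∃ k, Rep G (A ∪ B) k := by
  obtain ⟨M, hM⟩ := (A.image fun a => (f a).x2).bddAbove
  obtain ⟨m, hm⟩ := (B.image fun a => (g a).x1).bddBelow
  have hM' : ∀ a ∈ A, (f a).x2 ≤ M := fun a ha => hM (by simpa using ⟨a, ha, rfl⟩)
  have hm' : ∀ a ∈ B, m ≤ (g a).x1 := fun a ha => hm (by simpa using ⟨a, ha, rfl⟩)
  have hB : ∀ b ∈ B, b ∉ A := fun b hb ha => Finset.disjoint_left.1 hAB ha hb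
  -- the second part is shifted to the right of the first one
  let k : V → Box := fun z => if z ∈ A then f z else
    ⟨(g z).x1 + (M - m + 1), (g z).x2 + (M - m + 1), (g z).y1, (g z).y2⟩
  have kA : ∀ a ∈ A, k a = f a := fun a ha => by simp [k, ha]
  have kB : ∀ b ∈ B, k b = _ := fun b hb => if_neg (hB b hb)
  refine ⟨k, fun a ha => ?_, fun a ha b hb hab => ?_⟩
  · rcases Finset.mem_union.1 ha with ha | ha
    · rw [kA a ha]; exact hf.1 a ha
    · have := hg.1 a ha
      rw [kB a ha]; simp only [Box.Valid] at *; omega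
  · rcases Finset.mem_union.1 ha with ha | ha <;> rcases Finset.mem_union.1 hb with hb | hb
    · rw [kA a ha, kA b hb]; exact hf.2 a ha b hb hab
    · have h1 := hM' a ha
      have h2 := hm' b hb
      rw [kA a ha, kB b hb]; simp only [h a ha b hb, false_iff, Box.Meets]; omega
    · have h1 := hM' b hb
      have h2 := hm' a ha
      have h3 := h b hb a ha
      rw [kA b hb, kB a ha]; simp only [G.adj_comm a, h3, false_iff, Box.Meets]; omega
    · rw [kB a ha, kB b hb, hg.2 a ha b hb hab]; simp only [Box.Meets]; omega

omit [DecidableEq V] in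
theorem Rep.isB0 [Fintype V] {f : V → Box} (hf : Rep G Finset.univ f) : IsB0 G := by
  refine ⟨fun v => segment ℝ (((f v).x1 : ℝ), ((f v).y1 : ℝ)) (((f v).x2 : ℝ), ((f v).y2 : ℝ)),
    fun v => ⟨_, _, ?_, rfl⟩, fun u v huv => ?_⟩
  · rcases (hf.1 v (Finset.mem_univ v)).2.2 with h | h <;> simp [h]
  -- a valid box is the segment between its corners
  have key : ∀ v, segment ℝ (((f v).x1 : ℝ), ((f v).y1 : ℝ)) (((f v).x2 : ℝ), ((f v).y2 : ℝ)) =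
      Set.Icc ((f v).x1 : ℝ) (f v).x2 ×ˢ Set.Icc ((f v).y1 : ℝ) (f v).y2 := by
    intro v
    obtain ⟨h1, h2, h3⟩ := hf.1 v (Finset.mem_univ v)
    have h1' : ((f v).x1 : ℝ) ≤ (f v).x2 := by exact_mod_cast h1
    have h2' : ((f v).y1 : ℝ) ≤ (f v).y2 := by exact_mod_cast h2
    rcases h3 with h | h
    · rw [← h, ← Prod.image_mk_segment_right, segment_eq_Icc h2', Set.Icc_self,
        Set.singleton_prod]
    · rw [← h, ← Prod.image_mk_segment_left, segment_eq_Icc h1', Set.Icc_self,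
        Set.prod_singleton]
  rw [hf.2 u (Finset.mem_univ u) v (Finset.mem_univ v) huv]
  simp only [key, Set.prod_inter_prod, Set.prod_nonempty_iff, Set.Icc_inter_Icc,
    Set.nonempty_Icc, sup_le_iff, le_inf_iff, Int.cast_le]
  have h1 := hf.1 u (Finset.mem_univ u)
  have h2 := hf.1 v (Finset.mem_univ v)
  simp only [Box.Valid, Box.Meets] at *; omega

/-! ### Restricted walks and forbidden minors -/

/-- `a` and `b` are joined by a walk all of whose vertices satisfy `P`. -/
def Rch (G : SimpleGraph V) (P : V → Prop) (a b : V) : Prop :=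
  ∃ p : G.Walk a b, ∀ x ∈ p.support, P x

/-- `x` lies outside the closed neighbourhood of `b`. -/
def Off (G : SimpleGraph V) (b x : V) : Prop := x ≠ b ∧ ¬ G.Adj b x

section Walks

omit [DecidableEq V]

variable {P P' : V → Prop}

theorem Rch.nil (h : P a) : Rch G P a a := ⟨.nil, by simpa using h⟩

theorem Rch.cons {c : V} (h : P a) (hab : G.Adj a b) (hbc : Rch G P b c) : Rch G P a c := by
  obtain ⟨p, hp⟩ := hbc
  exact ⟨.cons hab p, by simpa using ⟨h, hp⟩⟩

theorem Rch.trans {c : V} (hab : Rch G P a b) (hbc : Rch G P b c) : Rch G P a c := by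
  obtain ⟨p, hp⟩ := hab
  obtain ⟨p', hp'⟩ := hbc
  refine ⟨p.append p', fun x hx => ?_⟩
  rcases SimpleGraph.Walk.mem_support_append_iff _ _ |>.1 hx with h | h
  exacts [hp x h, hp' x h]

theorem Rch.symm (hab : Rch G P a b) : Rch G P b a := by
  obtain ⟨p, hp⟩ := hab
  exact ⟨p.reverse, by simpa using hp⟩

theorem Rch.mono (hab : Rch G P a b) (h : ∀ x, P x → P' x) : Rch G P' a b := by
  obtain ⟨p, hp⟩ := hab
  exact ⟨p, fun x hx => h x (hp x hx)⟩

theorem Rch.left (hab : Rch G P a b) : P a := hab.choose_spec _ (by simp)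

theorem Rch.right (hab : Rch G P a b) : P b := hab.choose_spec _ (by simp)

/-- The form in which the absence of asteroidal triples is used. -/
theorem at_false (hat : ATFree G) {c : V} (h1 : Rch G (Off G c) a b) (h2 : Rch G (Off G a) b c)
    (h3 : Rch G (Off G b) a c) : False := by
  have i1 := h1.left
  have i2 := h1.right
  have i3 := h2.left
  obtain ⟨p1, q1⟩ := h1
  obtain ⟨p2, q2⟩ := h2
  obtain ⟨p3, q3⟩ := h3
  refine hat a b c ⟨i3.1.symm, i2.1, i1.1, i3.2, fun h => i2.2 h.symm, fun h => i1.2 h.symm,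
    ⟨p1, fun x hx => ?_⟩, ⟨p2, fun x hx => ?_⟩, ⟨p3, fun x hx => ?_⟩⟩
  · simpa [Off] using q1 x hx
  · simpa [Off] using q2 x hx
  · simpa [Off] using q3 x hx

end Walks

/-- The set `s` of vertices induces a connected subgraph. -/
abbrev IsConn (G : SimpleGraph V) (s : Set V) : Prop := (G.induce s).Connected

section Minors

omit [DecidableEq V]

variable {s t B C D : Set V} {c d : V}

theorem isConn_singleton (v : V) : IsConn G {v} := by
  have : Nonempty ({v} : Set V) := ⟨⟨v, rfl⟩⟩
  exact ⟨SimpleGraph.Preconnected.of_subsingleton⟩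

theorem IsConn.union (hs : IsConn G s) (ht : IsConn G t) (ha : a ∈ s) (hb : b ∈ t)
    (hab : G.Adj a b) : IsConn G (s ∪ t) :=
  SimpleGraph.connected_induce_union hs.preconnected ht.preconnected ha hb hab

theorem IsConn.insert (hs : IsConn G s) (hb : b ∈ s) (hab : G.Adj a b) :
    IsConn G (insert a s) :=
  (isConn_singleton a).union hs rfl hb hab

theorem isConn_pair (hab : G.Adj a b) : IsConn G {a, b} := (isConn_singleton b).insert rfl hab

/-- Three vertices and a connected set that touch pairwise. -/
theorem k4_false (hout : IsOuterplanar G) (hC : IsConn G C) (hab : G.Adj a b) (hac : G.Adj a c)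
    (hbc : G.Adj b c) (ha : a ∉ C) (hb : b ∉ C) (hc : c ∉ C) (haC : ∃ x ∈ C, G.Adj a x)
    (hbC : ∃ x ∈ C, G.Adj b x) (hcC : ∃ x ∈ C, G.Adj c x) : False := by
  have hab' := hab.ne
  have hac' := hac.ne
  have hbc' := hbc.ne
  refine hout.1 ⟨![{a}, {b}, {c}, C], fun i => ?_, fun i => ?_, fun i j hij => ?_,
    fun i j hij => ?_⟩
  · fin_cases i <;> simp
    obtain ⟨x, hx, -⟩ := haC
    exact ⟨x, hx⟩
  · fin_cases i
    exacts [isConn_singleton a, isConn_singleton b, isConn_singleton c, hC]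
  · fin_cases i <;> fin_cases j <;> first | exact absurd rfl hij | skip
    all_goals simp [*, hab'.symm, hac'.symm, hbc'.symm]
  · fin_cases i <;> fin_cases j <;> first | exact absurd rfl hij | skip
    all_goals simp [*, hab.symm, hac.symm, hbc.symm]
    · obtain ⟨x, hx, h⟩ := haC; exact ⟨x, hx, h.symm⟩
    · obtain ⟨x, hx, h⟩ := hbC; exact ⟨x, hx, h.symm⟩
    · obtain ⟨x, hx, h⟩ := hcC; exact ⟨x, hx, h.symm⟩

theorem k23_false (hout : IsOuterplanar G) {f : Fin 2 → Set V} {g : Fin 3 → Set V}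
    (hf : ∀ i, IsConn G (f i)) (hg : ∀ i, IsConn G (g i))
    (hff : Disjoint (f 0) (f 1)) (hg1 : Disjoint (g 0) (g 1)) (hg2 : Disjoint (g 0) (g 2))
    (hg3 : Disjoint (g 1) (g 2)) (hfg : ∀ i j, Disjoint (f i) (g j))
    (h : ∀ i j, ∃ x ∈ f i, ∃ y ∈ g j, G.Adj x y) : False := by
  refine hout.2 ⟨Sum.elim f g, fun i => ?_, fun i => ?_, fun i j hij => ?_, fun i j hij => ?_⟩
  · rcases i with i | i
    · obtain ⟨⟨x, hx⟩⟩ := (hf i).nonempty; exact ⟨x, hx⟩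
    · obtain ⟨⟨x, hx⟩⟩ := (hg i).nonempty; exact ⟨x, hx⟩
  · rcases i with i | i
    exacts [hf i, hg i]
  · rcases i with i | i <;> rcases j with j | j
    · fin_cases i <;> fin_cases j <;> first | exact absurd rfl hij | skip
      exacts [hff, hff.symm]
    · exact hfg i j
    · exact (hfg j i).symm
    · fin_cases i <;> fin_cases j <;> first | exact absurd rfl hij | skip
      exacts [hg1, hg2, hg1.symm, hg3, hg2.symm, hg3.symm]
  · rcases i with i | i <;> rcases j with j | j
    · simp at hij
    · exact h i j
    · obtain ⟨x, hx, y, hy, hxy⟩ := h j i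
      exact ⟨y, hy, x, hx, hxy.symm⟩
    · simp at hij

/-- Two vertices with a common neighbour and two further connected sets touching both. -/
theorem k23_sets (hout : IsOuterplanar G) (hC : IsConn G C) (hD : IsConn G D) (huv : u ≠ v)
    (hau : G.Adj u a) (hav : G.Adj v a) (huC : u ∉ C) (hvC : v ∉ C) (haC : a ∉ C) (huD : u ∉ D)
    (hvD : v ∉ D) (haD : a ∉ D) (hCD : Disjoint C D)
    (c1 : ∃ x ∈ C, G.Adj u x) (c2 : ∃ x ∈ C, G.Adj v x)
    (d1 : ∃ x ∈ D, G.Adj u x) (d2 : ∃ x ∈ D, G.Adj v x) : False := by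
  refine k23_false hout (f := ![{u}, {v}]) (g := ![{a}, C, D]) (fun i => ?_) (fun i => ?_)
    ?_ ?_ ?_ ?_ (fun i j => ?_) (fun i j => ?_)
  · fin_cases i
    exacts [isConn_singleton u, isConn_singleton v]
  · fin_cases i
    exacts [isConn_singleton a, hC, hD]
  · simpa using huv
  · simpa using haC
  · simpa using haD
  · simpa using hCD
  · fin_cases i <;> fin_cases j <;> simp [*, hau.ne, hav.ne]
  · fin_cases i <;> fin_cases j <;> simp [*]

theorem k23_one_set (hout : IsOuterplanar G) (hC : IsConn G C) (huv : u ≠ v) (hab : a ≠ b)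
    (ua : G.Adj u a) (va : G.Adj v a) (ub : G.Adj u b) (vb : G.Adj v b)
    (huC : u ∉ C) (hvC : v ∉ C) (haC : a ∉ C) (hbC : b ∉ C)
    (c1 : ∃ x ∈ C, G.Adj u x) (c2 : ∃ x ∈ C, G.Adj v x) : False :=
  k23_sets hout (isConn_singleton b) hC huv ua va (by simpa using ub.ne) (by simpa using vb.ne)
    (by simpa using hab) huC hvC haC (by simpa using hbC) ⟨b, rfl, ub⟩ ⟨b, rfl, vb⟩ c1 c2

/-- Two distinct vertices have at most two common neighbours. -/
theorem k23_vertices (hout : IsOuterplanar G) (huv : u ≠ v) (hab : a ≠ b) (hac : a ≠ c)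
    (hbc : b ≠ c) (ua : G.Adj u a) (va : G.Adj v a) (ub : G.Adj u b) (vb : G.Adj v b)
    (uc : G.Adj u c) (vc : G.Adj v c) : False :=
  k23_one_set hout (isConn_singleton c) huv hab ua va ub vb (by simpa using uc.ne)
    (by simpa using vc.ne) (by simpa using hac) (by simpa using hbc) ⟨c, rfl, uc⟩ ⟨c, rfl, vc⟩

/-- Three neighbours of `v` that all touch one connected set. -/
theorem k23_star (hout : IsOuterplanar G) (hC : IsConn G C) (hab : a ≠ b) (hac : a ≠ c)
    (hbc : b ≠ c) (va : G.Adj v a) (vb : G.Adj v b) (vc : G.Adj v c) (hv : v ∉ C) (ha : a ∉ C)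
    (hb : b ∉ C) (hc : c ∉ C) (haC : ∃ x ∈ C, G.Adj x a) (hbC : ∃ x ∈ C, G.Adj x b)
    (hcC : ∃ x ∈ C, G.Adj x c) : False := by
  refine k23_false hout (f := ![{v}, C]) (g := ![{a}, {b}, {c}]) (fun i => ?_) (fun i => ?_)
    ?_ ?_ ?_ ?_ (fun i j => ?_) (fun i j => ?_)
  · fin_cases i
    exacts [isConn_singleton v, hC]
  · fin_cases i
    exacts [isConn_singleton a, isConn_singleton b, isConn_singleton c]
  · simpa using hv
  · simpa using hab
  · simpa using hac
  · simpa using hbc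
  · fin_cases i <;> fin_cases j <;> simp [*, va.ne, vb.ne, vc.ne]
  · fin_cases i <;> fin_cases j <;> simp [*]

/-- The neighbourhood of a vertex induces a forest, which therefore has a vertex of degree at
most one. -/
theorem exists_leaf [Fintype V] (hout : IsOuterplanar G) {F : Finset V} (hF : F.Nonempty)
    (hv : ∀ x ∈ F, G.Adj v x) :
    ∃ s ∈ F, ∀ y ∈ F, ∀ z ∈ F, G.Adj s y → G.Adj s z → y = z := by
  by_contra! hcon
  -- otherwise paths in `F` can be prolonged indefinitely at their first vertex
  have key : ∀ n : ℕ, ∃ (s t : V) (p : G.Walk s t), p.IsPath ∧ p.length = n ∧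
      ∀ x ∈ p.support, x ∈ F := by
    intro n
    induction n with
    | zero =>
      obtain ⟨s, hs⟩ := hF
      exact ⟨s, s, .nil, by simp, rfl, by simpa using hs⟩
    | succ n ih =>
      obtain ⟨s, t, p, hp, hn, hpF⟩ := ih
      obtain ⟨y, hy, z, hz, hsy, hsz, hyz⟩ := hcon s (hpF s (by simp))
      have ext : ∀ y ∈ F, G.Adj s y → y ∉ p.support → ∃ (s t : V) (p : G.Walk s t), p.IsPath ∧
          p.length = n + 1 ∧ ∀ x ∈ p.support, x ∈ F := fun y hy hsy hyp =>
        ⟨y, t, .cons hsy.symm p, hp.cons hyp, by simp [hn], by simpa using ⟨hy, hpF⟩⟩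
      match p, hp, hpF, ext with
      | .nil, _, _, ext => exact ext y hy hsy (by simpa using hsy.ne')
      | .cons (v := h) hsh .nil, _, _, ext =>
        by_cases hyh : y = h
        · exact ext z hz hsz (by simpa using ⟨hsz.ne', fun h' => hyz (hyh.trans h'.symm)⟩)
        · exact ext y hy hsy (by simpa using ⟨hsy.ne', hyh⟩)
      | .cons (v := h) hsh (.cons (v := h') hhh p), hp, hpF, ext =>
        by_contra hno
        have : ∃ y ∈ F, G.Adj s y ∧ y ≠ h := by
          by_cases hyh : y = h
          · exact ⟨z, hz, hsz, fun h' => hyz (hyh.trans h'.symm)⟩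
          · exact ⟨y, hy, hsy, hyh⟩
        obtain ⟨y, hy, hsy, hyh⟩ := this
        have hyp : y ∈ p.support := by
          by_contra hyp
          exact hno (ext y hy hsy (by simpa [hyh, hyp] using hsy.ne'))
        rw [SimpleGraph.Walk.cons_isPath_iff, SimpleGraph.Walk.cons_isPath_iff] at hp
        simp only [SimpleGraph.Walk.support_cons, List.mem_cons, not_or] at hp hpF
        exact k4_false hout p.connected_induce_support (hv s (hpF s (by simp)))
          (hv h (hpF h (by simp))) hsh (fun hvp => (hv v (hpF v (by simp_all))).ne rfl) hp.2.2
          hp.1.2 ⟨h', by simp, hv h' (hpF h' (by simp))⟩ ⟨y, hyp, hsy⟩ ⟨h', by simp, hhh⟩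
  obtain ⟨s, t, p, hp, hn, -⟩ := key (Fintype.card V)
  exact absurd hp.length_lt (by omega)

end Minors

/-! ### Forests at a root, and the induction hypothesis -/

/-- Vertices `Q` adjacent to the root `v` and otherwise only to each other, or also to one further
neighbour `w` of `v` on the boundary, can be added to a representation. They induce a forest, which
is inserted tree by tree, each tree from a leaf on. -/
theorem SRep.add_forest [Fintype V] (hout : IsOuterplanar G) (n : ℕ) :
    ∀ (A Q : Finset V) (v : V), Q.card = n → v ∈ A → Disjoint Q A → (∀ q ∈ Q, G.Adj v q) →
    (SRep G A v → (∀ q ∈ Q, ∀ a ∈ A, G.Adj q a → a = v) → SRep G (A ∪ Q) v) ∧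
    (∀ w ∈ A, G.Adj v w → Tri G A v w → Weak G A v w →
      (∀ q ∈ Q, ∀ a ∈ A, G.Adj q a → a = v ∨ a = w) →
      (∀ q ∈ Q, ∀ q' ∈ Q, G.Adj w q → G.Adj w q' → q = q') → SRep G (A ∪ Q) v) := by
  induction n with
  | zero =>
    intro A Q v hQ hv _ _
    obtain rfl := Finset.card_eq_zero.1 hQ
    rw [Finset.union_empty]
    exact ⟨fun h _ => h, fun w _ _ _ h _ _ => .of_weak h hv⟩
  | succ n ih =>
    intro A Q v hQ hv hd hQv
    have hQA : ∀ q ∈ Q, q ∉ A := fun q hq => Finset.disjoint_left.1 hd hq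
    have hcard : ∀ q ∈ Q, (Q.erase q).card = n := fun q hq => by
      rw [Finset.card_erase_of_mem hq, hQ]; rfl
    have hdis : ∀ q ∈ Q, Disjoint (Q.erase q) (insert q A) := fun q hq => by
      rw [Finset.disjoint_left]; intro a ha; grind
    have hun : ∀ q ∈ Q, insert q A ∪ Q.erase q = A ∪ Q := fun q hq => by grind
    have h1 : SRep G A v → (∀ q ∈ Q, ∀ a ∈ A, G.Adj q a → a = v) → SRep G (A ∪ Q) v := by
      intro h hN
      have hne : Q.Nonempty := Finset.card_pos.1 (by omega)
      obtain ⟨s, hs, hleaf⟩ := exists_leaf hout hne hQv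
      have hE := h.pendant hv (hQA s hs)
        (fun a ha => ⟨hN s hs a ha, fun e => e ▸ (hQv s hs).symm⟩)
      rw [← hun s hs]
      refine (ih _ (Q.erase s) v (hcard s hs) (by simp [hv]) (hdis s hs)
        (fun q hq => hQv q (Finset.mem_of_mem_erase hq))).2 s (by simp) (hQv s hs) hE.2.1 hE.1
        (fun q hq a ha hqa => ?_) (fun q hq q' hq' => ?_)
      · rcases Finset.mem_insert.1 ha with rfl | ha
        exacts [.inr rfl, .inl (hN q (Finset.mem_of_mem_erase hq) a ha hqa)]
      · exact hleaf q (Finset.mem_of_mem_erase hq) q' (Finset.mem_of_mem_erase hq')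
    refine ⟨h1, fun w hw hvw hT hW hN hU => ?_⟩
    by_cases hq : ∃ q ∈ Q, G.Adj w q
    · obtain ⟨q, hq, hwq⟩ := hq
      have hE := hT.triangle hv hvw.ne (hQA q hq) (fun a ha => ⟨hN q hq a ha, by
        rintro (rfl | rfl)
        exacts [(hQv q hq).symm, hwq.symm]⟩)
      rw [← hun q hq]
      refine (ih _ (Q.erase q) v (hcard q hq) (by simp [hv]) (hdis q hq)
        (fun q hq => hQv q (Finset.mem_of_mem_erase hq))).2 q (by simp) (hQv q hq) hE.2.1 hE.1
        (fun z hz a ha hza => ?_) (fun y hy z hz hqy hqz => ?_)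
      · rw [Finset.mem_erase] at hz
        rcases Finset.mem_insert.1 ha with rfl | ha
        · exact .inr rfl
        · rcases hN z hz.2 a ha hza with rfl | rfl
          · exact .inl rfl
          · exact absurd (hU z hz.2 q hq hza.symm hwq) hz.1
      · rw [Finset.mem_erase] at hy hz
        by_contra hyz
        have hwy : ∀ y ∈ Q, w ≠ y := fun y hy h => hQA y hy (h ▸ hw)
        exact k23_vertices hout (hQv q hq).ne (hwy y hy.2) (hwy z hz.2) hyz hvw hwq.symm
          (hQv y hy.2) hqy (hQv z hz.2) hqz
    · push Not at hq
      refine h1 (.of_weak hW hv) fun z hz a ha hza => ?_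
      rcases hN z hz a ha hza with rfl | rfl
      exacts [rfl, absurd hza.symm (hq z hz)]

/-- Every vertex of `A` is joined within `A` to one of the roots `u`, `v`, stated in terms of cuts,
and no two nonadjacent vertices of `A` reach roots within `A` off each other's closed
neighbourhood. A single root `v` is encoded as the pair `v`, `v`. -/
structure Good (G : SimpleGraph V) (A : Finset V) (u v : V) : Prop where
  reach : ∀ Y ⊆ A, Y.Nonempty → u ∉ Y → v ∉ Y → ∃ y ∈ Y, ∃ z ∈ A, z ∉ Y ∧ G.Adj y z
  unrel : ∀ a b r s, (r = u ∨ r = v) → (s = u ∨ s = v) →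
    Rch G (fun x => x ∈ A ∧ Off G b x) a r → Rch G (fun x => x ∈ A ∧ Off G a x) b s → False

omit [DecidableEq V] in
/-- Passing to a part `A'` which is attached to the rest through its roots only, and whose roots
reach the old roots through the rest. -/
theorem Good.trans {A' : Finset V} {u' v' : V} (h : Good G A u v) (hA : A' ⊆ A)
    (hcl : u' = v' ∨ G.Adj u' v') (hu : u ∈ A' → u = u' ∨ u = v') (hv : v ∈ A' → v = u' ∨ v = v')
    (bd : ∀ a ∈ A', ∀ x ∈ A, x ∉ A' → G.Adj a x → a = u' ∨ a = v')
    (cu : ∃ r, (r = u ∨ r = v) ∧ Rch G (fun x => x = u' ∨ x ∈ A ∧ x ∉ A') u' r)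
    (cv : ∃ r, (r = u ∨ r = v) ∧ Rch G (fun x => x = v' ∨ x ∈ A ∧ x ∉ A') v' r) :
    Good G A' u' v' := by
  refine ⟨fun Y hY hne huY hvY => ?_, ?_⟩
  · obtain ⟨y, hy, z, hz, hzY, hyz⟩ := h.reach Y (hY.trans hA) hne
      (fun hu' => by rcases hu (hY hu') with rfl | rfl <;> contradiction)
      (fun hv' => by rcases hv (hY hv') with rfl | rfl <;> contradiction)
    refine ⟨y, hy, z, ?_, hzY, hyz⟩
    by_contra hzA
    rcases bd y (hY hy) z hz hzA hyz with rfl | rfl <;> contradiction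
  · intro a b r s hr hs h1 h2
    have cl : ∀ r b, (r = u' ∨ r = v') → (b = u' ∨ b = v') → Off G b r → False := by
      rintro r b (rfl | rfl) (rfl | rfl) ⟨h, h'⟩
      · exact h rfl
      · exact hcl.elim h (fun e => h' e.symm)
      · exact hcl.elim (fun e => h e.symm) h'
      · exact h rfl
    have ext : ∀ a b r, (r = u' ∨ r = v') → Rch G (fun x => x ∈ A' ∧ Off G b x) a r → b ∈ A' →
        ∃ t, (t = u ∨ t = v) ∧ Rch G (fun x => x ∈ A ∧ Off G b x) a t := by
      intro a b r hr h1 hb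
      have hb' : ∀ x ∈ A, x ∉ A' → Off G b x := fun x hx hx' =>
        ⟨fun e => hx' (e ▸ hb), fun e => cl r b hr (bd b hb x hx hx' e) h1.right.2⟩
      obtain ⟨t, ht, hrt⟩ : ∃ t, (t = u ∨ t = v) ∧ Rch G (fun x => x = r ∨ x ∈ A ∧ x ∉ A') r t := by
        rcases hr with rfl | rfl
        exacts [cu, cv]
      refine ⟨t, ht, (h1.mono fun x hx => ⟨hA hx.1, hx.2⟩).trans (hrt.mono ?_)⟩
      rintro x (rfl | hx)
      exacts [⟨hA h1.right.1, h1.right.2⟩, ⟨hx.1, hb' x hx.1 hx.2⟩]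
    obtain ⟨t, ht, i1⟩ := ext a b r hr h1 h2.left.1
    obtain ⟨t', ht', i2⟩ := ext b a s hs h2 h1.left.1
    exact h.unrel a b t t' ht ht' i1 i2

/-- The induction hypothesis: good sets with one root have a representation that can be continued
at the root, and good sets whose two roots form a boundary edge have one that can be continued at
this edge. The set `B` certifies that the edge lies on the boundary. -/
structure Claims (G : SimpleGraph V) (A : Finset V) : Prop where
  single : ∀ v ∈ A, Good G A v v → SRep G A v
  edge : ∀ u ∈ A, ∀ v ∈ A, G.Adj u v → Good G A u v → ∀ B : Set V, IsConn G B →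
    (∀ x ∈ B, x ∉ A) → (∃ x ∈ B, G.Adj u x) → (∃ x ∈ B, G.Adj v x) → ERep G A u v

/-! ### The inner face at a boundary edge -/

section Steps

variable {P : V → Prop} {c d : V}

omit [DecidableEq V]

theorem Rch.one (ha : P a) (hb : P b) (hab : G.Adj a b) : Rch G P a b := .cons ha hab (.nil hb)

theorem Rch.two (ha : P a) (hb : P b) (hc : P c) (hab : G.Adj a b) (hbc : G.Adj b c) :
    Rch G P a c := .cons ha hab (.one hb hc hbc)

theorem Rch.three (ha : P a) (hb : P b) (hc : P c) (hd : P d) (hab : G.Adj a b) (hbc : G.Adj b c)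
    (hcd : G.Adj c d) : Rch G P a d := .cons ha hab (.two hb hc hd hbc hcd)

theorem Good.swap (h : Good G A u v) : Good G A v u :=
  ⟨fun Y hY hne hv hu => h.reach Y hY hne hu hv,
    fun a b r s hr hs => h.unrel a b r s hr.symm hs.symm⟩

end Steps

section EdgeStep

variable {B : Set V}

/-- The face at the boundary edge `uv` is a triangle with third vertex `w`, and nothing else is
attached to `v`. -/
theorem edge_triangle (IH : ∀ A', A' ⊂ A → Claims G A') (hu : u ∈ A) (hv : v ∈ A)
    (huv : G.Adj u v) (hG : Good G A u v) (hB : IsConn G B) (hBA : ∀ x ∈ B, x ∉ A)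
    (hBu : ∃ x ∈ B, G.Adj u x) (hBv : ∃ x ∈ B, G.Adj v x) (hw : w ∈ A) (huw : G.Adj u w)
    (hvw : G.Adj v w) (hN : ∀ x ∈ A, G.Adj v x → x = u ∨ x = w) : ERep G A u v := by
  have hvw' := hvw.ne
  have huv' := huv.ne
  have h1 : Good G (A.erase v) u w := by
    refine hG.trans (Finset.erase_subset _ _) (.inr huw) (fun _ => .inl rfl)
      (fun h => absurd rfl (Finset.ne_of_mem_erase h)) (fun a ha x hx hxA hax => ?_)
      ⟨u, .inl rfl, .nil (.inl rfl)⟩ ⟨v, .inr rfl, .one (.inl rfl) (.inr (by simp [hv])) hvw.symm⟩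
    obtain rfl : x = v := by grind
    exact hN a (Finset.mem_of_mem_erase ha) hax.symm
  obtain ⟨y, hy, hvy⟩ := hBv
  obtain ⟨x, hx, hux⟩ := hBu
  have h2 := (IH _ (Finset.erase_ssubset hv)).edge u (by grind) w (by grind) huw h1 (insert v B)
    (hB.insert hy hvy) (by grind) ⟨x, .inr hx, hux⟩ ⟨v, .inl rfl, hvw.symm⟩
  have h3 := h2.2.1.triangle (v := v) (by grind) huw.ne (by simp) (fun a ha =>
    ⟨fun h => hN a (Finset.mem_of_mem_erase ha) h, by
      rintro (rfl | rfl)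
      exacts [huv.symm, hvw]⟩)
  rwa [Finset.insert_erase hv] at h3

/-- Nothing but `u` is attached to `v`. -/
theorem edge_pendant (IH : ∀ A', A' ⊂ A → Claims G A') (hu : u ∈ A) (hv : v ∈ A)
    (huv : G.Adj u v) (hG : Good G A u v) (hN : ∀ x ∈ A, G.Adj v x → x = u) : ERep G A u v := by
  have huv' := huv.ne
  have h1 : Good G (A.erase v) u u := by
    refine hG.trans (Finset.erase_subset _ _) (.inl rfl) (fun _ => .inl rfl)
      (fun h => absurd rfl (Finset.ne_of_mem_erase h)) (fun a ha x hx hxA hax => ?_)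
      ⟨u, .inl rfl, .nil (.inl rfl)⟩ ⟨u, .inl rfl, .nil (.inl rfl)⟩
    obtain rfl : x = v := by grind
    exact .inl (hN a (Finset.mem_of_mem_erase ha) hax.symm)
  have h2 := (IH _ (Finset.erase_ssubset hv)).single u (by grind) h1
  have h3 := h2.pendant (v := v) (by grind) (by simp) (fun a ha =>
    ⟨fun h => hN a (Finset.mem_of_mem_erase ha) h, by rintro rfl; exact huv.symm⟩)
  rwa [Finset.insert_erase hv] at h3

/-- The induction step at a boundary edge: the inner face at `uv` is a triangle or a quadrangle. -/
theorem edge_step (hout : IsOuterplanar G) (IH : ∀ A', A' ⊂ A → Claims G A') (hu : u ∈ A)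
    (hv : v ∈ A) (huv : G.Adj u v) (hG : Good G A u v) (hB : IsConn G B) (hBA : ∀ x ∈ B, x ∉ A)
    (hBu : ∃ x ∈ B, G.Adj u x) (hBv : ∃ x ∈ B, G.Adj v x) : ERep G A u v := by
  have huv' := huv.ne
  by_cases hw : ∃ w ∈ A, G.Adj u w ∧ G.Adj v w
  · obtain ⟨w, hw, huw, hvw⟩ := hw
    by_cases h1 : ∀ x ∈ A, G.Adj v x → x = u ∨ x = w
    · exact edge_triangle IH hu hv huv hG hB hBA hBu hBv hw huw hvw h1
    by_cases h2 : ∀ x ∈ A, G.Adj u x → x = v ∨ x = w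
    · exact (edge_triangle IH hv hu huv.symm hG.swap hB hBA hBv hBu hw hvw huw h2).swap
    -- otherwise further neighbours `x` of `u` and `y` of `v` are unrelated
    push Not at h1 h2
    obtain ⟨y, hy, hvy, hyu, hyw⟩ := h1
    obtain ⟨x, hx, hux, hxv, hxw⟩ := h2
    exfalso
    have hBu' : u ∉ B := fun h => hBA u h hu
    have hBv' : v ∉ B := fun h => hBA v h hv
    have hBw' : w ∉ B := fun h => hBA w h hw
    have hBx' : x ∉ B := fun h => hBA x h hx
    have hBy' : y ∉ B := fun h => hBA y h hy
    have hvx : ¬ G.Adj v x := fun h =>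
      k23_one_set hout hB huv' (Ne.symm hxw) huw hvw hux h hBu' hBv' hBw' hBx' hBu hBv
    have huy : ¬ G.Adj u y := fun h =>
      k23_one_set hout hB huv' (Ne.symm hyw) huw hvw h hvy hBu' hBv' hBw' hBy' hBu hBv
    have hxy' : x ≠ y := fun h => hvx (h ▸ hvy)
    have hxy : ¬ G.Adj x y := fun h =>
      k23_sets hout (isConn_pair h) hB huv' huw hvw (by simp [hux.ne, Ne.symm hyu])
        (by simp [hvy.ne, Ne.symm hxv]) (by simp [Ne.symm hxw, Ne.symm hyw]) hBu' hBv' hBw'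
        (by simp [hBx', hBy']) ⟨x, by simp, hux⟩ ⟨y, by simp, hvy⟩ hBu hBv
    exact hG.unrel x y u v (.inl rfl) (.inr rfl)
      (.one ⟨hx, hxy', fun h => hxy h.symm⟩ ⟨hu, Ne.symm hyu, fun h => huy h.symm⟩ hux.symm)
      (.one ⟨hy, hxy'.symm, hxy⟩ ⟨hv, Ne.symm hxv, fun h => hvx h.symm⟩ hvy.symm)
  push Not at hw
  by_cases h1 : ∀ x ∈ A, G.Adj v x → x = u
  · exact edge_pendant IH hu hv huv hG h1
  by_cases h2 : ∀ x ∈ A, G.Adj u x → x = v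
  · exact (edge_pendant IH hv hu huv.symm hG.swap h2).swap
  push Not at h1 h2
  obtain ⟨y, hy, hvy, hyu⟩ := h1
  obtain ⟨x, hx, hux, hxv⟩ := h2
  have huy : ∀ y ∈ A, G.Adj v y → ¬ G.Adj u y := fun y hy h h' => hw y hy h' h
  have key : ∀ x ∈ A, ∀ y ∈ A, G.Adj u x → x ≠ v → G.Adj v y → y ≠ u → G.Adj x y := by
    intro x hx y hy hux hxv hvy hyu
    by_contra hxy
    have hxy' : x ≠ y := fun h => hw x hx hux (h ▸ hvy)
    exact hG.unrel x y u v (.inl rfl) (.inr rfl)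
      (.one ⟨hx, hxy', fun h => hxy h.symm⟩ ⟨hu, Ne.symm hyu, fun h => huy y hy hvy h.symm⟩
        hux.symm)
      (.one ⟨hy, hxy'.symm, hxy⟩ ⟨hv, Ne.symm hxv, fun h => hw x hx hux h.symm⟩ hvy.symm)
  have hxy := key x hx y hy hux hxv hvy hyu
  have hNu : ∀ z ∈ A, G.Adj u z → z = v ∨ z = x := by
    intro z hz huz
    by_contra! hcon
    exact k23_vertices hout (u := u) (v := y) (Ne.symm hyu) hcon.1 hcon.2 (Ne.symm hxv) huz
      (key z hz y hy huz hcon.1 hvy hyu).symm huv hvy.symm hux hxy.symm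
  have hNv : ∀ z ∈ A, G.Adj v z → z = u ∨ z = y := by
    intro z hz hvz
    by_contra! hcon
    exact k23_vertices hout (u := v) (v := x) (Ne.symm hxv) hcon.1 hcon.2 (Ne.symm hyu) hvz
      (key x hx z hz hux hxv hvz hcon.1) huv.symm hux.symm hvy hxy
  have hxu := hux.ne
  have hyv := hvy.ne
  have hA' : (A.erase u).erase v ⊂ A :=
    (Finset.erase_subset _ _).trans_ssubset (Finset.erase_ssubset hu)
  have hG' : Good G ((A.erase u).erase v) x y := by
    refine hG.trans hA'.1 (.inr hxy) (fun h => by simp at h) (fun h => by simp at h)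
      (fun a ha z hz hzA haz => ?_)
      ⟨u, .inl rfl, .one (.inl rfl) (.inr (by simp [hu])) hux.symm⟩
      ⟨v, .inr rfl, .one (.inl rfl) (.inr (by simp [hv])) hvy.symm⟩
    have ha' : a ≠ v ∧ a ≠ u ∧ a ∈ A := by simpa using ha
    have hz' : z = u ∨ z = v := by grind
    rcases hz' with rfl | rfl
    · exact .inl ((hNu a ha'.2.2 haz.symm).resolve_left ha'.1)
    · exact .inr ((hNv a ha'.2.2 haz.symm).resolve_left ha'.2.1)
  obtain ⟨b, hb, hub⟩ := hBu
  have hE := (IH _ hA').edge x (by grind) y (by grind) hxy hG' (insert v (insert u B))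
    ((hB.insert hb hub).insert (Set.mem_insert _ _) huv.symm) (by grind)
    ⟨u, by simp, hux.symm⟩ ⟨v, by simp, hvy.symm⟩
  have hS := hE.1.square (x := u) (y := v) (by grind) (by grind) hxy.ne (by simp) (by simp) huv
    (fun a ha => ⟨fun h => (hNu a (by grind) h).resolve_left (by grind), fun h => h ▸ hux⟩)
    (fun a ha => ⟨fun h => (hNv a (by grind) h).resolve_left (by grind), fun h => h ▸ hvy⟩)
  have e : insert v (insert u ((A.erase u).erase v)) = A := by grind
  rwa [e] at hS

end EdgeStep

/-! ### The inner face at a root with two neighbours -/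

section Core

variable {c : V}

omit [DecidableEq V]

/-- Neighbours of two neighbours of the root cannot be unrelated. -/
theorem Good.link (hG : Good G A v v) (hv : v ∈ A) (hx : x ∈ A) (hy : y ∈ A) (hvx : G.Adj v x)
    (hvy : G.Adj v y) (ha : a ∈ A) (hva : Off G v a) (hb : b ∈ A) (hvb : Off G v b)
    (hxa : G.Adj x a) (hyb : G.Adj y b) : a = b ∨ G.Adj a b ∨ G.Adj a y ∨ G.Adj b x := by
  by_contra! hcon
  obtain ⟨h1, h2, h3, h4⟩ := hcon
  have hay : a ≠ y := fun h => hva.2 (h ▸ hvy)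
  have hbx : b ≠ x := fun h => hvb.2 (h ▸ hvx)
  exact hG.unrel a b v v (.inl rfl) (.inl rfl)
    (.two ⟨ha, h1, fun h => h2 h.symm⟩ ⟨hx, hbx.symm, h4⟩
      ⟨hv, hvb.1.symm, fun h => hvb.2 h.symm⟩ hxa.symm hvx.symm)
    (.two ⟨hb, Ne.symm h1, h2⟩ ⟨hy, hay.symm, h3⟩
      ⟨hv, hva.1.symm, fun h => hva.2 h.symm⟩ hyb.symm hvy.symm)

/-- Passing to a part all of whose attachments to the rest are adjacent to the root. -/
theorem Good.restrict {A' : Finset V} (hG : Good G A v v) (hA : A' ⊆ A) (hv : v ∈ A')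
    (bd : ∀ a ∈ A', ∀ x ∈ A, x ∉ A' → G.Adj a x → a = v ∨ G.Adj a v) : Good G A' v v := by
  refine ⟨fun Y hY hne h1 h2 => ?_, fun a b r s hr hs i1 i2 => hG.unrel a b r s hr hs
    (i1.mono fun x hx => ⟨hA hx.1, hx.2⟩) (i2.mono fun x hx => ⟨hA hx.1, hx.2⟩)⟩
  obtain ⟨y, hy, z, hz, hzY, hyz⟩ := hG.reach Y (hY.trans hA) hne h1 h2
  by_cases hzA : z ∈ A'
  · exact ⟨y, hy, z, hzA, hzY, hyz⟩
  · rcases bd y (hY hy) z hz hzA hyz with rfl | h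
    exacts [absurd hy h1, ⟨y, hy, v, hv, h1, h⟩]

end Core

/-- The root `v` has exactly the neighbours `x`, `y`, and they are adjacent. -/
theorem root_triangle (IH : ∀ A', A' ⊂ A → Claims G A') (hv : v ∈ A) (hx : x ∈ A) (hy : y ∈ A)
    (hG : Good G A v v) (hvx : G.Adj v x) (hvy : G.Adj v y)
    (hN : ∀ z ∈ A, G.Adj v z → z = x ∨ z = y) (hxy : G.Adj x y) : ERep G A v y := by
  have hvx' := hvx.ne
  have hvy' := hvy.ne
  have h1 : Good G (A.erase v) x y := by
    refine hG.trans (Finset.erase_subset _ _) (.inr hxy)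
      (fun h => absurd rfl (Finset.ne_of_mem_erase h))
      (fun h => absurd rfl (Finset.ne_of_mem_erase h)) (fun a ha z hz hzA haz => ?_)
      ⟨v, .inl rfl, .one (.inl rfl) (.inr (by simp [hv])) hvx.symm⟩
      ⟨v, .inr rfl, .one (.inl rfl) (.inr (by simp [hv])) hvy.symm⟩
    obtain rfl : z = v := by grind
    exact hN a (Finset.mem_of_mem_erase ha) haz.symm
  have h2 := (IH _ (Finset.erase_ssubset hv)).edge x (by grind) y (by grind) hxy h1 {v}
    (isConn_singleton v) (by simp) ⟨v, rfl, hvx.symm⟩ ⟨v, rfl, hvy.symm⟩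
  have h3 := h2.2.2.triangle (v := v) (by grind) hxy.ne' (by simp) (fun z hz =>
    ⟨fun h => (hN z (Finset.mem_of_mem_erase hz) h).symm, by rintro (rfl | rfl) <;> assumption⟩)
  rw [Finset.insert_erase hv] at h3
  exact h3.swap

/-- The root `v` lies on a quadrangle `v x a y`, and `y` has no other neighbours. -/
theorem root_square (IH : ∀ A', A' ⊂ A → Claims G A') (hv : v ∈ A) (hx : x ∈ A) (hy : y ∈ A)
    (hG : Good G A v v) (hvx : G.Adj v x) (hvy : G.Adj v y)
    (hN : ∀ z ∈ A, G.Adj v z → z = x ∨ z = y) (hxy : x ≠ y) (ha : a ∈ A) (hva : Off G v a)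
    (hxa : G.Adj x a) (hya : G.Adj y a) (hNy : ∀ z ∈ A, G.Adj y z → z = v ∨ z = a) :
    ERep G A v y := by
  have hvx' := hvx.ne
  have hvy' := hvy.ne
  have hya' := hya.ne
  have hva' := hva.1
  have hA' : (A.erase v).erase y ⊂ A :=
    (Finset.erase_subset _ _).trans_ssubset (Finset.erase_ssubset hv)
  have h1 : Good G ((A.erase v).erase y) x a := by
    refine hG.trans hA'.1 (.inr hxa) (fun h => by simp at h) (fun h => by simp at h)
      (fun c hc z hz hzA hcz => ?_)
      ⟨v, .inl rfl, .one (.inl rfl) (.inr (by simp [hv])) hvx.symm⟩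
      ⟨v, .inr rfl, .two (.inl rfl) (.inr (by simp [hy])) (.inr (by simp [hv])) hya.symm hvy.symm⟩
    have hc' : c ≠ y ∧ c ≠ v ∧ c ∈ A := by simpa using hc
    have hz' : z = v ∨ z = y := by grind
    rcases hz' with rfl | rfl
    · exact .inl ((hN c hc'.2.2 hcz.symm).resolve_right hc'.1)
    · exact .inr ((hNy c hc'.2.2 hcz.symm).resolve_left hc'.2.1)
  have h2 := (IH _ hA').edge x (by grind) a (by grind) hxa h1 {v, y} (isConn_pair hvy) (by simp)
    ⟨v, by simp, hvx.symm⟩ ⟨y, by simp, hya.symm⟩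
  have h3 := h2.1.square (x := v) (y := y) (by grind) (by grind) hxa.ne (by simp) (by simp) hvy
    (fun c hc => ⟨fun h => (hN c (by grind) h).resolve_right (by grind), fun h => h ▸ hvx⟩)
    (fun c hc => ⟨fun h => (hNy c (by grind) h).resolve_left (by grind), fun h => h ▸ hya⟩)
  have e : insert y (insert v ((A.erase v).erase y)) = A := by grind
  rwa [e] at h3

/-- The root `v` lies on a quadrangle `v x a y`, and `x` and `a` have no other neighbours. -/
theorem root_quad (IH : ∀ A', A' ⊂ A → Claims G A') (hv : v ∈ A) (hx : x ∈ A) (hy : y ∈ A)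
    (hG : Good G A v v) (hvx : G.Adj v x) (hvy : G.Adj v y)
    (hN : ∀ z ∈ A, G.Adj v z → z = x ∨ z = y) (hxy : x ≠ y) (ha : a ∈ A) (hva : Off G v a)
    (hxa : G.Adj x a) (hya : G.Adj y a) (hNx : ∀ z ∈ A, G.Adj x z → z = v ∨ z = a)
    (hNa : ∀ z ∈ A, G.Adj a z → z = x ∨ z = y) : Tri G A v y ∧ Weak G A v y := by
  have hvx' := hvx.ne
  have hvy' := hvy.ne
  have hya' := hya.ne
  have hxa' := hxa.ne
  have hva' := hva.1
  have hA' : ((A.erase v).erase x).erase a ⊂ A :=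
    ((Finset.erase_subset _ _).trans (Finset.erase_subset _ _)).trans_ssubset
      (Finset.erase_ssubset hv)
  have h1 : Good G (((A.erase v).erase x).erase a) y y := by
    refine hG.trans hA'.1 (.inl rfl) (fun h => by simp at h) (fun h => by simp at h)
      (fun c hc z hz hzA hcz => ?_)
      ⟨v, .inl rfl, .one (.inl rfl) (.inr (by simp [hv])) hvy.symm⟩
      ⟨v, .inl rfl, .one (.inl rfl) (.inr (by simp [hv])) hvy.symm⟩
    have hc' : c ≠ a ∧ c ≠ x ∧ c ≠ v ∧ c ∈ A := by simpa using hc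
    have hz' : z = v ∨ z = x ∨ z = a := by grind
    rcases hz' with rfl | rfl | rfl
    · exact .inl ((hN c hc'.2.2.2 hcz.symm).resolve_left hc'.2.1)
    · rcases hNx c hc'.2.2.2 hcz.symm with h | h
      exacts [absurd h hc'.2.2.1, absurd h hc'.1]
    · exact .inl ((hNa c hc'.2.2.2 hcz.symm).resolve_left hc'.2.1)
  have h2 := (IH _ hA').single y (by grind) h1
  have h3 := h2.quad (a := a) (y := x) (v := v) (by grind) (by simp) (by simp) (by simp) hxa.symm
    hvx.symm (fun h => hva.2 h.symm) hva.1
    (fun c hc => ⟨fun h => (hNa c (by grind) h).resolve_left (by grind), fun h => h ▸ hya.symm⟩)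
    (fun c hc h => by rcases hNx c (by grind) h with rfl | rfl <;> simp at hc)
    (fun c hc => ⟨fun h => (hN c (by grind) h).resolve_left (by grind), fun h => h ▸ hvy⟩)
  have e : insert v (insert x (insert a (((A.erase v).erase x).erase a))) = A := by grind
  rw [e] at h3
  exact ⟨h3.2, h3.1.swap⟩

/-- The root `v` lies on a pentagon `v x a b y`, and only `a` has further neighbours. -/
theorem root_pentagon (IH : ∀ A', A' ⊂ A → Claims G A') (hv : v ∈ A) (hx : x ∈ A) (hy : y ∈ A)
    (hG : Good G A v v) (hvx : G.Adj v x) (hvy : G.Adj v y)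
    (hN : ∀ z ∈ A, G.Adj v z → z = x ∨ z = y) (hxy : x ≠ y) (nxy : ¬ G.Adj x y) (ha : a ∈ A)
    (hva : Off G v a) (hb : b ∈ A) (hvb : Off G v b) (hxa : G.Adj x a) (hyb : G.Adj y b)
    (hab : G.Adj a b) (hNx : ∀ z ∈ A, G.Adj x z → z = v ∨ z = a)
    (hNy : ∀ z ∈ A, G.Adj y z → z = v ∨ z = b) (hNb : ∀ z ∈ A, G.Adj b z → z = y ∨ z = a) :
    SRep G A v := by
  have hvx' := hvx.ne
  have hvy' := hvy.ne
  have hxa' := hxa.ne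
  have hyb' := hyb.ne
  have hab' := hab.ne
  have hva' := hva.1
  have hvb' := hvb.1
  have hbx : b ≠ x := fun h => hvb.2 (h ▸ hvx)
  have hay : a ≠ y := fun h => hva.2 (h ▸ hvy)
  have nbx : ¬ G.Adj b x := fun h => by rcases hNb x hx h with h | h <;> grind
  set A' := (((A.erase v).erase y).erase x).erase b with hdef
  have hA' : A' ⊂ A :=
    ((Finset.erase_subset _ _).trans ((Finset.erase_subset _ _).trans
      (Finset.erase_subset _ _))).trans_ssubset (Finset.erase_ssubset hv)
  have h1 : Good G A' a a := by
    have c1 : ∃ r, (r = v ∨ r = v) ∧ Rch G (fun z => z = a ∨ z ∈ A ∧ z ∉ A') a r :=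
      ⟨v, .inl rfl, .two (.inl rfl) (.inr (by simp [hdef, hx])) (.inr (by simp [hdef, hv]))
        hxa.symm hvx.symm⟩
    refine hG.trans hA'.1 (.inl rfl) (fun h => by simp [hdef] at h) (fun h => by simp [hdef] at h)
      (fun c hc z hz hzA hcz => ?_) c1 c1
    have hc' : c ≠ b ∧ c ≠ x ∧ c ≠ y ∧ c ≠ v ∧ c ∈ A := by simpa [hdef] using hc
    have hz' : z = v ∨ z = x ∨ z = y ∨ z = b := by grind
    rcases hz' with rfl | rfl | rfl | rfl
    · have := hN c hc'.2.2.2.2 hcz.symm; tauto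
    · have := hNx c hc'.2.2.2.2 hcz.symm; tauto
    · have := hNy c hc'.2.2.2.2 hcz.symm; tauto
    · have := hNb c hc'.2.2.2.2 hcz.symm; tauto
  have h2 := (IH _ hA').single a (by grind) h1
  have h3 := h2.pentagon (b := b) (x := x) (y := y) (v := v) (by grind) (by simp [hdef])
    (by simp [hdef]) (by simp [hdef]) (by simp [hdef]) hbx hyb.symm hvx hvy hvb.1.symm hxy nbx nxy
    hvb.2
    (fun c hc => ⟨fun h => (hNb c (by grind) h).resolve_left (by grind), fun h => h ▸ hab.symm⟩)
    (fun c hc => ⟨fun h => (hNx c (by grind) h).resolve_left (by grind), fun h => h ▸ hxa⟩)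
    (fun c hc h => by rcases hNy c (by grind) h with rfl | rfl <;> simp [hdef] at hc)
    (fun c hc h => by rcases hN c (by grind) h with rfl | rfl <;> simp [hdef] at hc)
  have e : insert v (insert y (insert x (insert b A'))) = A := by grind
  rwa [e] at h3

/-! ### Ears on the inner face -/

/-- `q` is a vertex outside `A` which forms a triangle with `v` and `y` and has no neighbour in `A`
other than these two. -/
structure Ear (G : SimpleGraph V) (A : Finset V) (v y q : V) : Prop where
  notMem : q ∉ A
  left : G.Adj v q
  right : G.Adj y q
  only : ∀ z ∈ A, G.Adj q z → z = v ∨ z = y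

/-- The inner face at the root `v`, which has exactly the neighbours `x` and `y`, is a quadrangle
`v x a y`. -/
theorem root_four (hout : IsOuterplanar G) (hat : ATFree G) (IH : ∀ A', A' ⊂ A → Claims G A')
    (hv : v ∈ A) (hx : x ∈ A) (hy : y ∈ A) (hG : Good G A v v) (hvx : G.Adj v x)
    (hvy : G.Adj v y) (hN : ∀ z ∈ A, G.Adj v z → z = x ∨ z = y) (hxy : x ≠ y)
    (nxy : ¬ G.Adj x y) (ha : a ∈ A) (hva : Off G v a) (hxa : G.Adj x a) (hya : G.Adj y a) :
    (Tri G A v y ∧ Weak G A v y) ∨ (SRep G A v ∧ ∀ q, ¬ Ear G A v y q) := by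
  have hvx' := hvx.ne
  have hvy' := hvy.ne
  have hya' := hya.ne
  have hxa' := hxa.ne
  have hva' := hva.1
  by_cases h1 : ∀ z ∈ A, G.Adj y z → z = v ∨ z = a
  · have h := root_square IH hv hx hy hG hvx hvy hN hxy ha hva hxa hya h1
    exact .inl ⟨h.2.1, h.1⟩
  push Not at h1
  obtain ⟨p, hp, hyp, hpv, hpa⟩ := h1
  have hpx : p ≠ x := fun h => nxy (h ▸ hyp.symm)
  have hvp : Off G v p := ⟨hpv, fun h => by
    rcases hN p hp h with h | h
    exacts [hpx h, hyp.ne h.symm]⟩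
  have hNx : ∀ z ∈ A, G.Adj x z → z = v ∨ z = a := by
    intro z hz hxz
    by_contra! hcon
    have hzy : z ≠ y := fun h => nxy (h ▸ hxz)
    have hvz : Off G v z := ⟨hcon.1, fun h => by
      rcases hN z hz h with h | h
      exacts [hxz.ne h.symm, hzy h]⟩
    rcases hG.link hv hx hy hvx hvy hz hvz hp hvp hxz hyp with h | h | h | h
    · subst h
      exact k23_vertices hout hxy hva'.symm (Ne.symm hpv) (Ne.symm hpa) hvx.symm hvy.symm hxa hya
        hxz hyp
    · exact k23_one_set hout (isConn_pair h) hxy hva'.symm hvx.symm hvy.symm hxa hya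
        (by simp [hxz.ne, Ne.symm hpx]) (by simp [hyp.ne, Ne.symm hzy])
        (by simp [Ne.symm hcon.1, Ne.symm hpv]) (by simp [Ne.symm hcon.2, Ne.symm hpa])
        ⟨z, by simp, hxz⟩ ⟨p, by simp, hyp⟩
    · exact k23_vertices hout hxy hva'.symm (Ne.symm hcon.1) (Ne.symm hcon.2) hvx.symm hvy.symm
        hxa hya hxz h.symm
    · exact k23_vertices hout hxy hva'.symm (Ne.symm hpv) (Ne.symm hpa) hvx.symm hvy.symm hxa hya
        h.symm hyp
  by_cases hq : ∃ q, Ear G A v y q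
  · obtain ⟨q, hqA, hvq, hyq, hqN⟩ := hq
    have hqx : q ≠ x := fun h => hqA (h ▸ hx)
    have nqx : ¬ G.Adj q x := fun h => by
      rcases hqN x hx h with h | h
      exacts [hvx' h.symm, hxy h]
    have hqz : ∀ z ∈ A, Off G v z → Off G q z := fun z hz hvz =>
      ⟨fun h => hqA (h ▸ hz), fun h => by
        rcases hqN z hz h with h | h
        exacts [hvz.1 h, hvz.2 (h ▸ hvy)]⟩
    have off_symm : ∀ {s t : V}, Off G s t → Off G t s := fun h =>
      ⟨h.1.symm, fun h' => h.2 h'.symm⟩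
    have hxp : Off G x p := ⟨hpx, fun h => by
      rcases hNx p hp h with h | h
      exacts [hpv h, hpa h]⟩
    have hxq : Off G x q := ⟨hqx, fun h => nqx h.symm⟩
    have hxy2 : Off G x y := ⟨hxy.symm, nxy⟩
    -- `p` and `a` are not adjacent, because of the triple `p`, `q`, `x`
    have npa : ¬ G.Adj p a := fun h => at_false hat (a := p) (b := q) (c := x)
      (.two hxp hxy2 hxq hyp.symm hyq)
      (.two (off_symm (hqz p hp hvp)) (off_symm hvp) (off_symm hxp) hvq.symm hvx)
      (.two (hqz p hp hvp) (hqz a ha hva) (off_symm hxq) h hxa.symm)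
    have hNa : ∀ z ∈ A, G.Adj a z → z = x ∨ z = y := by
      intro b hb hab
      by_contra! hcon
      have hbv : b ≠ v := fun h => hva.2 (h ▸ hab.symm)
      have hvb : Off G v b := ⟨hbv, fun h => by
        rcases hN b hb h with h | h
        exacts [hcon.1 h, hcon.2 h]⟩
      have hxb : Off G x b := ⟨hcon.1, fun h => by
        rcases hNx b hb h with h | h
        exacts [hbv h, hab.ne h.symm]⟩
      by_cases hby : G.Adj b y
      · exact at_false hat (a := b) (b := q) (c := x)
          (.two hxb hxy2 hxq hby hyq)
          (.two (off_symm (hqz b hb hvb)) (off_symm hvb) (off_symm hxb) hvq.symm hvx)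
          (.two (hqz b hb hvb) (hqz a ha hva) (off_symm hxq) hab.symm hxa.symm)
      by_cases hbp : G.Adj p b
      · exact at_false hat (a := p) (b := q) (c := x)
          (.two hxp hxy2 hxq hyp.symm hyq)
          (.two (off_symm (hqz p hp hvp)) (off_symm hvp) (off_symm hxp) hvq.symm hvx)
          (.three (hqz p hp hvp) (hqz b hb hvb) (hqz a ha hva) (off_symm hxq) hbp hab.symm
            hxa.symm)
      have hpb : Off G p b := ⟨fun h => hby (h ▸ hyp.symm), hbp⟩
      exact hG.unrel p b v v (.inl rfl) (.inl rfl)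
        (.two ⟨hp, off_symm hpb⟩ ⟨hy, Ne.symm hcon.2, hby⟩ ⟨hv, off_symm hvb⟩ hyp.symm hvy.symm)
        (.three ⟨hb, hpb⟩ ⟨ha, Ne.symm hpa, npa⟩ ⟨hx, off_symm hxp⟩ ⟨hv, off_symm hvp⟩ hab.symm
          hxa.symm hvx.symm)
    exact .inl (root_quad IH hv hx hy hG hvx hvy hN hxy ha hva hxa hya hNx hNa)
  · push Not at hq
    exact .inr ⟨(root_square IH hv hy hx hG hvy hvx (fun z hz h => (hN z hz h).symm) hxy.symm ha
      hva hya hxa hNx).single hv, hq⟩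

/-- The inner face at the root `v`, which has exactly the neighbours `x` and `y`, is a pentagon. -/
theorem root_five (hout : IsOuterplanar G) (hat : ATFree G) (IH : ∀ A', A' ⊂ A → Claims G A')
    (hv : v ∈ A) (hx : x ∈ A) (hy : y ∈ A) (hG : Good G A v v) (hvx : G.Adj v x)
    (hvy : G.Adj v y) (hN : ∀ z ∈ A, G.Adj v z → z = x ∨ z = y) (hxy : x ≠ y)
    (nxy : ¬ G.Adj x y) (ha : a ∈ A) (hva : Off G v a) (hb : b ∈ A) (hvb : Off G v b)
    (hxa : G.Adj x a) (hyb : G.Adj y b)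
    (hno : ∀ z ∈ A, Off G v z → G.Adj x z → ¬ G.Adj y z) :
    SRep G A v ∧ ∀ q, ¬ Ear G A v y q := by
  have hvx' := hvx.ne
  have hvy' := hvy.ne
  have hxa' := hxa.ne
  have hyb' := hyb.ne
  have off_symm : ∀ {s t : V}, Off G s t → Off G t s := fun h =>
    ⟨h.1.symm, fun h' => h.2 h'.symm⟩
  have key : ∀ a ∈ A, Off G v a → ∀ b ∈ A, Off G v b → G.Adj x a → G.Adj y b → G.Adj a b := by
    intro a ha hva b hb hvb hxa hyb
    rcases hG.link hv hx hy hvx hvy ha hva hb hvb hxa hyb with h | h | h | h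
    · exact absurd hyb (h ▸ hno a ha hva hxa)
    · exact h
    · exact absurd h.symm (hno a ha hva hxa)
    · exact absurd hyb (hno b hb hvb h.symm)
  have hab := key a ha hva b hb hvb hxa hyb
  have nya : ¬ G.Adj y a := hno a ha hva hxa
  have nxb : ¬ G.Adj x b := fun h => hno b hb hvb h hyb
  have hay : a ≠ y := fun h => nxy (h ▸ hxa)
  have hbx : b ≠ x := fun h => nxy (h ▸ hyb.symm)
  have hNx : ∀ z ∈ A, G.Adj x z → z = v ∨ z = a := by
    intro z hz hxz
    by_contra! hcon
    have hzy : z ≠ y := fun h => nxy (h ▸ hxz)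
    have hvz : Off G v z := ⟨hcon.1, fun h => by
      rcases hN z hz h with h | h
      exacts [hxz.ne h.symm, hzy h]⟩
    exact k23_one_set hout (isConn_pair hvy) hbx.symm hcon.2 hxz
      (key z hz hvz b hb hvb hxz hyb).symm hxa hab.symm (by simp [hvx'.symm, hxy])
      (by simp [hvb.1, hyb'.symm]) (by simp [hcon.1, hzy]) (by simp [hva.1, hay])
      ⟨v, by simp, hvx.symm⟩ ⟨y, by simp, hyb.symm⟩
  have hNy : ∀ z ∈ A, G.Adj y z → z = v ∨ z = b := by
    intro z hz hyz
    by_contra! hcon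
    have hzx : z ≠ x := fun h => nxy (h ▸ hyz.symm)
    have hvz : Off G v z := ⟨hcon.1, fun h => by
      rcases hN z hz h with h | h
      exacts [hzx h, hyz.ne h.symm]⟩
    exact k23_one_set hout (isConn_pair hvx) hay.symm hcon.2 hyz
      (key a ha hva z hz hvz hxa hyz) hyb hab (by simp [hvy'.symm, hxy.symm])
      (by simp [hva.1, hxa'.symm]) (by simp [hcon.1, hzx]) (by simp [hvb.1, hbx])
      ⟨v, by simp, hvy.symm⟩ ⟨x, by simp, hxa.symm⟩
  have offx : Off G x y := ⟨hxy.symm, nxy⟩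
  refine ⟨?_, fun q ⟨hqA, hvq, hyq, hqN⟩ => ?_⟩
  · by_cases h1 : ∀ z ∈ A, G.Adj b z → z = y ∨ z = a
    · exact root_pentagon IH hv hx hy hG hvx hvy hN hxy nxy ha hva hb hvb hxa hyb hab hNx hNy h1
    by_cases h2 : ∀ z ∈ A, G.Adj a z → z = x ∨ z = b
    · exact root_pentagon IH hv hy hx hG hvy hvx (fun z hz h => (hN z hz h).symm) hxy.symm
        (fun h => nxy h.symm) hb hvb ha hva hyb hxa hab.symm hNy hNx h2
    push Not at h1 h2
    obtain ⟨p', hp', hbp', hpy', hpa'⟩ := h1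
    obtain ⟨p, hp, hap, hpx, hpb⟩ := h2
    exfalso
    have far : ∀ z ∈ A, z ≠ a → z ≠ b → z ≠ x → z ≠ y → z ≠ v →
        Off G v z ∧ Off G x z ∧ Off G y z := fun z hz za zb zx zy zv =>
      ⟨⟨zv, fun h => (hN z hz h).elim zx zy⟩, ⟨zx, fun h => (hNx z hz h).elim zv za⟩,
        ⟨zy, fun h => (hNy z hz h).elim zv zb⟩⟩
    obtain ⟨pv, px, py⟩ := far p hp hap.ne' hpb hpx (fun h => nya (h ▸ hap.symm))
      (fun h => hva.2 (h ▸ hap.symm))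
    obtain ⟨pv', px', py'⟩ := far p' hp' hpa' hbp'.ne' (fun h => nxb (h ▸ hbp'.symm)) hpy'
      (fun h => hvb.2 (h ▸ hbp'.symm))
    -- a common neighbour of `a` and `b` would give an asteroidal triple with `x` and `y`
    have common : ∀ z, Off G v z → Off G x z → Off G y z → G.Adj a z → G.Adj b z → False :=
      fun z zv zx zy haz hbz => at_false hat (a := z) (b := x) (c := y)
        (.two zy ⟨hay, nya⟩ (off_symm offx) haz.symm hxa.symm)
        (.two (off_symm zx) (off_symm zv) (off_symm zy) hvx.symm hvy)
        (.two zx ⟨hbx, nxb⟩ offx hbz.symm hyb.symm)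
    by_cases hpb2 : G.Adj b p
    · exact common p pv px py hap hpb2
    by_cases hpa2 : G.Adj a p'
    · exact common p' pv' px' py' hpa2 hbp'
    by_cases hpp : G.Adj p p'
    · exact at_false hat (a := p) (b := x) (c := y)
        (.two py ⟨hay, nya⟩ (off_symm offx) hap.symm hxa.symm)
        (.two (off_symm px) (off_symm pv) (off_symm py) hvx.symm hvy)
        (.three px px' ⟨hbx, nxb⟩ offx hpp hbp'.symm hyb.symm)
    have hpp' : Off G p p' := ⟨fun h => hpb2 (h ▸ hbp'), hpp⟩
    exact hG.unrel p p' v v (.inl rfl) (.inl rfl)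
      (.three ⟨hp, off_symm hpp'⟩ ⟨ha, Ne.symm hpa', fun h => hpa2 h.symm⟩ ⟨hx, off_symm px'⟩
        ⟨hv, off_symm pv'⟩ hap.symm hxa.symm hvx.symm)
      (.three ⟨hp', hpp'⟩ ⟨hb, Ne.symm hpb, fun h => hpb2 h.symm⟩ ⟨hy, off_symm py⟩
        ⟨hv, off_symm pv⟩ hbp'.symm hyb.symm hvy.symm)
  · have hqz : ∀ z ∈ A, z ≠ v → z ≠ y → Off G q z := fun z hz h1 h2 =>
      ⟨fun h => hqA (h ▸ hz), fun h => (hqN z hz h).elim h1 h2⟩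
    have qx := hqz x hx hvx'.symm hxy
    have qb := hqz b hb hvb.1 hyb'.symm
    have xb : Off G x b := ⟨hbx, nxb⟩
    exact at_false hat (a := q) (b := b) (c := x)
      (.two (off_symm qx) offx xb hyq.symm hyb)
      (.two qb (hqz a ha hva.1 hay) qx hab.symm hxa.symm)
      (.two (off_symm qb) (off_symm hvb) (off_symm xb) hvq.symm hvx)

/-- The root `v` has exactly the neighbours `x` and `y` in `A`, and both have neighbours away from
`v` which are joined to each other. -/
theorem root_core (hout : IsOuterplanar G) (hat : ATFree G) (IH : ∀ A', A' ⊂ A → Claims G A')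
    (hv : v ∈ A) (hx : x ∈ A) (hy : y ∈ A) (hG : Good G A v v) (hvx : G.Adj v x)
    (hvy : G.Adj v y) (hN : ∀ z ∈ A, G.Adj v z → z = x ∨ z = y) (hxy : x ≠ y)
    (ha : a ∈ A) (hva : Off G v a) (hb : b ∈ A) (hvb : Off G v b)
    (hxa : G.Adj x a) (hyb : G.Adj y b) :
    (Tri G A v y ∧ Weak G A v y) ∨ (SRep G A v ∧ ∀ q, ¬ Ear G A v y q) := by
  by_cases nxy : G.Adj x y
  · have h := root_triangle IH hv hx hy hG hvx hvy hN nxy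
    exact .inl ⟨h.2.1, h.1⟩
  by_cases hc : ∃ z ∈ A, Off G v z ∧ G.Adj x z ∧ G.Adj y z
  · obtain ⟨z, hz, hvz, hxz, hyz⟩ := hc
    exact root_four hout hat IH hv hx hy hG hvx hvy hN hxy nxy hz hvz hxz hyz
  · push Not at hc
    exact .inr (root_five hout hat IH hv hx hy hG hvx hvy hN hxy nxy ha hva hb hvb hxa hyb hc)

/-! ### A single root -/

section SingleStep

variable {c d : V}

/-- The neighbour `w` of the root `v` has itself a neighbour in `A` at distance two from `v`. -/
def Deep (G : SimpleGraph V) (A : Finset V) (v w : V) : Prop :=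
  w ∈ A ∧ G.Adj v w ∧ ∃ a ∈ A, Off G v a ∧ G.Adj w a

omit [DecidableEq V] in
theorem Off.symm {s t : V} (h : Off G s t) : Off G t s := ⟨h.1.symm, fun h' => h.2 h'.symm⟩

omit [DecidableEq V] in
/-- Two deep neighbours of the root are joined by an edge-or-vertex away from the root. -/
theorem deep_join (hG : Good G A v v) (hv : v ∈ A) (hx : Deep G A v x) (hy : Deep G A v y) :
    ∃ a ∈ A, ∃ b ∈ A, Off G v a ∧ Off G v b ∧ G.Adj x a ∧ G.Adj y b ∧ (a = b ∨ G.Adj a b) := by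
  obtain ⟨hx, hvx, a, ha, hva, hxa⟩ := hx
  obtain ⟨hy, hvy, b, hb, hvb, hyb⟩ := hy
  rcases hG.link hv hx hy hvx hvy ha hva hb hvb hxa hyb with h | h | h | h
  · exact ⟨a, ha, b, hb, hva, hvb, hxa, hyb, .inl h⟩
  · exact ⟨a, ha, b, hb, hva, hvb, hxa, hyb, .inr h⟩
  · exact ⟨a, ha, a, ha, hva, hva, hxa, h.symm, .inl rfl⟩
  · exact ⟨b, hb, b, hb, hvb, hvb, h.symm, hyb, .inl rfl⟩

omit [DecidableEq V] in
theorem isConn_pair' (h : a = b ∨ G.Adj a b) : IsConn G {a, b} := by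
  rcases h with rfl | h
  · simpa using isConn_singleton (G := G) a
  · exact isConn_pair h

omit [DecidableEq V] in
/-- At most two neighbours of the root are deep, for three of them would yield a `K_{2,3}` minor. -/
theorem deep_three (hout : IsOuterplanar G) (hG : Good G A v v) (hv : v ∈ A) (hx : Deep G A v x)
    (hy : Deep G A v y) (hw : Deep G A v w) (hxy : x ≠ y) (hxw : x ≠ w) (hyw : y ≠ w) : False := by
  obtain ⟨a, ha, b, hb, hva, hvb, hxa, hyb, hab⟩ := deep_join hG hv hx hy
  obtain ⟨hx, hvx, -⟩ := hx
  obtain ⟨hy, hvy, -⟩ := hy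
  obtain ⟨hw, hvw, c, hc, hvc, hwc⟩ := hw
  have fin : ∀ C : Set V, IsConn G C → (∀ z ∈ C, Off G v z) → (∃ z ∈ C, G.Adj z x) →
      (∃ z ∈ C, G.Adj z y) → (∃ z ∈ C, G.Adj z w) → False := fun C hC hCv h1 h2 h3 =>
    k23_star hout hC hxy hxw hyw hvx hvy hvw (fun h => (hCv v h).1 rfl)
      (fun h => (hCv x h).2 hvx) (fun h => (hCv y h).2 hvy) (fun h => (hCv w h).2 hvw) h1 h2 h3
  have hX := isConn_pair' hab
  have hXv : ∀ z ∈ ({a, b} : Set V), Off G v z := by rintro z (rfl | rfl) <;> assumption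
  have fin2 : ∀ z ∈ ({a, b} : Set V), G.Adj z c → False := fun z hz hzc =>
    fin (insert c {a, b}) (hX.insert hz hzc.symm)
      (by rintro z (rfl | hz); exacts [hvc, hXv z hz]) ⟨a, by simp, hxa.symm⟩
      ⟨b, by simp, hyb.symm⟩ ⟨c, by simp, hwc.symm⟩
  have fin3 : ∀ z ∈ ({a, b} : Set V), G.Adj z w → False := fun z hz hzw =>
    fin {a, b} hX hXv ⟨a, by simp, hxa.symm⟩ ⟨b, by simp, hyb.symm⟩ ⟨z, hz, hzw⟩
  have i1 : G.Adj c x := by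
    rcases hG.link hv hx hw hvx hvw ha hva hc hvc hxa hwc with h | h | h | h
    · exact (fin3 a (by simp) (h ▸ hwc.symm)).elim
    · exact (fin2 a (by simp) h).elim
    · exact (fin3 a (by simp) h).elim
    · exact h
  have i2 : G.Adj c y := by
    rcases hG.link hv hy hw hvy hvw hb hvb hc hvc hyb hwc with h | h | h | h
    · exact (fin3 b (by simp) (h ▸ hwc.symm)).elim
    · exact (fin2 b (by simp) h).elim
    · exact (fin3 b (by simp) h).elim
    · exact h
  exact fin {c} (isConn_singleton c) (by rintro z rfl; exact hvc) ⟨c, rfl, i1⟩ ⟨c, rfl, i2⟩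
    ⟨c, rfl, hwc.symm⟩

/-- No neighbour of the root is deep, so everything is a forest of neighbours of the root. -/
theorem single_none [Fintype V] (hout : IsOuterplanar G) (hv : v ∈ A) (hG : Good G A v v)
    (hD : ∀ w, ¬ Deep G A v w) : SRep G A v := by
  have hstar : ∀ a ∈ A, a ≠ v → G.Adj v a := by
    classical
    by_contra! hcon
    obtain ⟨a, ha, hav, nav⟩ := hcon
    obtain ⟨y, hy, z, hz, hzY, hyz⟩ := hG.reach (A.filter fun x => Off G v x)
      (Finset.filter_subset _ _) ⟨a, Finset.mem_filter.2 ⟨ha, hav, nav⟩⟩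
      (fun h => (Finset.mem_filter.1 h).2.1 rfl) (fun h => (Finset.mem_filter.1 h).2.1 rfl)
    rw [Finset.mem_filter] at hy
    have h1 : ¬ Off G v z := fun h => hzY (Finset.mem_filter.2 ⟨hz, h⟩)
    have h2 : z ≠ v := fun h => hy.2.2 (h ▸ hyz.symm)
    have h3 : G.Adj v z := by
      by_contra h3
      exact h1 ⟨h2, h3⟩
    exact hD z ⟨hz, h3, y, hy.1, hy.2, hyz.symm⟩
  have := (SRep.add_forest hout _ {v} (A.erase v) v rfl (by simp) (by simp)
    (fun q hq => hstar q (Finset.mem_of_mem_erase hq) (Finset.ne_of_mem_erase hq))).1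
    (.singleton v) (by simp)
  have e : {v} ∪ A.erase v = A := by grind
  rwa [e] at this

/-- The root `v` and `w` have the common neighbours `q₁`, `q₂`, of which `q₂` has no further
neighbours. The set `A'` is what hangs at `w`. -/
theorem single_one_aux [Fintype V] (hout : IsOuterplanar G) {A' : Finset V} {q₁ q₂ : V}
    (hR : SRep G A' w)
    (hw : w ∈ A') (hvA : v ∉ A') (h1A : q₁ ∉ A') (h2A : q₂ ∉ A') (hvw : G.Adj v w)
    (hNv : ∀ z ∈ A', G.Adj v z → z = w) (hv1 : G.Adj v q₁) (hv2 : G.Adj v q₂) (hw1 : G.Adj w q₁)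
    (hw2 : G.Adj w q₂) (h12 : q₁ ≠ q₂) {Q : Finset V} (hQA : Disjoint Q A') (hvQ : ∀ q ∈ Q, G.Adj v q)
    (h1Q : q₁ ∈ Q) (h2Q : q₂ ∈ Q) (hNQ : ∀ q ∈ Q, ∀ a ∈ A', G.Adj q a → a = w)
    (hwQ : ∀ q ∈ Q, G.Adj w q → q = q₁ ∨ q = q₂) (hN2 : ∀ q ∈ Q, ¬ G.Adj q₂ q) :
    SRep G (insert v A' ∪ Q) v := by
  have hv1' := hv1.ne
  have hv2' := hv2.ne
  have h1 := hR.overlap hw hvA h2A hv2.symm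
    (fun a ha => ⟨hNv a ha, fun h => h ▸ hvw⟩) (fun a ha => ⟨hNQ q₂ h2Q a ha, fun h => h ▸ hw2.symm⟩)
  have h2 := h1.triangle (v := q₁) (by simp) hvw.ne (by simp [h12, hv1'.symm, h1A]) (fun a ha => by
    rcases Finset.mem_insert.1 ha with rfl | ha
    · simp only [hv2'.symm, false_or]
      exact ⟨fun h => absurd h.symm (hN2 q₁ h1Q), fun h => absurd (h ▸ hw) h2A⟩
    rcases Finset.mem_insert.1 ha with rfl | ha
    · simp [hv1.symm]
    · refine ⟨fun h => .inr (hNQ q₁ h1Q a ha h), ?_⟩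
      rintro (rfl | rfl)
      exacts [hv1.symm, hw1.symm])
  have hQ' : ∀ z ∈ (Q.erase q₁).erase q₂, z ∈ Q ∧ z ≠ q₁ ∧ z ≠ q₂ := by
    intro z hz; simp at hz; tauto
  have hQA' : ∀ z ∈ Q, z ∉ A' := fun z hz => Finset.disjoint_left.1 hQA hz
  have h3 := (SRep.add_forest hout _ (insert q₁ (insert q₂ (insert v A'))) ((Q.erase q₁).erase q₂) v
    rfl (by simp) (Finset.disjoint_left.2 fun z hz => by
      obtain ⟨hz, z1, z2⟩ := hQ' z hz
      have := (hvQ z hz).ne'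
      simp [z1, z2, this, hQA' z hz])
    (fun q hq => hvQ q (hQ' q hq).1)).2 q₁ (by simp) hv1 h2.2.1 h2.1
    (fun z hz a ha hza => by
      obtain ⟨hzQ, z1, z2⟩ := hQ' z hz
      rcases Finset.mem_insert.1 ha with rfl | ha
      · exact .inr rfl
      rcases Finset.mem_insert.1 ha with rfl | ha
      · exact absurd hza.symm (hN2 z hzQ)
      rcases Finset.mem_insert.1 ha with rfl | ha
      · exact .inl rfl
      obtain rfl := hNQ z hzQ a ha hza
      exact (hwQ z hzQ hza.symm).elim (fun h => absurd h z1) (fun h => absurd h z2))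
    (fun y hy z hz h1y h1z => by
      by_contra hyz
      obtain ⟨hy, -⟩ := hQ' y hy
      obtain ⟨hz, -⟩ := hQ' z hz
      exact k23_vertices hout hv1' (fun h : w = y => hQA' y hy (h ▸ hw))
        (fun h : w = z => hQA' z hz (h ▸ hw)) hyz hvw hw1.symm (hvQ y hy) h1y (hvQ z hz) h1z)
  have e : insert q₁ (insert q₂ (insert v A')) ∪ (Q.erase q₁).erase q₂ = insert v A' ∪ Q := by grind
  rwa [e] at h3

/-- Exactly one neighbour `w` of the root `v` is deep. -/
theorem single_one [Fintype V] (hout : IsOuterplanar G) (hat : ATFree G)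
    (IH : ∀ A', A' ⊂ A → Claims G A') (hv : v ∈ A) (hG : Good G A v v) (hw : Deep G A v w)
    (hD : ∀ w', Deep G A v w' → w' = w) : SRep G A v := by
  classical
  obtain ⟨hwA, hvw, a, ha, hva, hwa⟩ := hw
  have hvw' := hvw.ne
  set A' := A.filter (fun x => x = w ∨ Off G v x) with hA'
  have mA' : ∀ z, z ∈ A' ↔ z ∈ A ∧ (z = w ∨ Off G v z) := fun z => by simp [hA']
  have hvA' : v ∉ A' := by simp [mA', hvw', Off]
  have hwA' : w ∈ A' := by simp [mA', hwA]
  have hss : A' ⊂ A := (Finset.ssubset_iff_of_subset (Finset.filter_subset _ _)).2 ⟨v, hv, hvA'⟩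
  set Q := A.filter (fun x => G.Adj v x ∧ x ≠ w) with hQ
  have mQ : ∀ z, z ∈ Q ↔ z ∈ A ∧ G.Adj v z ∧ z ≠ w := fun z => by simp [hQ]
  have hQoff : ∀ q ∈ Q, ∀ z ∈ A, Off G v z → ¬ G.Adj q z := fun q hq z hz hvz hqz => by
    rw [mQ] at hq
    exact hq.2.2 (hD q ⟨hq.1, hq.2.1, z, hz, hvz, hqz⟩)
  have hNQ : ∀ q ∈ Q, ∀ a ∈ A', G.Adj q a → a = w := fun q hq a ha hqa => by
    rw [mA'] at ha
    exact ha.2.resolve_right fun h => hQoff q hq a ha.1 h hqa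
  have hNv : ∀ z ∈ A', G.Adj v z → z = w := fun z hz hvz => by
    rw [mA'] at hz
    exact hz.2.resolve_right fun h => h.2 hvz
  have cover : ∀ z ∈ A, z ∉ A' → z = v ∨ z ∈ Q := fun z hz hzA => by
    by_cases h1 : z = v
    · exact .inl h1
    by_cases h2 : G.Adj v z
    · exact .inr ((mQ z).2 ⟨hz, h2, fun h => hzA ((mA' z).2 ⟨hz, .inl h⟩)⟩)
    · exact absurd ((mA' z).2 ⟨hz, .inr ⟨h1, h2⟩⟩) hzA
  have e : insert v A' ∪ Q = A := by
    ext z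
    constructor
    · intro h
      rcases Finset.mem_union.1 h with h | h
      · rcases Finset.mem_insert.1 h with rfl | h
        exacts [hv, ((mA' z).1 h).1]
      · exact ((mQ z).1 h).1
    · intro h
      by_cases hz : z ∈ A'
      · simp [hz]
      · rcases cover z h hz with rfl | h
        · simp
        · exact Finset.mem_union_right _ h
  have hQA' : Disjoint Q A' := Finset.disjoint_left.2 fun z hz hz' =>
    ((mQ z).1 hz).2.2 (hNv z hz' ((mQ z).1 hz).2.1)
  have hvQ : ∀ q ∈ Q, G.Adj v q := fun q hq => ((mQ q).1 hq).2.1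
  have hG' : Good G A' w w := by
    have c1 : ∃ r, (r = v ∨ r = v) ∧ Rch G (fun z => z = w ∨ z ∈ A ∧ z ∉ A') w r :=
      ⟨v, .inl rfl, .one (.inl rfl) (.inr ⟨hv, hvA'⟩) hvw.symm⟩
    refine hG.trans hss.1 (.inl rfl) (fun h => absurd h hvA') (fun h => absurd h hvA')
      (fun b hb x hx hxA hbx => .inl ?_) c1 c1
    rcases cover x hx hxA with rfl | hxQ
    exacts [hNv b hb hbx.symm, hNQ x hxQ b hb hbx.symm]
  have hR := (IH A' hss).single w hwA' hG'
  have hQw : ∀ q ∈ Q, q ≠ w := fun q hq => ((mQ q).1 hq).2.2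
  by_cases hone : ∀ q ∈ Q, ∀ q' ∈ Q, G.Adj w q → G.Adj w q' → q = q'
  · have h1 := (hR.pendant hwA' hvA' (fun z hz => ⟨hNv z hz, fun h => h ▸ hvw⟩)).swap
    have h2 := (SRep.add_forest hout _ (insert v A') Q v rfl (by simp)
      (Finset.disjoint_insert_right.2 ⟨fun h => (hvQ v h).ne rfl, hQA'⟩) hvQ).2 w (by simp [hwA'])
      hvw h1.2.1 h1.1 (fun q hq z hz hqz => by
        rcases Finset.mem_insert.1 hz with rfl | hz
        exacts [.inl rfl, .inr (hNQ q hq z hz hqz)]) hone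
    rwa [e] at h2
  push Not at hone
  obtain ⟨q, hq, q', hq', hwq, hwq', hqq'⟩ := hone
  have htwo : ∀ z ∈ Q, G.Adj w z → z = q ∨ z = q' := fun z hz hwz => by
    by_contra! hcon
    exact k23_vertices hout hvw' hcon.1 hcon.2 hqq' (hvQ z hz) hwz (hvQ q hq) hwq (hvQ q' hq') hwq'
  have nA' : ∀ q ∈ Q, q ∉ A' := fun q hq => Finset.disjoint_left.1 hQA' hq
  by_cases h2 : ∀ r ∈ Q, ¬ G.Adj q' r
  · rw [← e]
    exact single_one_aux hout hR hwA' hvA' (nA' q hq) (nA' q' hq') hvw hNv (hvQ q hq) (hvQ q' hq')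
      hwq hwq' hqq' hQA' hvQ hq hq' hNQ htwo h2
  by_cases h1 : ∀ r ∈ Q, ¬ G.Adj q r
  · rw [← e]
    exact single_one_aux hout hR hwA' hvA' (nA' q' hq') (nA' q hq) hvw hNv (hvQ q' hq') (hvQ q hq)
      hwq' hwq hqq'.symm hQA' hvQ hq' hq hNQ (fun z hz h => (htwo z hz h).symm) h1
  -- otherwise neighbours `r` of `q` and `r'` of `q'` form an asteroidal triple with `a`
  push Not at h1 h2
  obtain ⟨r, hr, hqr⟩ := h1
  obtain ⟨r', hr', hqr'⟩ := h2
  exfalso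
  have nqq : ¬ G.Adj q q' := fun h =>
    k4_false hout (isConn_singleton q') hvw (hvQ q hq) hwq (by simpa using (hvQ q' hq').ne)
      (by simpa using hwq'.ne) (by simpa using hqq') ⟨q', rfl, hvQ q' hq'⟩ ⟨q', rfl, hwq'⟩
      ⟨q', rfl, h⟩
  have hrq' : r ≠ q' := fun h => nqq (h ▸ hqr)
  have hrq : r' ≠ q := fun h => nqq (h ▸ hqr').symm
  have nrw : ¬ G.Adj w r := fun h => (htwo r hr h).elim hqr.ne' hrq'
  have nrw' : ¬ G.Adj w r' := fun h => (htwo r' hr' h).elim hrq hqr'.ne'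
  have nrq' : ¬ G.Adj r q' := fun h =>
    k4_false hout (isConn_pair hwq'.symm) (hvQ q hq) (hvQ r hr) hqr
      (by simp [(hvQ q' hq').ne, hvw']) (by simp [hqq', hwq.ne']) (by simp [hrq', hQw r hr])
      ⟨w, by simp, hvw⟩ ⟨w, by simp, hwq.symm⟩ ⟨q', by simp, h⟩
  have nrq : ¬ G.Adj r' q := fun h =>
    k4_false hout (isConn_pair hwq.symm) (hvQ q' hq') (hvQ r' hr') hqr'
      (by simp [(hvQ q hq).ne, hvw']) (by simp [hqq'.symm, hwq'.ne']) (by simp [hrq, hQw r' hr'])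
      ⟨w, by simp, hvw⟩ ⟨w, by simp, hwq'.symm⟩ ⟨q, by simp, h⟩
  have hrr : r ≠ r' := fun h => nrq' (h ▸ hqr'.symm)
  have nrr : ¬ G.Adj r r' := fun h =>
    k4_false hout ((isConn_pair hwq'.symm).insert (a := r') (b := q') (by simp) hqr'.symm)
      (hvQ q hq) (hvQ r hr) hqr
      (by simp [(hvQ r' hr').ne, (hvQ q' hq').ne, hvw']) (by simp [hrq.symm, hqq', hwq.ne'])
      (by simp [hrr, hrq', hQw r hr])
      ⟨w, by simp, hvw⟩ ⟨w, by simp, hwq.symm⟩ ⟨r', by simp, h⟩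
  have hoff : ∀ z ∈ Q, Off G a z := fun z hz =>
    ⟨fun h => hva.2 (h ▸ hvQ z hz), fun h => hQoff z hz a ha hva h.symm⟩
  exact at_false hat (a := r) (b := r') (c := a)
    (.two (hoff r hr) hva.symm (hoff r' hr') (hvQ r hr).symm (hvQ r' hr'))
    (.three ⟨hrr.symm, nrr⟩ ⟨hrq'.symm, nrq'⟩ ⟨(hQw r hr).symm, fun h => nrw h.symm⟩
      (hoff r hr).symm hqr'.symm hwq'.symm hwa)
    (.three ⟨hrr, fun h => nrr h.symm⟩ ⟨hrq.symm, nrq⟩ ⟨(hQw r' hr').symm, fun h => nrw' h.symm⟩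
      (hoff r' hr').symm hqr.symm hwq.symm hwa)

/-- `x` and `y` are the only deep neighbours of the root `v`, and no common neighbour of `v` and `x`
other than `y` lies in `A`. The core spanned by `v`, `x`, `y` and the vertices away from `v` is
represented first, and the remaining neighbours of `v` are then added as a forest. -/
theorem single_two_aux [Fintype V] (hout : IsOuterplanar G) (hat : ATFree G)
    (IH : ∀ A', A' ⊂ A → Claims G A') (hv : v ∈ A) (hG : Good G A v v) (hx : x ∈ A) (hy : y ∈ A)
    (hvx : G.Adj v x) (hvy : G.Adj v y) (hxy : x ≠ y) (hD : ∀ w, Deep G A v w → w = x ∨ w = y)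
    (ha : a ∈ A) (hb : b ∈ A) (hva : Off G v a) (hvb : Off G v b) (hxa : G.Adj x a)
    (hyb : G.Adj y b) (hab : a = b ∨ G.Adj a b)
    (hQx : ∀ q ∈ A, G.Adj v q → q ≠ x → q ≠ y → ¬ G.Adj x q) : SRep G A v := by
  classical
  set A' := A.filter (fun z => z = v ∨ z = x ∨ z = y ∨ Off G v z) with hA'
  have mA' : ∀ z, z ∈ A' ↔ z ∈ A ∧ (z = v ∨ z = x ∨ z = y ∨ Off G v z) := fun z => by simp [hA']
  set Q := A.filter (fun z => G.Adj v z ∧ z ≠ x ∧ z ≠ y) with hQ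
  have mQ : ∀ z, z ∈ Q ↔ z ∈ A ∧ G.Adj v z ∧ z ≠ x ∧ z ≠ y := fun z => by simp [hQ]
  have hvQ : ∀ q ∈ Q, G.Adj v q := fun q hq => ((mQ q).1 hq).2.1
  have hss : A' ⊆ A := Finset.filter_subset _ _
  have hQA : Disjoint Q A' := Finset.disjoint_left.2 fun z hz hz' => by
    rw [mQ] at hz
    rcases ((mA' z).1 hz').2 with rfl | h | h | h
    exacts [hz.2.1.ne rfl, hz.2.2.1 h, hz.2.2.2 h, h.2 hz.2.1]
  have cover : ∀ z ∈ A, z ∉ A' → z ∈ Q := fun z hz hzA => by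
    rw [mA'] at hzA
    push Not at hzA
    obtain ⟨h1, h2, h3, h4⟩ := hzA hz
    refine (mQ z).2 ⟨hz, ?_, h2, h3⟩
    by_contra h
    exact h4 ⟨h1, h⟩
  have e : A' ∪ Q = A := by
    ext z
    constructor
    · intro h
      rcases Finset.mem_union.1 h with h | h
      exacts [hss h, ((mQ z).1 h).1]
    · intro h
      by_cases hz : z ∈ A'
      · exact Finset.mem_union_left _ hz
      · exact Finset.mem_union_right _ (cover z h hz)
  have hoff : ∀ q ∈ Q, ∀ z ∈ A, Off G v z → ¬ G.Adj q z := fun q hq z hz hvz hqz => by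
    rw [mQ] at hq
    exact (hD q ⟨hq.1, hq.2.1, z, hz, hvz, hqz⟩).elim hq.2.2.1 hq.2.2.2
  have hNQ : ∀ q ∈ Q, ∀ z ∈ A', G.Adj q z → z = v ∨ z = y := fun q hq z hz hqz => by
    have hq' := (mQ q).1 hq
    rcases ((mA' z).1 hz).2 with h | rfl | h | h
    · exact .inl h
    · exact absurd hqz.symm (hQx q hq'.1 hq'.2.1 hq'.2.2.1 hq'.2.2.2)
    · exact .inr h
    · exact absurd hqz (hoff q hq z (hss hz) h)
  have hne : ∀ q ∈ Q, ∀ z, Off G v z → q ≠ z := fun q hq z hz h => hz.2 (h ▸ hvQ q hq)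
  have hyQ : ∀ q ∈ Q, ∀ q' ∈ Q, G.Adj y q → G.Adj y q' → q = q' := fun q hq q' hq' h1 h2 => by
    by_contra hqq
    have hya : y ≠ a := fun h => hva.2 (h ▸ hvy)
    have k1 := ((mQ q).1 hq).2.2
    have k2 := ((mQ q').1 hq').2.2
    exact k23_one_set hout (C := insert x {a, b}) ((isConn_pair' hab).insert (by simp) hxa)
      hvy.ne hqq (hvQ q hq) h1 (hvQ q' hq') h2 (by simp [hvx.ne, hva.1.symm, hvb.1.symm])
      (by simp [hxy.symm, hya, hyb.ne]) (by simp [k1.1, hne q hq a hva, hne q hq b hvb])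
      (by simp [k2.1, hne q' hq' a hva, hne q' hq' b hvb])
      ⟨x, by simp, hvx⟩ ⟨b, by simp, hyb⟩
  have hvA' : v ∈ A' := (mA' v).2 ⟨hv, .inl rfl⟩
  have hyA' : y ∈ A' := (mA' y).2 ⟨hy, .inr (.inr (.inl rfl))⟩
  have hG' : Good G A' v v := hG.restrict hss hvA' fun a ha x hx hxA hax =>
    (hNQ x (cover x hx hxA) a ha hax.symm).imp id fun h : a = y => h ▸ hvy.symm
  rcases root_core hout hat (fun B hB => IH B (hB.trans_subset hss)) hvA'
    ((mA' x).2 ⟨hx, .inr (.inl rfl)⟩) hyA' hG' hvx hvy (fun z hz hvz => by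
      rcases ((mA' z).1 hz).2 with rfl | h | h | h
      exacts [absurd rfl hvz.ne, .inl h, .inr h, absurd hvz h.2]) hxy
    ((mA' a).2 ⟨ha, .inr (.inr (.inr hva))⟩) hva ((mA' b).2 ⟨hb, .inr (.inr (.inr hvb))⟩) hvb
    hxa hyb with ⟨hT, hW⟩ | ⟨hS, hE⟩
  · have := (SRep.add_forest hout _ A' Q v rfl hvA' hQA hvQ).2 y hyA' hvy hT hW hNQ hyQ
    rwa [e] at this
  · have := (SRep.add_forest hout _ A' Q v rfl hvA' hQA hvQ).1 hS fun q hq z hz hqz =>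
      (hNQ q hq z hz hqz).resolve_right fun h =>
        hE q ⟨Finset.disjoint_left.1 hQA hq, hvQ q hq, (h ▸ hqz).symm, hNQ q hq⟩
    rwa [e] at this

/-- Exactly two neighbours of the root are deep. -/
theorem single_two [Fintype V] (hout : IsOuterplanar G) (hat : ATFree G)
    (IH : ∀ A', A' ⊂ A → Claims G A') (hv : v ∈ A) (hG : Good G A v v) (hx : Deep G A v x)
    (hy : Deep G A v y) (hxy : x ≠ y) (hD : ∀ w, Deep G A v w → w = x ∨ w = y) :
    SRep G A v := by
  obtain ⟨a, ha, b, hb, hva, hvb, hxa, hyb, hab⟩ := deep_join hG hv hx hy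
  obtain ⟨hx, hvx, -⟩ := hx
  obtain ⟨hy, hvy, -⟩ := hy
  by_cases h1 : ∀ q ∈ A, G.Adj v q → q ≠ x → q ≠ y → ¬ G.Adj x q
  · exact single_two_aux hout hat IH hv hG hx hy hvx hvy hxy hD ha hb hva hvb hxa hyb hab h1
  by_cases h2 : ∀ q ∈ A, G.Adj v q → q ≠ y → q ≠ x → ¬ G.Adj y q
  · exact single_two_aux hout hat IH hv hG hy hx hvy hvx hxy.symm (fun w hw => (hD w hw).symm)
      hb ha hvb hva hyb hxa (hab.imp Eq.symm fun h => h.symm) h2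
  push Not at h1 h2
  -- triangles `v x q` and `v y q'` yield an asteroidal triple `q`, `q'`, `a`
  obtain ⟨q, hq, hvq, hqx, hqy, hxq⟩ := h1
  obtain ⟨q', hq', hvq', hqy', hqx', hyq'⟩ := h2
  exfalso
  have hX := isConn_pair' hab
  have hoff : ∀ q ∈ A, G.Adj v q → q ≠ x → q ≠ y → ∀ z ∈ A, Off G v z → Off G q z :=
    fun q hq hvq h1 h2 z hz hvz => ⟨fun h => hvz.2 (h ▸ hvq),
      fun h => (hD q ⟨hq, hvq, z, hz, hvz, h⟩).elim h1 h2⟩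
  have oa := hoff q hq hvq hqx hqy a ha hva
  have ob := hoff q hq hvq hqx hqy b hb hvb
  have oa' := hoff q' hq' hvq' hqx' hqy' a ha hva
  have ob' := hoff q' hq' hvq' hqx' hqy' b hb hvb
  have hya : y ≠ a := fun h => hva.2 (h ▸ hvy)
  have hxb : x ≠ b := fun h => hvb.2 (h ▸ hvx)
  have n1 : ¬ G.Adj q y := fun h =>
    k4_false hout (C := insert y {a, b}) (hX.insert (by simp) hyb) hvx hvq hxq
      (by simp [hvy.ne, hva.1.symm, hvb.1.symm]) (by simp [hxy, hxa.ne, hxb])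
      (by simp [hqy, oa.1.symm, ob.1.symm]) ⟨y, by simp, hvy⟩ ⟨a, by simp, hxa⟩ ⟨y, by simp, h⟩
  have n2 : ¬ G.Adj q' x := fun h =>
    k4_false hout (C := insert x {a, b}) (hX.insert (by simp) hxa) hvy hvq' hyq'
      (by simp [hvx.ne, hva.1.symm, hvb.1.symm]) (by simp [hxy.symm, hyb.ne, hya])
      (by simp [hqx', oa'.1.symm, ob'.1.symm]) ⟨x, by simp, hvx⟩ ⟨b, by simp, hyb⟩
      ⟨x, by simp, h⟩
  have hqq : q ≠ q' := fun h => n1 (h ▸ hyq'.symm)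
  have n3 : ¬ G.Adj q q' := fun h =>
    k4_false hout (C := insert x (insert y {a, b}))
      ((hX.insert (by simp) hyb).insert (b := a) (by simp) hxa) hvq hvq' h
      (by simp [hvx.ne, hvy.ne, hva.1.symm, hvb.1.symm])
      (by simp [hqx, hqy, oa.1.symm, ob.1.symm]) (by simp [hqx', hqy', oa'.1.symm, ob'.1.symm])
      ⟨x, by simp, hvx⟩ ⟨x, by simp, hxq.symm⟩ ⟨y, by simp, hyq'.symm⟩
  refine at_false hat (a := q) (b := q') (c := a) (.two oa.symm hva.symm oa'.symm hvq.symm hvq')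
    ?_ (.two ⟨hqq, fun h => n3 h.symm⟩ ⟨hqx'.symm, n2⟩ oa' hxq.symm hxa)
  have i1 : Rch G (Off G q) q' b := .two ⟨hqq.symm, n3⟩ ⟨hqy.symm, n1⟩ ob hyq'.symm hyb
  rcases hab with rfl | hab
  · exact i1
  · exact i1.trans (.one ob oa hab.symm)

/-- The induction step at a single root. -/
theorem single_step [Fintype V] (hout : IsOuterplanar G) (hat : ATFree G)
    (IH : ∀ A', A' ⊂ A → Claims G A') (hv : v ∈ A) (hG : Good G A v v) : SRep G A v := by
  by_cases h1 : ∃ x, Deep G A v x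
  · obtain ⟨x, hx⟩ := h1
    by_cases h2 : ∃ y, Deep G A v y ∧ x ≠ y
    · obtain ⟨y, hy, hxy⟩ := h2
      refine single_two hout hat IH hv hG hx hy hxy fun w hw => ?_
      by_contra! h
      exact deep_three hout hG hv hx hy hw hxy h.1.symm h.2.symm
    · push Not at h2
      exact single_one hout hat IH hv hG hx fun w hw => (h2 w hw).symm
  · push Not at h1
    exact single_none hout hv hG h1

end SingleStep

theorem claims [Fintype V] (hout : IsOuterplanar G) (hat : ATFree G) (A : Finset V) :
    Claims G A := by
  induction A using Finset.strongInduction with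
  | H A IH =>
    exact ⟨fun v hv hG => single_step hout hat IH hv hG, fun u hu v hv huv hG B hB h1 h2 h3 =>
      edge_step hout IH hu hv huv hG hB h1 h2 h3⟩

/-! ### A vertex of maximal weight as the first root -/

section Start

open Classical in
/-- The vertices outside the closed neighbourhood of `y` that are joined to `z` there. -/
noncomputable def comp [Fintype V] (G : SimpleGraph V) (y z : V) : Finset V :=
  Finset.univ.filter fun t => Rch G (Off G y) z t

open Classical in
/-- The weight of a possible root `y`; it rewards large components off the closed neighbourhood
of `y`, lexicographically. -/
noncomputable def weight [Fintype V] (G : SimpleGraph V) (A : Finset V) (y : V) : ℕ :=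
  ∑ z ∈ A.filter (fun z => Off G y z), (Fintype.card V + 1) ^ (comp G y z).card

omit [DecidableEq V] in
theorem mem_comp [Fintype V] {t : V} : t ∈ comp G y x ↔ Rch G (Off G y) x t := by
  classical simp [comp]

theorem Rch.self {P : V → Prop} (h : Rch G P a b) : Rch G (fun x => P x ∧ Rch G P a x) a b := by
  obtain ⟨p, hp⟩ := h
  exact ⟨p, fun x hx => ⟨hp x hx, p.takeUntil x hx, fun z hz =>
    hp z (p.support_takeUntil_subset_support hx hz)⟩⟩

/-- Components off `y` other than that of `a` stay connected off `a`. -/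
theorem Rch.off_of_not (hya : Off G y a) (h : Rch G (Off G y) x b)
    (hn : ¬ Rch G (Off G y) x a) : Rch G (Off G a) x b :=
  h.self.mono fun _ hz => ⟨fun e => hn (e ▸ hz.2), fun e =>
    hn (hz.2.trans (.one hz.1 hya e.symm))⟩

/-- If `a` and `b` reach `y` off each other, and lie in different components off `y`, of which that
of `a` is not the larger one, then `a` has larger weight than `y`. -/
theorem weight_lt [Fintype V] (hy : y ∈ A) (ha : Rch G (Off G b) a y) (hb : Rch G (Off G a) b y)
    (hab : ¬ Rch G (Off G y) b a) (hle : (comp G y a).card ≤ (comp G y b).card) :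
    weight G A y < weight G A a := by
  classical
  have hya : Off G y a := hb.right.symm
  have hyb : Off G y b := ha.right.symm
  set M := Fintype.card V + 1 with hM
  set S := A.filter (fun z => Off G y z) with hS
  set K := comp G y a with hK
  have hyS : y ∉ S \ K := fun h => (Finset.mem_filter.1 (Finset.mem_sdiff.1 h).1).2.1 rfl
  have hsub : insert y (S \ K) ⊆ A.filter (fun z => Off G a z) := by
    intro z hz
    rcases Finset.mem_insert.1 hz with rfl | hz
    · exact Finset.mem_filter.2 ⟨hy, hya.symm⟩
    · obtain ⟨h1, h2⟩ := Finset.mem_sdiff.1 hz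
      obtain ⟨h1, h3⟩ := Finset.mem_filter.1 h1
      exact Finset.mem_filter.2 ⟨h1, (Rch.off_of_not hya (.nil h3)
        fun h => h2 (mem_comp.2 h.symm)).left⟩
  have i1 : (comp G y b).card + 1 ≤ (comp G a y).card := by
    have hyn : y ∉ comp G y b := fun h => (mem_comp.1 h).right.1 rfl
    rw [← Finset.card_insert_of_notMem hyn]
    refine Finset.card_le_card fun z hz => mem_comp.2 ?_
    rcases Finset.mem_insert.1 hz with rfl | hz
    · exact .nil hb.right
    · exact hb.symm.trans ((mem_comp.1 hz).off_of_not hya hab)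
  have i2 : ∀ z ∈ S \ K, (comp G y z).card ≤ (comp G a z).card := fun z hz =>
    Finset.card_le_card fun t ht => mem_comp.2 ((mem_comp.1 ht).off_of_not hya fun h =>
      (Finset.mem_sdiff.1 hz).2 (mem_comp.2 h.symm))
  have i3 : ∑ z ∈ S ∩ K, M ^ (comp G y z).card < M ^ ((comp G y b).card + 1) := by
    have h1 : ∑ z ∈ S ∩ K, M ^ (comp G y z).card ≤ (S ∩ K).card • M ^ (comp G y b).card := by
      refine Finset.sum_le_card_nsmul _ _ _ fun z hz => Nat.pow_le_pow_right (by omega) ?_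
      refine (Finset.card_le_card fun t ht => ?_).trans hle
      exact mem_comp.2 ((mem_comp.1 (Finset.mem_inter.1 hz).2).trans (mem_comp.1 ht))
    have h2 : (S ∩ K).card < M := by
      have := Finset.card_le_univ (S ∩ K)
      omega
    refine h1.trans_lt ?_
    rw [smul_eq_mul, pow_succ']
    exact Nat.mul_lt_mul_of_pos_right h2 (by positivity)
  calc weight G A y = ∑ z ∈ S ∩ K, M ^ (comp G y z).card + ∑ z ∈ S \ K, M ^ (comp G y z).card :=
        (Finset.sum_inter_add_sum_sdiff S K _).symm
    _ < M ^ (comp G a y).card + ∑ z ∈ S \ K, M ^ (comp G a z).card :=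
        add_lt_add_of_lt_of_le (i3.trans_le (Nat.pow_le_pow_right (by omega) i1))
          (Finset.sum_le_sum fun z hz => Nat.pow_le_pow_right (by omega) (i2 z hz))
    _ = ∑ z ∈ insert y (S \ K), M ^ (comp G a z).card :=
        (Finset.sum_insert (f := fun z => M ^ (comp G a z).card) hyS).symm
    _ ≤ weight G A a := Finset.sum_le_sum_of_subset hsub

/-- A vertex of maximal weight can serve as a root for its component. -/
theorem unrel_of_max [Fintype V] (hat : ATFree G) (hy : y ∈ A)
    (hmax : ∀ z ∈ A, weight G A z ≤ weight G A y) (haA : a ∈ A) (hbA : b ∈ A)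
    (ha : Rch G (Off G b) a y) (hb : Rch G (Off G a) b y) : False := by
  have hab : ¬ Rch G (Off G y) a b := fun h => at_false hat h hb ha
  rcases le_total (comp G y a).card (comp G y b).card with h | h
  · exact (hmax a haA).not_gt (weight_lt hy ha hb (fun h => hab h.symm) h)
  · exact (hmax b hbA).not_gt (weight_lt hy hb ha hab h)

/-- A union of connected components is represented component by component. -/
theorem exists_rep [Fintype V] (hout : IsOuterplanar G) (hat : ATFree G) (A : Finset V)
    (hA : ∀ a ∈ A, ∀ x, G.Adj a x → x ∈ A) : ∃ f, Rep G A f := by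
  classical
  induction A using Finset.strongInduction with
  | H A IH =>
    rcases A.eq_empty_or_nonempty with rfl | hne
    · exact ⟨fun _ => ⟨0, 0, 0, 0⟩, by simp [Rep]⟩
    obtain ⟨y, hy, hmax⟩ := A.exists_max_image (weight G A) hne
    set C := A.filter (fun z => Rch G (fun _ => True) y z) with hC
    have mC : ∀ z, z ∈ C ↔ z ∈ A ∧ Rch G (fun _ => True) y z := fun z => by simp [hC]
    have hCA : C ⊆ A := Finset.filter_subset _ _
    have hyC : y ∈ C := (mC y).2 ⟨hy, .nil trivial⟩
    have hcl : ∀ a ∈ C, ∀ x, G.Adj a x → x ∈ C := fun a ha x hax =>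
      (mC x).2 ⟨hA a (hCA ha) x hax, ((mC a).1 ha).2.trans (.one trivial trivial hax)⟩
    have hG : Good G C y y := by
      refine ⟨fun Y hY ⟨z, hz⟩ hyY _ => ?_, ?_⟩
      · obtain ⟨p, -⟩ := ((mC z).1 (hY hz)).2
        obtain ⟨d, -, h1, h2⟩ := p.exists_boundary_dart {t | t ∉ Y} hyY (by simpa using hz)
        have h2 : d.snd ∈ Y := by simpa using h2
        exact ⟨_, h2, _, hcl _ (hY h2) _ d.adj.symm, h1, d.adj.symm⟩
      · intro a b r s hr hs h1 h2
        obtain rfl : r = y := hr.elim id id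
        obtain rfl : s = r := hs.elim id id
        exact unrel_of_max hat hy hmax (hCA h1.left.1) (hCA h2.left.1) (h1.mono fun _ h => h.2)
          (h2.mono fun _ h => h.2)
    obtain ⟨f, hf, -⟩ := (claims hout hat C).single y hyC hG
    obtain ⟨g, hg⟩ := IH (A \ C) (Finset.sdiff_ssubset hCA ⟨y, hyC⟩) fun a ha x hax => by
      rw [Finset.mem_sdiff] at ha ⊢
      exact ⟨hA a ha.1 x hax, fun hx => ha.2 (hcl x hx a hax.symm)⟩
    have := hf.union hg Finset.disjoint_sdiff fun a ha b hb hab =>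
      (Finset.mem_sdiff.1 hb).2 (hcl a ha b hab)
    rwa [Finset.union_sdiff_of_subset hCA] at this

end Start

end OuterB0

/-- Every AT-free outerplanar graph is B₀. -/
theorem isB0_of_atFree_outerplanar {V : Type*} [Fintype V] (G : SimpleGraph V)
    (hout : IsOuterplanar G) (hat : ATFree G) : IsB0 G := by
  classical
  obtain ⟨f, hf⟩ := OuterB0.exists_rep hout hat Finset.univ (by simp)
  exact hf.isB0
end

section
/- Let G be a 2-connected outerplanar graph with Hamiltonian cycle C, and let uv be an edge of G not lying on C (an internal edge). Then the graph obtained from G by deleting the vertices u and v has exactly two connected components; moreover, each of these two components contains exactly one of the two C-neighbors of u and exactly one of the two C-neighbors of v. -/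
/-- A graph is 2-connected: it has at least 3 vertices and deleting any single vertex
leaves a connected graph. -/
def TwoConnected {V : Type*} [Fintype V] (G : SimpleGraph V) : Prop :=
  3 ≤ Fintype.card V ∧ ∀ v : V, (G.induce ({v}ᶜ : Set V)).Connected

/-- Consecutive adjacent vertices `f a, …, f b` lying in `S` are joined inside `S`. -/
lemma reachable_induce_of_walk {V : Type*} {G : SimpleGraph V} {f : ℕ → V} (S : Set V) {a b : ℕ}
    (hab : a ≤ b) (hS : ∀ i, a ≤ i → i ≤ b → f i ∈ S)
    (hadj : ∀ i, a ≤ i → i < b → G.Adj (f i) (f (i + 1))) :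
    (G.induce S).Reachable ⟨f a, hS a le_rfl hab⟩ ⟨f b, hS b hab le_rfl⟩ := by
  induction b, hab using Nat.le_induction with
  | base => exact SimpleGraph.Reachable.refl _
  | succ b hab ih =>
    refine (ih (fun i h1 h2 => hS i h1 (by lia)) (fun i h1 h2 => hadj i h1 (by lia))).trans ?_
    apply SimpleGraph.Adj.reachable
    exact hadj b hab (by lia)

lemma connected_induce_arc {V : Type*} {G : SimpleGraph V} {f : ℕ → V} {n a b : ℕ}
    (hadj : ∀ i, i < n → G.Adj (f i) (f (i + 1))) (hab : a < b) (hb : b ≤ n) :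
    (G.induce (f '' Set.Ico a b)).Connected := by
  rw [SimpleGraph.connected_iff_exists_forall_reachable]
  refine ⟨⟨f a, a, ⟨le_rfl, hab⟩, rfl⟩, ?_⟩
  rintro ⟨_, j, ⟨h1, h2⟩, rfl⟩
  exact reachable_induce_of_walk (f := f) (f '' Set.Ico a b) h1 (fun i h3 h4 => ⟨i, ⟨h3, by lia⟩, rfl⟩)
    (fun i h3 h4 => hadj i (by lia))

/-- Two crossing chords of a Hamiltonian cycle produce a `K₄` minor. -/
lemma hasMinor_K4_of_crossing {V : Type*} {G : SimpleGraph V} {f : ℕ → V} {n i k j : ℕ}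
    (hadj : ∀ i, i < n → G.Adj (f i) (f (i + 1))) (hinj : Set.InjOn f (Set.Iio n))
    (h0 : f n = f 0) (hi : 0 < i) (hik : i < k) (hkj : k < j) (hjn : j < n)
    (huv : G.Adj (f 0) (f k)) (hij : G.Adj (f i) (f j)) :
    HasMinor G (⊤ : SimpleGraph (Fin 4)) := by
  -- arc number `w` is the half-open index interval from `e w` to `e (w + 1)`
  let e : ℕ → ℕ := fun m => if m = 0 then 0 else if m = 1 then i else if m = 2 then k
    else if m = 3 then j else n
  have he : ∀ w : Fin 4, e w < e (w + 1) ∧ e (w + 1) ≤ n := by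
    intro w
    fin_cases w <;> simp [e] <;> lia
  have hmono : ∀ w w' : Fin 4, w < w' → e (w + 1) ≤ e w' := by
    intro w w' h
    fin_cases w <;> fin_cases w' <;> simp at h <;> simp [e] <;> lia
  let B : Fin 4 → Set V := fun w => f '' Set.Ico (e w) (e (w + 1))
  have hdisj : ∀ w w' : Fin 4, w < w' → Disjoint (B w) (B w') := by
    intro w w' h
    rw [Set.disjoint_left]
    rintro _ ⟨p, ⟨hp1, hp2⟩, rfl⟩ ⟨q, ⟨hq1, hq2⟩, hpq⟩
    have a1 := hmono w w' h
    have a2 := he w'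
    have := hinj (by rw [Set.mem_Iio]; lia) (by rw [Set.mem_Iio]; lia) hpq
    lia
  have hE : ∀ w w' : Fin 4, w < w' → ∃ x ∈ B w, ∃ y ∈ B w', G.Adj x y := by
    have key : ∀ (w w' : Fin 4) (p q : ℕ), e w ≤ p → p < e (w + 1) → e w' ≤ q → q < e (w' + 1) →
        G.Adj (f p) (f q) → ∃ x ∈ B w, ∃ y ∈ B w', G.Adj x y :=
      fun w w' p q h1 h2 h3 h4 h => ⟨f p, ⟨p, ⟨h1, h2⟩, rfl⟩, f q, ⟨q, ⟨h3, h4⟩, rfl⟩, h⟩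
    -- cyclically consecutive arcs are joined by the cycle edge at their common end
    have hstep : ∀ m, 0 < m → m ≤ n → G.Adj (f (m - 1)) (f m) := by
      intro m h1 h2
      have := hadj (m - 1) (by lia)
      rwa [Nat.sub_add_cancel h1] at this
    have hlast : G.Adj (f 0) (f (n - 1)) := by
      rw [← h0]; exact (hstep n (by lia) le_rfl).symm
    have k01 := key 0 1 (i - 1) i (by simp [e]) (by simp [e]; lia) (by simp [e])
      (by simp [e]; lia) (hstep i hi (by lia))
    have k02 := key 0 2 0 k (by simp [e]) (by simp [e]; lia) (by simp [e])
      (by simp [e]; lia) huv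
    have k03 := key 0 3 0 (n - 1) (by simp [e]) (by simp [e]; lia) (by simp [e]; lia)
      (by simp [e]; lia) hlast
    have k12 := key 1 2 (k - 1) k (by simp [e]; lia) (by simp [e]; lia) (by simp [e])
      (by simp [e]; lia) (hstep k (by lia) (by lia))
    have k13 := key 1 3 i j (by simp [e]) (by simp [e]; lia) (by simp [e])
      (by simp [e]; lia) hij
    have k23 := key 2 3 (j - 1) j (by simp [e]; lia) (by simp [e]; lia) (by simp [e])
      (by simp [e]; lia) (hstep j (by lia) (by lia))
    intro w w' h
    fin_cases w <;> fin_cases w' <;> simp at h <;> assumption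
  refine ⟨B, fun w => ?_, fun w => ?_, fun w w' h => ?_, fun w w' h => ?_⟩
  · exact ⟨f (e w), e w, ⟨le_rfl, (he w).1⟩, rfl⟩
  · exact connected_induce_arc hadj (he w).1 (he w).2
  · rcases lt_or_gt_of_ne h with h | h
    · exact hdisj w w' h
    · exact (hdisj w' w h).symm
  · rcases lt_or_gt_of_ne h.ne with h | h
    · exact hE w w' h
    · obtain ⟨x, hx, y, hy, hxy⟩ := hE w' w h
      exact ⟨y, hy, x, hx, hxy.symm⟩

/-- In a 2-connected outerplanar graph `G` with Hamiltonian cycle `C`, deleting the two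
endpoints of an internal edge (a chord) `uv` leaves exactly two connected components, and
each of the two components contains exactly one of the two `C`-neighbors of `u` and exactly
one of the two `C`-neighbors of `v`. -/
theorem internal_edge_removal {V : Type*} [Fintype V] [DecidableEq V]
    (G : SimpleGraph V) (hout : IsOuterplanar G) (h2 : TwoConnected G)
    (r : V) (C : G.Walk r r) (hC : C.IsHamiltonianCycle)
    (u v : V) (huv : G.Adj u v) (hchord : s(u, v) ∉ C.edges) :
    ∃ c₁ c₂ : (G.induce ({u, v}ᶜ : Set V)).ConnectedComponent,
      c₁ ≠ c₂ ∧ (∀ c, c = c₁ ∨ c = c₂) ∧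
      ∀ c : (G.induce ({u, v}ᶜ : Set V)).ConnectedComponent,
        (∃! x : ({u, v}ᶜ : Set V),
          (G.induce ({u, v}ᶜ : Set V)).connectedComponentMk x = c ∧ s(u, (x : V)) ∈ C.edges) ∧
        (∃! x : ({u, v}ᶜ : Set V),
          (G.induce ({u, v}ᶜ : Set V)).connectedComponentMk x = c ∧ s(v, (x : V)) ∈ C.edges) := by
  obtain ⟨f, n, hn, h0, hn0, hadj, hinj, hsurj, hedge⟩ : ∃ (f : ℕ → V) (n : ℕ), 3 ≤ n ∧ f 0 = u ∧
      f n = f 0 ∧ (∀ i, i < n → G.Adj (f i) (f (i + 1))) ∧ Set.InjOn f (Set.Iio n) ∧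
      (∀ x, ∃ i < n, f i = x) ∧
      ∀ x y, s(x, y) ∈ C.edges ↔ ∃ i < n, s(x, y) = s(f i, f (i + 1)) := by
    have hu := hC.mem_support u
    have hR : (C.rotate u hu).IsCycle := hC.isCycle.rotate hu
    refine ⟨(C.rotate u hu).getVert, (C.rotate u hu).length, hR.three_le_length,
      SimpleGraph.Walk.getVert_zero _,
      (SimpleGraph.Walk.getVert_length _).trans (SimpleGraph.Walk.getVert_zero _).symm,
      fun i hi => (C.rotate u hu).adj_getVert_succ hi, ?_, ?_, ?_⟩
    · intro i hi j hj h
      simp only [Set.mem_Iio] at hi hj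
      exact hR.getVert_injOn' (by simp only [Set.mem_ofPred_eq]; lia)
        (by simp only [Set.mem_ofPred_eq]; lia) h
    · intro x
      have hx : x ∈ (C.rotate u hu).support := by
        rw [SimpleGraph.Walk.mem_support_rotate_iff]; exact hC.mem_support x
      obtain ⟨i, hi, hle⟩ := SimpleGraph.Walk.mem_support_iff_exists_getVert.mp hx
      rcases hle.lt_or_eq with h | h
      · exact ⟨i, h, hi⟩
      · refine ⟨0, by have := hR.three_le_length; lia, ?_⟩
        rw [← hi, h, SimpleGraph.Walk.getVert_length, SimpleGraph.Walk.getVert_zero]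
    · intro x y
      rw [← (C.rotate_edges u hu).mem_iff, SimpleGraph.Walk.mk_mem_edges_iff_exists]
      simp only [eq_comm]
  obtain ⟨k, hkn, hk⟩ := hsurj v
  have hf : ∀ i j, i < n → j < n → f i = f j → i = j := fun i j hi hj h => hinj hi hj h
  -- as `uv` is a chord, `v` is neither `u` nor one of its cycle neighbors
  have hk0 : k ≠ 0 := by rintro rfl; exact huv.ne (h0.symm.trans hk)
  have hk1 : k ≠ 1 := by
    rintro rfl
    exact hchord ((hedge _ _).2 ⟨0, by lia, by rw [h0, hk]⟩)
  have hk2 : k ≠ n - 1 := by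
    rintro rfl
    refine hchord ((hedge _ _).2 ⟨n - 1, by lia, ?_⟩)
    rw [Nat.sub_add_cancel (by lia), hk, hn0, h0, Sym2.eq_swap]
  have hmem : ∀ i, 0 < i → i < n → i ≠ k → f i ∈ ({u, v}ᶜ : Set V) := by
    intro i hi hin hik
    simp only [Set.mem_compl_iff, Set.mem_insert_iff, Set.mem_singleton_iff, not_or]
    constructor
    · intro h; have := hf i 0 hin (by lia) (h.trans h0.symm); lia
    · intro h; exact hik (hf i k hin hkn (h.trans hk.symm))
  have hidx : ∀ x : ({u, v}ᶜ : Set V), ∃ i, 0 < i ∧ i < n ∧ i ≠ k ∧ f i = x := by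
    rintro ⟨x, hx⟩
    simp only [Set.mem_compl_iff, Set.mem_insert_iff, Set.mem_singleton_iff, not_or] at hx
    obtain ⟨i, hin, rfl⟩ := hsurj x
    refine ⟨i, Nat.pos_of_ne_zero ?_, hin, ?_, rfl⟩
    · rintro rfl; exact hx.1 h0
    · rintro rfl; exact hx.2 hk
  set H := G.induce ({u, v}ᶜ : Set V) with hH
  have hnocross : ∀ i j, 0 < i → i < k → k < j → j < n → ¬ G.Adj (f i) (f j) := by
    intro i j h1 h2 h3 h4 h
    exact hout.1 (hasMinor_K4_of_crossing hadj hinj hn0 h1 h2 h3 h4 (by rwa [h0, hk]) h)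
  have hadjside : ∀ x y : ({u, v}ᶜ : Set V), H.Adj x y →
      (x : V) ∈ f '' Set.Ioo 0 k → (y : V) ∈ f '' Set.Ioo 0 k := by
    rintro x y hxy ⟨i, ⟨hi1, hi2⟩, hix⟩
    obtain ⟨j, hj0, hjn, hjk, hjy⟩ := hidx y
    rcases lt_or_gt_of_ne hjk with h | h
    · exact ⟨j, ⟨hj0, h⟩, hjy⟩
    · refine absurd ?_ (hnocross i j hi1 hi2 h hjn)
      rw [hix, hjy]; exact hxy
  have hside : ∀ x y : ({u, v}ᶜ : Set V), H.Reachable x y →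
      (x : V) ∈ f '' Set.Ioo 0 k → (y : V) ∈ f '' Set.Ioo 0 k := by
    rintro x y ⟨p⟩ hx
    induction p with
    | nil => exact hx
    | cons h p ih => exact ih (hadjside _ _ h hx)
  let c₁ := H.connectedComponentMk ⟨f 1, hmem 1 (by lia) (by lia) (by lia)⟩
  let c₂ := H.connectedComponentMk ⟨f (n - 1), hmem (n - 1) (by lia) (by lia) (by lia)⟩
  have hc1 : ∀ i (h1 : 0 < i) (h2 : i < k),
      H.connectedComponentMk ⟨f i, hmem i h1 (by lia) (by lia)⟩ = c₁ := by
    intro i h1 h2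
    exact SimpleGraph.ConnectedComponent.sound
      (reachable_induce_of_walk _ h1 (fun m h3 h4 => hmem m (by lia) (by lia) (by lia))
        (fun m h3 h4 => hadj m (by lia))).symm
  have hc2 : ∀ i (h1 : k < i) (h2 : i < n),
      H.connectedComponentMk ⟨f i, hmem i (by lia) h2 (by lia)⟩ = c₂ := by
    intro i h1 h2
    exact SimpleGraph.ConnectedComponent.sound
      (reachable_induce_of_walk _ (by lia) (fun m h3 h4 => hmem m (by lia) (by lia) (by lia))
        (fun m h3 h4 => hadj m (by lia)))
  have hne : c₁ ≠ c₂ := by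
    intro h
    obtain ⟨j, ⟨hj1, hj2⟩, hj⟩ := hside _ _ (SimpleGraph.ConnectedComponent.exact h)
      ⟨1, ⟨by lia, by lia⟩, rfl⟩
    have := hf j (n - 1) (by lia) (by lia) hj
    lia
  have hall : ∀ c : H.ConnectedComponent, c = c₁ ∨ c = c₂ := by
    intro c
    induction c using SimpleGraph.ConnectedComponent.ind with
    | h x =>
      obtain ⟨x, hx⟩ := x
      obtain ⟨i, h1, h2, h3, rfl⟩ := hidx ⟨x, hx⟩
      rcases lt_or_gt_of_ne h3 with h | h
      · exact Or.inl (hc1 i h1 h)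
      · exact Or.inr (hc2 i h h2)
  -- a vertex whose cycle neighbors are `f a` and `f b`, on different arcs, has one in each component
  have hfin : ∀ (w : V) (a b : ℕ), 0 < a → a < k → k < b → b < n →
      (∀ x, s(w, x) ∈ C.edges ↔ x = f a ∨ x = f b) → ∀ c : H.ConnectedComponent,
      ∃! x : ({u, v}ᶜ : Set V), H.connectedComponentMk x = c ∧ s(w, (x : V)) ∈ C.edges := by
    intro w a b ha hak hkb hbn hw c
    rcases hall c with rfl | rfl
    · refine ⟨⟨f a, hmem a ha (by lia) (by lia)⟩, ⟨hc1 a ha hak, (hw _).2 (Or.inl rfl)⟩, ?_⟩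
      rintro ⟨y, hy⟩ ⟨hyc, hyw⟩
      rcases (hw y).1 hyw with rfl | rfl
      · rfl
      · exact absurd (hyc.symm.trans (hc2 b hkb hbn)) hne
    · refine ⟨⟨f b, hmem b (by lia) hbn (by lia)⟩, ⟨hc2 b hkb hbn, (hw _).2 (Or.inr rfl)⟩, ?_⟩
      rintro ⟨y, hy⟩ ⟨hyc, hyw⟩
      rcases (hw y).1 hyw with rfl | rfl
      · exact absurd ((hc1 a ha hak).symm.trans hyc) hne
      · rfl
  refine ⟨c₁, c₂, hne, hall, fun c => ⟨hfin u 1 (n - 1) (by lia) (by lia) (by lia) (by lia) ?_ c,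
    hfin v (k - 1) (k + 1) (by lia) (by lia) (by lia) (by lia) ?_ c⟩⟩
  · intro x
    rw [hedge]
    constructor
    · rintro ⟨i, hi, h⟩
      rw [Sym2.eq_iff] at h
      rcases h with ⟨h, rfl⟩ | ⟨h, rfl⟩
      · obtain rfl := hf 0 i (by lia) hi (h0.trans h)
        exact Or.inl rfl
      · rcases Nat.lt_or_ge (i + 1) n with h' | h'
        · have := hf 0 (i + 1) (by lia) h' (h0.trans h)
          lia
        · right; congr 1; lia
    · rintro (rfl | rfl)
      · exact ⟨0, by lia, by rw [h0]⟩
      · refine ⟨n - 1, by lia, ?_⟩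
        rw [Nat.sub_add_cancel (by lia), hn0, h0, Sym2.eq_swap]
  · intro x
    rw [hedge]
    constructor
    · rintro ⟨i, hi, h⟩
      rw [Sym2.eq_iff] at h
      rcases h with ⟨h, rfl⟩ | ⟨h, rfl⟩
      · obtain rfl := hf k i hkn hi (hk.trans h)
        exact Or.inr rfl
      · rcases Nat.lt_or_ge (i + 1) n with h' | h'
        · obtain rfl := hf k (i + 1) hkn h' (hk.trans h)
          exact Or.inl rfl
        · have hin : i + 1 = n := by lia
          rw [hin, hn0] at h
          have := hf k 0 hkn (by lia) (hk.trans h)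
          lia
    · rintro (rfl | rfl)
      · refine ⟨k - 1, by lia, ?_⟩
        rw [Nat.sub_add_cancel (by lia), hk, Sym2.eq_swap]
      · exact ⟨k, hkn, by rw [hk]⟩
end

section
/- Let G be an outerplanar graph, v a vertex of G, and H a connected induced subgraph of G − v such that every vertex of H is adjacent to v in G. Then H is a path. -/
/-- A graph is a path if it is isomorphic to the path graph \`Pₙ\` for some \`n ≥ 1\`. -/
def IsPathGraph {W : Type*} (H : SimpleGraph W) : Prop :=
  ∃ n : ℕ, 1 ≤ n ∧ Nonempty (H ≃g SimpleGraph.pathGraph n)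

/-- An injective homomorphism gives a minor whose branch sets are singletons. -/
lemma HasMinor.of_injective_hom {V W : Type*} {G : SimpleGraph V} {H : SimpleGraph W}
    (φ : W → V) (hinj : Function.Injective φ)
    (hφ : ∀ w w', H.Adj w w' → G.Adj (φ w) (φ w')) : HasMinor G H := by
  refine ⟨fun w => {φ w}, fun w => ⟨_, rfl⟩, fun w => ?_, fun w w' h => ?_, fun w w' h => ?_⟩
  · exact SimpleGraph.Connected.of_subsingleton
  · simpa using fun h' => h (hinj h')
  · exact ⟨_, rfl, _, rfl, hφ _ _ h⟩

/-- The vertices `f 0, …, f (n - 1)` form a path of `G` inside `K`; values of `f` at `n` and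
beyond are irrelevant. -/
structure IsPathIn {V : Type*} (G : SimpleGraph V) (K : Set V) (n : ℕ) (f : ℕ → V) : Prop where
  mem : ∀ i < n, f i ∈ K
  inj : ∀ i < n, ∀ j < n, f i = f j → i = j
  adj : ∀ i, i + 1 < n → G.Adj (f i) (f (i + 1))

section
variable {V : Type*} {G : SimpleGraph V} {K : Set V} {v : V} {n : ℕ} {f : ℕ → V}

lemma not_three_neighbors (hG : IsOuterplanar G) (hvK : v ∉ K) (hadj : ∀ x ∈ K, G.Adj v x)
    {x a b c : V} (hx : x ∈ K) (ha : a ∈ K) (hb : b ∈ K) (hc : c ∈ K)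
    (hab : a ≠ b) (hac : a ≠ c) (hbc : b ≠ c)
    (hxa : G.Adj x a) (hxb : G.Adj x b) (hxc : G.Adj x c) : False := by
  have hne : ∀ y ∈ K, v ≠ y := fun y hy h => hvK (h ▸ hy)
  have h1 := hne x hx
  have h2 := hne a ha
  have h3 := hne b hb
  have h4 := hne c hc
  have h5 := hxa.ne
  have h6 := hxb.ne
  have h7 := hxc.ne
  refine hG.2 (HasMinor.of_injective_hom (Sum.elim ![v, x] ![a, b, c]) ?_ ?_)
  · rintro (i | i) (j | j) <;> fin_cases i <;> fin_cases j <;> simp <;> grind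
  · rintro (i | i) (j | j) <;> fin_cases i <;> fin_cases j <;>
      simp [hadj, ha, hb, hc, hxa, hxb, hxc, (hadj _ ha).symm, (hadj _ hb).symm,
        (hadj _ hc).symm, hxa.symm, hxb.symm, hxc.symm]

lemma IsPathIn.connected_segment (hf : IsPathIn G K n f) {i j : ℕ} (hij : i + 1 < j)
    (hj : j < n) : (G.induce (f '' Set.Ioo i j)).Connected := by
  obtain ⟨m, rfl⟩ : ∃ m, j = i + 2 + m := ⟨j - (i + 2), by omega⟩
  let φ : SimpleGraph.pathGraph (m + 1) →g G.induce (f '' Set.Ioo i (i + 2 + m)) :=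
    { toFun := fun k => ⟨f (i + 1 + k), _, ⟨by omega, by omega⟩, rfl⟩
      map_rel' := by
        intro a b hab
        rw [SimpleGraph.pathGraph_adj] at hab
        rcases hab with h | h
        · have := hf.adj (i + 1 + a) (by omega)
          simpa [← h, add_assoc] using this
        · have := (hf.adj (i + 1 + b) (by omega)).symm
          simpa [← h, add_assoc] using this }
  refine (SimpleGraph.pathGraph_connected m).map φ ?_
  rintro ⟨_, k, ⟨h1, h2⟩, rfl⟩
  refine ⟨⟨k - (i + 1), by omega⟩, Subtype.ext ?_⟩
  change f (i + 1 + (k - (i + 1))) = f k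
  congr 1
  omega

lemma IsPathIn.not_chord (hf : IsPathIn G K n f) (hG : IsOuterplanar G) (hvK : v ∉ K)
    (hadj : ∀ x ∈ K, G.Adj v x) {i j : ℕ} (hij : i + 1 < j) (hj : j < n) :
    ¬ G.Adj (f i) (f j) := by
  intro h
  have hvi := hadj _ (hf.mem i (by omega))
  have hvj := hadj _ (hf.mem j hj)
  have hvm := hadj _ (hf.mem (i + 1) (by omega))
  have him := hf.adj i (by omega)
  have hmj : G.Adj (f (j - 1)) (f j) := by
    have := hf.adj (j - 1) (by omega)
    rwa [Nat.sub_add_cancel (by omega)] at this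
  have hm1 : f (i + 1) ∈ f '' Set.Ioo i j := ⟨_, ⟨by omega, by omega⟩, rfl⟩
  have hm2 : f (j - 1) ∈ f '' Set.Ioo i j := ⟨_, ⟨by omega, by omega⟩, rfl⟩
  have hv : v ∉ f '' Set.Ioo i j := by
    rintro ⟨k, ⟨_, h2⟩, rfl⟩
    exact hvK (hf.mem k (by omega))
  have hi' : f i ∉ f '' Set.Ioo i j := by
    rintro ⟨k, ⟨h1, h2⟩, e⟩
    have := hf.inj k (by omega) i (by omega) e
    omega
  have hj' : f j ∉ f '' Set.Ioo i j := by
    rintro ⟨k, ⟨h1, h2⟩, e⟩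
    have := hf.inj k (by omega) j (by omega) e
    omega
  have hseg := hf.connected_segment hij hj
  generalize f '' Set.Ioo i j = S at *
  -- Disjointness and adjacency are symmetric, so only ordered pairs of indices are checked.
  have key : ∀ w w' : Fin 4, w < w' →
      Disjoint (![{v}, {f i}, {f j}, S] w : Set V) (![{v}, {f i}, {f j}, S] w') ∧
      ∃ x ∈ (![{v}, {f i}, {f j}, S] w : Set V),
        ∃ y ∈ (![{v}, {f i}, {f j}, S] w' : Set V), G.Adj x y := by
    intro w w' hw
    fin_cases w <;> fin_cases w' <;> first | (exfalso; revert hw; decide) | skip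
    · simpa using ⟨hvi.ne, hvi⟩
    · simpa using ⟨hvj.ne, hvj⟩
    · simpa using ⟨hv, _, hm1, hvm⟩
    · simpa using ⟨h.ne, h⟩
    · simpa using ⟨hi', _, hm1, him⟩
    · simpa using ⟨hj', _, hm2, hmj.symm⟩
  have hsing : ∀ x : V, (G.induce {x}).Connected :=
    fun x => SimpleGraph.Connected.of_subsingleton
  refine hG.1 ⟨![{v}, {f i}, {f j}, S], ?_, ?_, ?_, ?_⟩
  · intro w
    fin_cases w
    exacts [⟨_, rfl⟩, ⟨_, rfl⟩, ⟨_, rfl⟩, ⟨_, hm1⟩]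
  · intro w
    fin_cases w
    exacts [hsing v, hsing (f i), hsing (f j), hseg]
  · intro w w' hw
    rcases lt_or_gt_of_ne hw with hlt | hlt
    · exact (key _ _ hlt).1
    · exact (key _ _ hlt).1.symm
  · intro w w' hw
    rcases lt_or_gt_of_ne hw.ne with hlt | hlt
    · exact (key _ _ hlt).2
    · obtain ⟨x, hx, y, hy, hxy⟩ := (key _ _ hlt).2
      exact ⟨y, hy, x, hx, hxy.symm⟩

lemma IsPathIn.cons (hf : IsPathIn G K n f) {y : V} (hy : y ∈ K) (hnew : ∀ i < n, f i ≠ y)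
    (hadj : G.Adj y (f 0)) : IsPathIn G K (n + 1) (fun i => Nat.casesOn i y f) := by
  refine ⟨?_, ?_, ?_⟩
  · rintro (_ | i) hi
    · exact hy
    · exact hf.mem i (by omega)
  · rintro (_ | i) hi (_ | j) hj h
    · rfl
    · exact absurd h.symm (hnew j (by omega))
    · exact absurd h (hnew i (by omega))
    · rw [hf.inj i (by omega) j (by omega) h]
  · rintro (_ | i) hi
    · exact hadj
    · exact hf.adj i (by omega)

lemma IsPathIn.reverse (hf : IsPathIn G K n f) : IsPathIn G K n (fun i => f (n - 1 - i)) := by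
  refine ⟨fun i hi => hf.mem _ (by omega), fun i hi j hj h => ?_, fun i hi => ?_⟩
  · have := hf.inj _ (by omega) _ (by omega) h
    omega
  · have := (hf.adj (n - 1 - (i + 1)) (by omega)).symm
    rwa [show n - 1 - (i + 1) + 1 = n - 1 - i by omega] at this

lemma IsPathIn.le_card [Fintype V] (hf : IsPathIn G K n f) : n ≤ Fintype.card V := by
  have : Function.Injective (fun i : Fin n => f i) :=
    fun i j h => Fin.ext (hf.inj i i.2 j j.2 h)
  simpa using Fintype.card_le_of_injective _ this

end

/-- In an outerplanar graph `G`, if `K` is a set of vertices avoiding `v` which induces a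
connected subgraph of `G - v` and every vertex of `K` is adjacent to `v`, then the induced
subgraph on `K` is a path. -/
theorem isPath_of_connected_in_closed_neighborhood {V : Type*} [Fintype V]
    (G : SimpleGraph V) (hout : IsOuterplanar G) (v : V) (K : Set V)
    (hvK : v ∉ K) (hconn : (G.induce K).Connected) (hadj : ∀ x ∈ K, G.Adj v x) :
    IsPathGraph (G.induce K) := by
  classical
  obtain ⟨⟨x₀, hx₀⟩⟩ := hconn.nonempty
  have h1 : ∃ f, IsPathIn G K 1 f :=
    ⟨fun _ => x₀, fun _ _ => hx₀, fun i hi j hj _ => by omega, fun i hi => by omega⟩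
  have hcard : 1 ≤ Fintype.card V := h1.choose_spec.le_card
  let n := Nat.findGreatest (fun n => ∃ f, IsPathIn G K n f) (Fintype.card V)
  have hn : 1 ≤ n := Nat.le_findGreatest hcard h1
  obtain ⟨f, hf⟩ : ∃ f, IsPathIn G K n f :=
    Nat.findGreatest_spec (P := fun n => ∃ f, IsPathIn G K n f) hcard h1
  have hmax : ∀ g, ¬ IsPathIn G K (n + 1) g := fun g hg =>
    absurd (Nat.le_findGreatest (P := fun n => ∃ f, IsPathIn G K n f) hg.le_card ⟨g, hg⟩)
      (Nat.not_succ_le_self n)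
  have hstep : ∀ i < n, ∀ y ∈ K, G.Adj (f i) y → ∃ k < n, f k = y := by
    intro i hi y hy hiy
    by_contra! hnew
    rcases Nat.eq_zero_or_pos i with rfl | hpos
    · exact hmax _ (hf.cons hy hnew hiy.symm)
    rcases Nat.lt_or_ge (i + 1) n with hlt | hge
    · have hprev := hf.adj (i - 1) (by omega)
      rw [Nat.sub_add_cancel hpos] at hprev
      refine not_three_neighbors hout hvK hadj (hf.mem i hi) (hf.mem (i - 1) (by omega))
        (hf.mem (i + 1) hlt) hy (fun h => ?_) (hnew _ (by omega)) (hnew _ hlt) hprev.symm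
        (hf.adj i hlt) hiy
      have := hf.inj _ (by omega) _ hlt h
      omega
    · refine hmax _ (hf.reverse.cons hy (fun k hk => hnew _ (by omega)) ?_)
      rw [show n - 1 - 0 = i by omega]
      exact hiy.symm
  have hsurj : ∀ y : K, ∃ k < n, f k = y := by
    intro y
    obtain ⟨p⟩ := hconn.preconnected ⟨f 0, hf.mem 0 hn⟩ y
    by_contra hy
    obtain ⟨d, -, ⟨i, hi, hd⟩, hd2⟩ :=
      p.exists_boundary_dart {z | ∃ k < n, f k = z} ⟨0, hn, rfl⟩ hy
    have had : G.Adj d.fst d.snd := d.adj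
    exact hd2 (hstep i hi _ d.snd.2 (hd ▸ had))
  let e : Fin n ≃ K := Equiv.ofBijective (fun i => ⟨f i, hf.mem i i.2⟩)
    ⟨fun i j h => Fin.ext (hf.inj i i.2 j j.2 (congrArg Subtype.val h)), fun y => by
      obtain ⟨k, hk, h⟩ := hsurj y
      exact ⟨⟨k, hk⟩, Subtype.ext h⟩⟩
  refine ⟨n, hn, ⟨SimpleGraph.Iso.symm ⟨e, ?_⟩⟩⟩
  intro i j
  rw [SimpleGraph.pathGraph_adj]
  change G.Adj (f i) (f j) ↔ _
  constructor
  · intro h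
    have hne : (i : ℕ) ≠ j := fun hij => h.ne (congrArg f hij)
    by_contra! hc
    rcases lt_or_gt_of_ne hne with hlt | hlt
    · exact hf.not_chord hout hvK hadj (by omega) j.2 h
    · exact hf.not_chord hout hvK hadj (by omega) i.2 h.symm
  · rintro (h | h)
    · have := hf.adj i (by omega)
      rwa [h] at this
    · have := hf.adj j (by omega)
      rw [h] at this
      exact this.symm
end

section
/- Let G be an outerplanar graph and B a maximal 2-connected subgraph of G with at least 3 vertices (a nontrivial block), and suppose B contains three distinct vertices each of which has a neighbor in G outside B (i.e., three cutvertices of G lie in B). Then G contains an asteroidal triple. -/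
/-- The induced subgraph on a vertex subset `S` is 2-connected: `S` has at least 3
vertices and deleting any single vertex of `S` leaves the induced graph connected. -/
def TwoConnectedOn {V : Type*} (G : SimpleGraph V) (S : Set V) : Prop :=
  3 ≤ S.ncard ∧ ∀ v ∈ S, (G.induce (S \ {v})).Connected

/-- Adding a vertex to a connected set keeps it connected if the vertex has a neighbour in the set;
the alternative `w ∈ S` lets degenerate ears be treated uniformly. -/
lemma connected_induce_insert {V : Type*} {G : SimpleGraph V} {S : Set V} {w : V}
    (hS : (G.induce S).Connected) (h : w ∈ S ∨ ∃ s ∈ S, G.Adj w s) :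
    (G.induce (insert w S)).Connected := by
  rcases h with h | ⟨s, hs, hadj⟩
  · rwa [Set.insert_eq_of_mem h]
  · have hu : insert w S = {w, s} ∪ S := by
      ext x
      simp only [Set.mem_insert_iff, Set.mem_union, Set.mem_singleton_iff]
      constructor
      · tauto
      · rintro ((h | rfl) | h) <;> tauto
    rw [hu]
    exact SimpleGraph.induce_union_connected
      (SimpleGraph.induce_pair_connected_of_adj hadj).preconnected hS.preconnected ⟨s, by simp, hs⟩

/-- `B` is the union of the connected sets `B \ {x}` and `B \ {y}`, which share a third vertex. -/
lemma TwoConnectedOn.connected {V : Type*} {G : SimpleGraph V} {B : Set V}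
    (hB : TwoConnectedOn G B) : (G.induce B).Connected := by
  obtain ⟨x, y, z, hx, hy, hz, hxy, hxz, hyz⟩ := (Set.two_lt_ncard_iff
    (Set.finite_of_ncard_pos (by have := hB.1; omega))).1 (show 2 < B.ncard from hB.1)
  have hu : B = (B \ {x}) ∪ (B \ {y}) := by
    ext t
    simp only [Set.mem_union, Set.mem_sdiff, Set.mem_singleton_iff]
    grind
  rw [hu]
  exact SimpleGraph.induce_union_connected (hB.2 x hx).preconnected (hB.2 y hy).preconnected
    ⟨z, ⟨hz, hxz.symm⟩, ⟨hz, hyz.symm⟩⟩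

/-- A maximal 2-connected set has no ear with distinct ends `x, y` whose interior is a single
vertex (`w = w'`) or an edge `w w'`. -/
lemma no_ear {V : Type*} [Finite V] {G : SimpleGraph V} {B : Set V}
    (hB : TwoConnectedOn G B)
    (hBmax : ∀ B₂ : Set V, B ⊆ B₂ → TwoConnectedOn G B₂ → B₂ = B)
    {x y w w' : V} (hx : x ∈ B) (hy : y ∈ B) (hxy : x ≠ y) (hw : w ∉ B) (hw' : w' ∉ B)
    (hxw : G.Adj x w) (hyw : G.Adj y w') (hww : w = w' ∨ G.Adj w w') : False := by
  have hsub : B ⊆ insert w (insert w' B) :=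
    (Set.subset_insert _ _).trans (Set.subset_insert _ _)
  refine hw ((hBmax _ hsub ⟨hB.1.trans (Set.ncard_le_ncard hsub (Set.toFinite _)), ?_⟩) ▸
    Set.mem_insert w _)
  intro v hv
  by_cases hvB : v ∈ B
  · have hvw : v ≠ w := fun h => hw (h ▸ hvB)
    have hvw' : v ≠ w' := fun h => hw' (h ▸ hvB)
    have hu : insert w (insert w' B) \ {v} = insert w (insert w' (B \ {v})) := by
      ext t
      simp only [Set.mem_sdiff, Set.mem_insert_iff, Set.mem_singleton_iff]
      grind
    rw [hu]
    -- The deleted vertex is at most one end of the ear; the interior hangs on the other end.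
    by_cases hvx : v = x
    · refine connected_induce_insert (connected_induce_insert (hB.2 v hvB)
        (Or.inr ⟨y, ⟨hy, fun h => hxy (hvx.symm.trans (Eq.symm h))⟩, hyw.symm⟩)) ?_
      rcases hww with h | h
      · exact Or.inl (h ▸ Set.mem_insert _ _)
      · exact Or.inr ⟨w', Set.mem_insert _ _, h⟩
    · rw [Set.insert_comm]
      refine connected_induce_insert (connected_induce_insert (hB.2 v hvB)
        (Or.inr ⟨x, ⟨hx, fun h => hvx (Eq.symm h)⟩, hxw.symm⟩)) ?_
      rcases hww with h | h
      · exact Or.inl (h ▸ Set.mem_insert _ _)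
      · exact Or.inr ⟨w, Set.mem_insert _ _, h.symm⟩
  · -- The deleted vertex is interior: what is left is `B` with at most one pendant vertex.
    have hcases : insert w (insert w' B) \ {v} = B ∨
        insert w (insert w' B) \ {v} = insert w B ∨
        insert w (insert w' B) \ {v} = insert w' B := by
      rcases eq_or_ne w w' with rfl | hne
      · left
        ext t
        simp only [Set.mem_sdiff, Set.mem_insert_iff, Set.mem_singleton_iff] at hv ⊢
        grind
      · right
        rcases hv with rfl | rfl | hv
        · right
          ext t
          simp only [Set.mem_sdiff, Set.mem_insert_iff, Set.mem_singleton_iff]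
          grind
        · left
          ext t
          simp only [Set.mem_sdiff, Set.mem_insert_iff, Set.mem_singleton_iff]
          grind
        · exact absurd hv hvB
    rcases hcases with h | h | h <;> rw [h]
    · exact hB.connected
    · exact connected_induce_insert hB.connected (Or.inr ⟨x, hx, hxw.symm⟩)
    · exact connected_induce_insert hB.connected (Or.inr ⟨y, hy, hyw.symm⟩)

/-- If `z` is the only neighbour in `B` of the outer vertex `c`, then pendant neighbours `a, b` of
two other vertices of `B` are joined through `B \ {z}`, away from the closed neighbourhood of
`c`. -/
lemma exists_walk_avoiding {V : Type*} {G : SimpleGraph V} {B : Set V}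
    (hB : TwoConnectedOn G B) {x y z a b c : V} (hx : x ∈ B) (hy : y ∈ B) (hz : z ∈ B)
    (hxz : x ≠ z) (hyz : y ≠ z) (hxa : G.Adj x a) (hyb : G.Adj y b) (hc : c ∉ B)
    (hcz : ∀ t ∈ B, G.Adj t c → t = z) (hac : a ≠ c) (hbc : b ≠ c)
    (hnac : ¬ G.Adj a c) (hnbc : ¬ G.Adj b c) :
    ∃ p : G.Walk a b, ∀ t ∈ p.support, t ∉ insert c (G.neighborSet c) := by
  obtain ⟨p⟩ := (hB.2 z hz).preconnected ⟨x, hx, hxz⟩ ⟨y, hy, hyz⟩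
  obtain ⟨q, hq⟩ : ∃ q : G.Walk x y, ∀ t ∈ q.support, t ∈ B \ {z} := by
    refine ⟨p.map (SimpleGraph.Embedding.induce (B \ {z})).toHom, fun t ht => ?_⟩
    have ht' : t ∈ (p.map (SimpleGraph.Embedding.induce (B \ {z})).toHom).support := ht
    rw [SimpleGraph.Walk.support_map, List.mem_map] at ht'
    obtain ⟨s, -, rfl⟩ := ht'
    exact s.2
  refine ⟨.cons hxa.symm (q.concat hyb), fun t ht => ?_⟩
  simp only [SimpleGraph.Walk.support_cons, SimpleGraph.Walk.support_concat, List.mem_cons,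
    List.mem_append, List.not_mem_nil, or_false] at ht
  rintro (h | h)
  · rcases ht with rfl | ht | rfl
    · exact hac h
    · exact hc (h ▸ (hq t ht).1)
    · exact hbc h
  · have h' : G.Adj t c := ((G.mem_neighborSet c t).1 h).symm
    rcases ht with rfl | ht | rfl
    · exact hnac h'
    · exact (hq t ht).2 (hcz t (hq t ht).1 h')
    · exact hnbc h'

/-- If a nontrivial block `B` (a maximal 2-connected subgraph with at least 3 vertices) of an
outerplanar graph `G` contains three distinct vertices each having a neighbor of `G` outside
`B`, then `G` contains an asteroidal triple. -/
theorem asteroidalTriple_of_three_cutvertices_in_block {V : Type*} [Fintype V]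
    (G : SimpleGraph V) (hout : IsOuterplanar G)
    (B : Set V) (hB : TwoConnectedOn G B)
    (hBmax : ∀ B₂ : Set V, B ⊆ B₂ → TwoConnectedOn G B₂ → B₂ = B)
    (v₁ v₂ v₃ : V) (h1 : v₁ ∈ B) (h2 : v₂ ∈ B) (h3 : v₃ ∈ B)
    (h12 : v₁ ≠ v₂) (h23 : v₂ ≠ v₃) (h13 : v₁ ≠ v₃)
    (hcut : ∀ x ∈ ({v₁, v₂, v₃} : Set V), ∃ w, w ∉ B ∧ G.Adj x w) :
    ∃ a b c : V, IsAsteroidalTriple G a b c := by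
  obtain ⟨w₁, hw1, ha1⟩ := hcut v₁ (by simp)
  obtain ⟨w₂, hw2, ha2⟩ := hcut v₂ (by simp)
  obtain ⟨w₃, hw3, ha3⟩ := hcut v₃ (by simp)
  have hfar : ∀ {x y w w' : V}, x ∈ B → y ∈ B → x ≠ y → w ∉ B → w' ∉ B → G.Adj x w →
      G.Adj y w' → w ≠ w' ∧ ¬ G.Adj w w' := fun hx hy hxy hw hw' h h' =>
    ⟨fun e => no_ear hB hBmax hx hy hxy hw hw' h h' (.inl e),
      fun e => no_ear hB hBmax hx hy hxy hw hw' h h' (.inr e)⟩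
  have huniq : ∀ {z c : V}, z ∈ B → c ∉ B → G.Adj z c → ∀ t ∈ B, G.Adj t c → t = z := by
    intro z c hz hc hzc t ht htc
    by_contra hne
    exact no_ear hB hBmax ht hz hne hc hc htc hzc (.inl rfl)
  obtain ⟨n12, m12⟩ := hfar h1 h2 h12 hw1 hw2 ha1 ha2
  obtain ⟨n23, m23⟩ := hfar h2 h3 h23 hw2 hw3 ha2 ha3
  obtain ⟨n13, m13⟩ := hfar h1 h3 h13 hw1 hw3 ha1 ha3
  exact ⟨w₁, w₂, w₃, n12, n23, n13, m12, m23, m13,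
    exists_walk_avoiding hB h1 h2 h3 h13 h23 ha1 ha2 hw3 (huniq h3 hw3 ha3) n13 n23 m13 m23,
    exists_walk_avoiding hB h2 h3 h1 h12.symm h13.symm ha2 ha3 hw1 (huniq h1 hw1 ha1)
      n12.symm n13.symm (fun h => m12 h.symm) (fun h => m13 h.symm),
    exists_walk_avoiding hB h1 h3 h2 h12 h23.symm ha1 ha3 hw2 (huniq h2 hw2 ha2)
      n12 n23.symm m12 (fun h => m23 h.symm)⟩
end

section
/- If a finite simple graph G is B₀, then there exists a spanning subgraph H of G such that: (i) every diamond diagonal of G is an edge of H; (ii) for every connected component C of H, the subgraph of G induced on the closed neighborhood N[C] (the vertices of C together with all vertices of G having a neighbor in C) is an interval graph; and (iii) the graph whose vertices are the connected components of H, with two distinct components adjacent if and only if some edge of G joins a vertex of one to a vertex of the other (a minor of G obtained by contracting every component of H), is bipartite and B₀. -/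
/-- An edge \`uv\` of \`G\` is a diamond diagonal: there are two distinct nonadjacent vertices
\`x\` and \`y\` each adjacent to both \`u\` and \`v\`. -/
def DiamondDiagonal {V : Type*} (G : SimpleGraph V) (u v : V) : Prop :=
  G.Adj u v ∧ ∃ x y : V, x ≠ y ∧ ¬ G.Adj x y ∧
    G.Adj u x ∧ G.Adj v x ∧ G.Adj u y ∧ G.Adj v y

/-- A graph is an interval graph if its vertices can be assigned nonempty closed intervals of
\`ℝ\` so that two distinct vertices are adjacent iff their intervals intersect. -/
def IsIntervalGraph {W : Type*} (H : SimpleGraph W) : Prop :=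
  ∃ f : W → Set ℝ, (∀ w, ∃ a b : ℝ, a ≤ b ∧ f w = Set.Icc a b) ∧
    ∀ u v : W, u ≠ v → (H.Adj u v ↔ (f u ∩ f v).Nonempty)

/-- The closed neighborhood of a set `C` of vertices: `C` together with all vertices having a
neighbor in `C`. -/
def closedNbhd {V : Type*} (G : SimpleGraph V) (C : Set V) : Set V :=
  C ∪ {w | ∃ x ∈ C, G.Adj w x}

/-- The minor of `G` obtained by contracting every connected component of a spanning subgraph
`H` of `G`: vertices are the components of `H`, two distinct components being adjacent iff
some edge of `G` joins a vertex of one to a vertex of the other. -/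
def componentContraction {V : Type*} (G H : SimpleGraph V) :
    SimpleGraph H.ConnectedComponent :=
  SimpleGraph.fromRel (fun c c' => ∃ x y : V,
    H.connectedComponentMk x = c ∧ H.connectedComponentMk y = c' ∧ G.Adj x y)

/-!
Every segment is a box `I true × I false` of two closed intervals, at least one of which is a
point, and two segments meet iff their intervals meet in both coordinates. Orient each segment by
choosing the coordinate `o` in which it may vary, so that coordinate `!o` is a single point. Let
`H` consist of the edges of `G` joining segments of equal orientation. Such segments lie on a
common line, so a component of `H` is a family of segments of one orientation on one line.

* An edge of `G` outside `H` joins perpendicular segments meeting in one point; every common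
  neighbour passes through that point (`mem_of_meets`), hence any two are adjacent, and the edge
  is not a diamond diagonal.
* All segments of `N[C]` meet the line carrying `C`, so projecting to that line gives an interval
  representation of the induced graph.
* The contraction is 2-coloured by orientation, and it is represented by the unions of the
  segments in each component: these are segments, because in each coordinate the union is compact
  and connected (`iUnion_eq_Icc`).
-/

/-- A segment as a box: `I true` and `I false` are its projections to the first and the second
coordinate, and `o` is a coordinate such that the other projection is a point. -/
theorem isAxisParallelSegment_iff (s : Set (ℝ × ℝ)) :
    IsAxisParallelSegment s ↔ ∃ (o : Bool) (I : Bool → Set ℝ),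
      (∀ i, ∃ a b : ℝ, a ≤ b ∧ I i = Set.Icc a b) ∧ (I (!o)).Subsingleton ∧
      s = I true ×ˢ I false := by
  constructor
  · rintro ⟨⟨p1, p2⟩, ⟨q1, q2⟩, h | h, rfl⟩
    · simp only at h
      subst h
      refine ⟨false, fun i => if i then Set.Icc p1 p1 else Set.uIcc p2 q2, ?_, ?_, ?_⟩
      · rintro (_ | _)
        · exact ⟨_, _, inf_le_sup, rfl⟩
        · exact ⟨p1, p1, le_rfl, rfl⟩
      · simp
      · rw [← Prod.image_mk_segment_right, segment_eq_uIcc]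
        simp [Set.singleton_prod]
    · simp only at h
      subst h
      refine ⟨true, fun i => if i then Set.uIcc p1 q1 else Set.Icc p2 p2, ?_, ?_, ?_⟩
      · rintro (_ | _)
        · exact ⟨p2, p2, le_rfl, rfl⟩
        · exact ⟨_, _, inf_le_sup, rfl⟩
      · simp
      · rw [← Prod.image_mk_segment_left, segment_eq_uIcc]
        simp [Set.prod_singleton]
  · rintro ⟨o, I, hI, ho, rfl⟩
    obtain ⟨a, b, hab, h1⟩ := hI true
    obtain ⟨c, d, hcd, h2⟩ := hI false
    rw [h1, h2]
    cases o with
    | false =>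
      have : a = b := by
        simp only [Bool.not_false, h1] at ho
        exact ho (Set.left_mem_Icc.2 hab) (Set.right_mem_Icc.2 hab)
      subst this
      refine ⟨(a, c), (a, d), Or.inl rfl, ?_⟩
      rw [← Prod.image_mk_segment_right, segment_eq_Icc hcd]
      simp [Set.singleton_prod]
    | true =>
      have : c = d := by
        simp only [Bool.not_true, h2] at ho
        exact ho (Set.left_mem_Icc.2 hcd) (Set.right_mem_Icc.2 hcd)
      subst this
      refine ⟨(a, c), (b, c), Or.inr rfl, ?_⟩
      rw [← Prod.image_mk_segment_left, segment_eq_Icc hab]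
      simp [Set.prod_singleton]

theorem box_inter_nonempty (I J : Bool → Set ℝ) :
    ((I true ×ˢ I false) ∩ (J true ×ˢ J false)).Nonempty ↔ ∀ i, (I i ∩ J i).Nonempty := by
  rw [Set.prod_inter_prod, Set.prod_nonempty_iff, Bool.forall_bool, and_comm]

theorem mem_of_meets {S T : Set ℝ} (hS : S.Subsingleton) {p : ℝ} (hp : p ∈ S)
    (h : (S ∩ T).Nonempty) : p ∈ T := by
  obtain ⟨q, hq, hqT⟩ := h
  exact hS hp hq ▸ hqT

theorem eq_of_subsingleton_of_meets {S T : Set ℝ} (hS : S.Subsingleton) (hT : T.Subsingleton)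
    (h : (S ∩ T).Nonempty) : S = T := by
  obtain ⟨p, hpS, hpT⟩ := h
  rw [hS.eq_singleton_of_mem hpS, hT.eq_singleton_of_mem hpT]

/-- If adjacent vertices of a finite graph carry intersecting intervals, then the intervals of a
connected component have a closed interval as their union. -/
theorem iUnion_eq_Icc {V : Type*} [Finite V] {H : SimpleGraph V} (I : V → Set ℝ)
    (hI : ∀ v, ∃ a b : ℝ, a ≤ b ∧ I v = Set.Icc a b)
    (hH : ∀ u v, H.Adj u v → (I u ∩ I v).Nonempty) (c : H.ConnectedComponent) :
    ∃ a b : ℝ, a ≤ b ∧ (⋃ v ∈ c.supp, I v) = Set.Icc a b := by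
  have hcon : IsPreconnected (⋃ v ∈ c.supp, I v) := by
    refine IsPreconnected.biUnion_of_reflTransGen (fun v _ => ?_) (fun u hu v hv => ?_)
    · obtain ⟨a, b, -, h⟩ := hI v
      rw [h]
      exact isPreconnected_Icc
    · have huv : H.Reachable u v := SimpleGraph.ConnectedComponent.exact (hu.trans hv.symm)
      rw [SimpleGraph.reachable_iff_reflTransGen] at huv
      clear hv
      induction huv using Relation.ReflTransGen.head_induction_on with
      | refl => exact .refl
      | head hadj _ ih =>
        refine .head ⟨hH _ _ hadj, hu⟩ (ih ?_)
        exact (SimpleGraph.ConnectedComponent.sound hadj.symm.reachable).trans hu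
  have hcpt : IsCompact (⋃ v ∈ c.supp, I v) := by
    refine (Set.toFinite c.supp).isCompact_biUnion fun v _ => ?_
    obtain ⟨a, b, -, h⟩ := hI v
    rw [h]
    exact isCompact_Icc
  obtain ⟨v, hv⟩ := c.nonempty_supp
  have hne : (⋃ v ∈ c.supp, I v).Nonempty := by
    obtain ⟨a, b, hab, h⟩ := hI v
    exact ⟨a, Set.mem_biUnion hv (h ▸ Set.left_mem_Icc.2 hab)⟩
  have h := eq_Icc_of_connected_compact ⟨hne, hcon⟩ hcpt
  refine ⟨_, _, ?_, h⟩
  rw [h] at hne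
  exact Set.nonempty_Icc.1 hne

/-- If `G` is B₀ then it has a spanning subgraph `H` containing all diamond diagonals of
`G` such that the closed neighborhood of every component of `H` induces an interval graph in
`G`, and the minor of `G` obtained by contracting every component of `H` is a bipartite
B₀ graph. -/
theorem exists_spanning_subgraph_of_isB0 {V : Type*} [Fintype V]
    (G : SimpleGraph V) (h : IsB0 G) :
    ∃ H : SimpleGraph V, H ≤ G ∧
      (∀ u v : V, DiamondDiagonal G u v → H.Adj u v) ∧
      (∀ c : H.ConnectedComponent, IsIntervalGraph (G.induce (closedNbhd G c.supp))) ∧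
      (componentContraction G H).Colorable 2 ∧
      IsB0 (componentContraction G H) := by
  obtain ⟨s, hs, hadj⟩ := h
  choose o I hI ho hsI using fun v => (isAxisParallelSegment_iff (s v)).1 (hs v)
  have hG : ∀ u v, u ≠ v → (G.Adj u v ↔ ∀ i, (I u i ∩ I v i).Nonempty) := fun u v huv => by
    rw [hadj u v huv, hsI u, hsI v, box_inter_nonempty]
  have hmeet : ∀ u v, G.Adj u v → ∀ i, (I u i ∩ I v i).Nonempty := fun u v huv =>
    (hG u v huv.ne).1 huv
  have hself : ∀ v i, (I v i).Nonempty := fun v i => by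
    obtain ⟨a, b, hab, h⟩ := hI v i
    exact h ▸ Set.nonempty_Icc.2 hab
  let H : SimpleGraph V :=
    { Adj := fun u v => G.Adj u v ∧ o u = o v
      symm := ⟨fun _ _ h => ⟨h.1.symm, h.2.symm⟩⟩
      loopless := ⟨fun _ h => h.1.ne rfl⟩ }
  -- Segments in one component are parallel and lie on a common line.
  have hline : ∀ u v, H.Reachable u v → o u = o v ∧ I u (!o u) = I v (!o u) := by
    intro u v huv
    rw [SimpleGraph.reachable_iff_reflTransGen] at huv
    induction huv with
    | refl => exact ⟨rfl, rfl⟩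
    | @tail v w _ hvw ih =>
      refine ⟨ih.1.trans hvw.2, ih.2.trans ?_⟩
      refine eq_of_subsingleton_of_meets ?_ ?_ (hmeet v w hvw.1 _)
      · rw [ih.1]
        exact ho v
      · rw [ih.1, hvw.2]
        exact ho w
  have hcomp : ∀ {u v : V} {c : H.ConnectedComponent}, u ∈ c.supp → v ∈ c.supp →
      o u = o v ∧ I u (!o u) = I v (!o u) := fun hu hv =>
    hline _ _ (SimpleGraph.ConnectedComponent.exact (hu.trans hv.symm))
  refine ⟨H, fun _ _ h => h.1, ?_, ?_, ?_, ?_⟩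
  · rintro u v ⟨huv, x, y, hxy, hnxy, hux, hvx, huy, hvy⟩
    refine ⟨huv, ?_⟩
    by_contra hne
    apply hnxy
    rw [hG x y hxy]
    -- In each coordinate `i`, one of `u`, `v` is a point, which lies on both `x` and `y`.
    intro i
    have key : ∀ w, G.Adj w x → G.Adj w y → i = !o w → (I x i ∩ I y i).Nonempty := by
      rintro w hwx hwy rfl
      obtain ⟨p, hp⟩ := hself w (!o w)
      exact ⟨p, mem_of_meets (ho w) hp (hmeet w x hwx _), mem_of_meets (ho w) hp (hmeet w y hwy _)⟩
    by_cases hi : i = !o u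
    · exact key u hux huy hi
    · refine key v hvx hvy ?_
      clear key
      revert hi hne
      generalize o u = a
      generalize o v = b
      revert i a b
      decide
  · intro c
    obtain ⟨u, hu⟩ := c.nonempty_supp
    obtain ⟨p, hp⟩ := hself u (!o u)
    have hpw : ∀ w ∈ closedNbhd G c.supp, p ∈ I w (!o u) := by
      rintro w (hw | ⟨x, hx, hwx⟩)
      · exact (hcomp hu hw).2 ▸ hp
      · have hx' := (hcomp hu hx).2
        refine mem_of_meets (ho u) hp ?_
        rw [hx']
        exact hmeet x w hwx.symm _
    refine ⟨fun w => I w (o u), fun w => hI w _, fun w z hwz => ?_⟩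
    rw [SimpleGraph.induce_adj, hG _ _ (fun h => hwz (Subtype.ext h))]
    refine ⟨fun h => h _, fun h i => ?_⟩
    by_cases hi : i = o u
    · exact hi ▸ h
    · have hi' : i = !o u := Bool.eq_not_of_ne hi
      exact hi' ▸ ⟨p, hpw w w.2, hpw z z.2⟩
  · have hcol : ∀ c d, (componentContraction G H).Adj c d →
        o c.nonempty_supp.some ≠ o d.nonempty_supp.some := by
      have aux : ∀ x y, G.Adj x y → H.connectedComponentMk x ≠ H.connectedComponentMk y →
          o x ≠ o y := fun x y hxy hne hxo =>
        hne (SimpleGraph.ConnectedComponent.sound (SimpleGraph.Adj.reachable ⟨hxy, hxo⟩))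
      intro c d hcd
      obtain ⟨hne, ⟨x, y, hx, hy, hxy⟩ | ⟨y, x, hy, hx, hxy⟩⟩ :=
        (SimpleGraph.fromRel_adj _ _ _).1 hcd
      · rw [(hcomp c.nonempty_supp.some_mem hx).1, (hcomp d.nonempty_supp.some_mem hy).1]
        exact aux x y hxy (by rwa [hx, hy])
      · rw [(hcomp c.nonempty_supp.some_mem hx).1, (hcomp d.nonempty_supp.some_mem hy).1]
        exact aux x y hxy.symm (by rwa [hx, hy])
    exact (SimpleGraph.Coloring.mk (fun c => o c.nonempty_supp.some) (hcol _ _)).colorable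
  · let J : H.ConnectedComponent → Bool → Set ℝ := fun c i => ⋃ v ∈ c.supp, I v i
    refine ⟨fun c => J c true ×ˢ J c false, fun c => ?_, fun c d hcd => ?_⟩
    · refine (isAxisParallelSegment_iff _).2 ⟨o c.nonempty_supp.some, J c, fun i => ?_, ?_, rfl⟩
      · exact iUnion_eq_Icc (fun v => I v i) (fun v => hI v i)
          (fun u v (huv : H.Adj u v) => hmeet u v huv.1 i) c
      · intro p hp q hq
        simp only [J, Set.mem_iUnion] at hp hq
        obtain ⟨u, hu, hpu⟩ := hp
        obtain ⟨v, hv, hqv⟩ := hq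
        rw [← (hcomp c.nonempty_supp.some_mem hu).2] at hpu
        rw [← (hcomp c.nonempty_supp.some_mem hv).2] at hqv
        exact ho _ hpu hqv
    · rw [box_inter_nonempty, componentContraction, SimpleGraph.fromRel_adj]
      constructor
      · have aux : ∀ x y, G.Adj x y → ∀ i,
            (J (H.connectedComponentMk x) i ∩ J (H.connectedComponentMk y) i).Nonempty := by
          intro x y hxy i
          obtain ⟨p, hpx, hpy⟩ := hmeet x y hxy i
          exact ⟨p, Set.mem_biUnion rfl hpx, Set.mem_biUnion rfl hpy⟩
        rintro ⟨-, ⟨x, y, rfl, rfl, hxy⟩ | ⟨y, x, rfl, rfl, hxy⟩⟩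
        · exact aux x y hxy
        · exact aux x y hxy.symm
      · intro hJ
        refine ⟨hcd, Or.inl ?_⟩
        have hdisj : ∀ {x y}, x ∈ c.supp → y ∈ d.supp → x ≠ y := by
          rintro x y hx hy rfl
          exact hcd (hx.symm.trans hy)
        obtain ⟨w, hw⟩ := c.nonempty_supp
        obtain ⟨p, hpc, hpd⟩ := hJ (o w)
        obtain ⟨q, hqc, hqd⟩ := hJ (!o w)
        simp only [J, Set.mem_iUnion] at hpc hpd hqc hqd
        obtain ⟨u, hu, hpu⟩ := hpc
        obtain ⟨v', hv', hpv'⟩ := hpd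
        obtain ⟨u', hu', hqu'⟩ := hqc
        obtain ⟨v, hv, hqv⟩ := hqd
        -- `p` and `q` witness the two coordinates for different pairs of members; as members of
        -- a component share the transverse coordinate, one pair serves both.
        have hqu : q ∈ I u (!o w) := by
          rwa [← (hcomp hw hu).2, (hcomp hw hu').2]
        have finish : ∀ z ∈ d.supp, p ∈ I z (o w) → q ∈ I z (!o w) →
            ∃ x y, H.connectedComponentMk x = c ∧ H.connectedComponentMk y = d ∧ G.Adj x y := by
          intro z hz hpz hqz
          refine ⟨u, z, hu, hz, (hG u z (hdisj hu hz)).2 fun i => ?_⟩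
          by_cases hi : i = o w
          · exact hi ▸ ⟨p, hpu, hpz⟩
          · have hi' : i = !o w := Bool.eq_not_of_ne hi
            exact hi' ▸ ⟨q, hqu, hqz⟩
        have hvv := hcomp hv' hv
        by_cases hwo : o v' = o w
        · rw [hwo] at hvv
          exact finish v' hv' hpv' (hvv.2 ▸ hqv)
        · have : (!o v') = o w := (Bool.eq_not_of_ne (Ne.symm hwo)).symm
          rw [this] at hvv
          exact finish v hv (hvv.2 ▸ hpv') hqv
end
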